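/- Let K and L be two algebraically closed fields (possibly of different characteristics), Q a finite quiver, and α a dimension vector. Then for every degree d ≥ 0, the K-dimension of the degree-d homogeneous component of SI_K(Q,α) = K[Rep_K(Q,α)]^{SL(α)} equals the L-dimension of the degree-d homogeneous component of SI_L(Q,α), and likewise for the invariant rings I_K(Q,α) = K[Rep_K(Q,α)]^{GL(α)} and I_L(Q,α). Equivalently, the Hilbert series of SI(Q,α) and of I(Q,α) are independent of the underlying algebraically closed field. -/

import Mathlib

open MvPolynomial Matrix

/-- Coordinate functions of a representation of a quiver with arrows `Q1`,
tail/head maps `ta ha : Q1 → Q0` and dimension vector `α`. -/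
def repCoords {K : Type} [Field K] {Q0 Q1 : Type} {ta ha : Q1 → Q0} {α : Q0 → ℕ}
    (v : (a : Q1) → Matrix (Fin (α (ha a))) (Fin (α (ta a))) K) :
    ((a : Q1) × (Fin (α (ha a)) × Fin (α (ta a)))) → K :=
  fun p => v p.1 p.2.1 p.2.2

/-- The ring of quiver invariants `I(Q,α) = K[Rep(Q,α)]^{GL(α)}`. -/
noncomputable def quiverInvariants (K : Type) [Field K] {Q0 Q1 : Type}
    (ta ha : Q1 → Q0) (α : Q0 → ℕ) :
    Subalgebra K (MvPolynomial ((a : Q1) × (Fin (α (ha a)) × Fin (α (ta a)))) K) :=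
  ⨅ (A : (i : Q0) → GeneralLinearGroup (Fin (α i)) K)
    (v : (a : Q1) → Matrix (Fin (α (ha a))) (Fin (α (ta a))) K),
      AlgHom.equalizer
        (aeval (repCoords fun a => (A (ha a)).val * v a * ((A (ta a))⁻¹).val))
        (aeval (repCoords v))

/-- The ring of quiver semi-invariants `SI(Q,α) = K[Rep(Q,α)]^{SL(α)}`. -/
noncomputable def quiverSemiInvariants (K : Type) [Field K] {Q0 Q1 : Type}
    (ta ha : Q1 → Q0) (α : Q0 → ℕ) :
    Subalgebra K (MvPolynomial ((a : Q1) × (Fin (α (ha a)) × Fin (α (ta a)))) K) :=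
  ⨅ (A : (i : Q0) → SpecialLinearGroup (Fin (α i)) K)
    (v : (a : Q1) → Matrix (Fin (α (ha a))) (Fin (α (ta a))) K),
      AlgHom.equalizer
        (aeval (repCoords fun a => (A (ha a)).val * v a * ((A (ta a))⁻¹).val))
        (aeval (repCoords v))

/-- The weight space `SI(Q,α)_σ` of semi-invariants of weight `σ : Q0 → ℤ`:
those `f` with `A · f = (∏ i, det (A i) ^ σ i) • f`, i.e.
`f(A⁻¹ · v) = (∏ i, det (A i) ^ σ i) * f(v)` for all `A ∈ GL(α)`. -/
noncomputable def quiverSemiInvariantsOfWeight (K : Type) [Field K] {Q0 Q1 : Type}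
    [Fintype Q0] (ta ha : Q1 → Q0) (α : Q0 → ℕ) (σ : Q0 → ℤ) :
    Submodule K (MvPolynomial ((a : Q1) × (Fin (α (ha a)) × Fin (α (ta a)))) K) where
  carrier := { f | ∀ (A : (i : Q0) → GeneralLinearGroup (Fin (α i)) K)
      (v : (a : Q1) → Matrix (Fin (α (ha a))) (Fin (α (ta a))) K),
      aeval (repCoords fun a => ((A (ha a))⁻¹).val * v a * (A (ta a)).val) f
        = (∏ i : Q0, ((A i).val.det) ^ (σ i)) * aeval (repCoords v) f }
  add_mem' := by
    intro f g hf hg A v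
    rw [map_add, map_add, hf A v, hg A v, mul_add]
  zero_mem' := by
    intro A v
    simp
  smul_mem' := by
    intro c f hf A v
    rw [_root_.map_smul, _root_.map_smul, hf A v, smul_eq_mul, smul_eq_mul]
    ring

/-- `IsQuiverPath ta ha x y l` : the list of arrows `l` is a directed path from
vertex `x` to vertex `y`. -/
def IsQuiverPath {Q0 Q1 : Type} (ta ha : Q1 → Q0) (x y : Q0) : List Q1 → Prop
  | [] => x = y
  | a :: l =>
      ta a = x ∧ List.Chain' (fun b c => ha b = ta c) (a :: l) ∧
        ha ((a :: l).getLast (List.cons_ne_nil a l)) = y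

/-- The number of directed paths from `x` to `y`. -/
noncomputable def numQuiverPaths {Q0 Q1 : Type} (ta ha : Q1 → Q0) (x y : Q0) : ℕ :=
  Nat.card { l : List Q1 // IsQuiverPath ta ha x y l }

/-- A quiver has no oriented cycles if there is no nonempty directed path from a
vertex to itself. -/
def HasNoOrientedCycles {Q0 Q1 : Type} (ta ha : Q1 → Q0) : Prop :=
  ∀ (x : Q0) (l : List Q1), l ≠ [] → ¬ IsQuiverPath ta ha x x l

namespace QH
open Classical

section gen
variable {σ : Type} {K : Type} [Field K]

/-- IsWeightedHomogeneous iff on support -/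
lemma whc_idem_hom {Γ : Type} [AddCommMonoid Γ] (φ : MvPolynomial σ K →ₐ[K] MvPolynomial σ K)
    (u : σ → Γ) (h : ∀ s, IsWeightedHomogeneous u (φ (X s)) (u s)) (f : MvPolynomial σ K) (m : Γ)
    (hf : IsWeightedHomogeneous u f m) : IsWeightedHomogeneous u (φ f) m := by
  have key : ∀ μ : σ →₀ ℕ, IsWeightedHomogeneous u (φ (monomial μ 1)) (Finsupp.weight u μ) := by
    intro μ
    rw [monomial_eq, map_mul, Finsupp.prod, map_prod]
    simp only [map_one, one_mul, map_pow]
    rw [Finsupp.weight_apply, Finsupp.sum]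
    exact IsWeightedHomogeneous.prod _ _ _ (fun s _ => (h s).pow _)
  rw [f.as_sum, map_sum]
  refine IsWeightedHomogeneous.sum _ _ _ (fun μ hμ => ?_)
  have : monomial μ (coeff μ f) = C (coeff μ f) * monomial μ 1 := by
    rw [C_mul_monomial, mul_one]
  rw [this, map_mul, show φ (C (coeff μ f)) = C (coeff μ f) from φ.commutes _]
  have h2 := key μ
  rw [hf (mem_support_iff.1 hμ)] at h2
  exact h2.C_mul _

lemma whc_comm {Γ : Type} [AddCommMonoid Γ] (φ : MvPolynomial σ K →ₐ[K] MvPolynomial σ K)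
    (u : σ → Γ) (h : ∀ s, IsWeightedHomogeneous u (φ (X s)) (u s)) (f : MvPolynomial σ K) (m : Γ) :
    weightedHomogeneousComponent u m (φ f) = φ (weightedHomogeneousComponent u m f) := by
  rw [f.as_sum]
  simp only [map_sum]
  refine Finset.sum_congr rfl (fun μ hμ => ?_)
  have h1 : IsWeightedHomogeneous u (monomial μ (coeff μ f)) (Finsupp.weight u μ) :=
    isWeightedHomogeneous_monomial _ _ _ rfl
  have h2 := whc_idem_hom φ u h _ _ h1
  by_cases e : Finsupp.weight u μ = m
  · subst e
    rw [h1.weightedHomogeneousComponent_same, h2.weightedHomogeneousComponent_same]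
  · rw [h1.weightedHomogeneousComponent_ne _ (Ne.symm e), h2.weightedHomogeneousComponent_ne _ (Ne.symm e), map_zero]

/-- all weights `< m` -/
def WLt (w : σ → ℕ) (f : MvPolynomial σ K) (m : ℕ) : Prop :=
  ∀ μ, coeff μ f ≠ 0 → Finsupp.weight w μ < m

lemma WLt.add {w : σ → ℕ} {f g : MvPolynomial σ K} {m : ℕ} (hf : WLt w f m) (hg : WLt w g m) :
    WLt w (f + g) m := by
  intro μ h
  by_cases h1 : coeff μ f = 0
  · refine hg μ (fun h2 => h ?_)
    rw [coeff_add, h1, h2, add_zero]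
  · exact hf μ h1

lemma WLt.sum {ι : Type} {w : σ → ℕ} (s : Finset ι) (f : ι → MvPolynomial σ K) {m : ℕ}
    (hf : ∀ i ∈ s, WLt w (f i) m) : WLt w (∑ i ∈ s, f i) m := by
  induction s using Finset.induction_on with
  | empty => intro μ h; simp at h
  | insert a s ha ih =>
    rw [Finset.sum_insert ha]
    exact (hf a (by simp)).add (ih (fun i hi => hf i (by simp [hi])))

lemma WLt.mul {w : σ → ℕ} {f g : MvPolynomial σ K} {m n l : ℕ} (hf : WLt w f m) (hg : WLt w g n)
    (hl : m + n ≤ l + 1) : WLt w (f * g) l := by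
  intro μ h
  rw [coeff_mul] at h
  obtain ⟨p, hp, hne⟩ := Finset.exists_ne_zero_of_sum_ne_zero h
  rw [Finset.HasAntidiagonal.mem_antidiagonal] at hp
  have h1 := hf _ (left_ne_zero_of_mul hne)
  have h2 := hg _ (right_ne_zero_of_mul hne)
  rw [← hp, map_add]
  omega

lemma WLt.of_wh {w : σ → ℕ} {f : MvPolynomial σ K} {m n : ℕ} (hf : IsWeightedHomogeneous w f m)
    (h : m < n) : WLt w f n := by
  intro μ hμ
  rw [hf hμ]; exact h

lemma top_mon (φ : MvPolynomial σ K →ₐ[K] MvPolynomial σ K) (w : σ → ℕ)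
    (h : ∀ s, WLt w (φ (X s) - X s) (w s)) (μ : σ →₀ ℕ) :
    WLt w (φ (monomial μ 1) - monomial μ 1) (Finsupp.weight w μ) := by
  have wm : ∀ μ : σ →₀ ℕ, WLt w (monomial μ (1:K)) (Finsupp.weight w μ + 1) := fun μ =>
    WLt.of_wh (isWeightedHomogeneous_monomial _ _ _ rfl) (Nat.lt_succ_self _)
  have mulstep : ∀ μ ν : σ →₀ ℕ, WLt w (φ (monomial μ 1) - monomial μ 1) (Finsupp.weight w μ) →
      WLt w (φ (monomial ν 1) - monomial ν 1) (Finsupp.weight w ν) →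
      WLt w (φ (monomial (μ + ν) 1) - monomial (μ + ν) 1) (Finsupp.weight w (μ + ν)) := by
    intro μ ν h1 h2
    have e : (monomial (μ + ν) (1:K)) = monomial μ 1 * monomial ν 1 := by
      rw [monomial_mul, one_mul]
    have e2 : φ (monomial (μ + ν) 1) - monomial (μ + ν) (1:K) =
        (φ (monomial μ 1) - monomial μ 1) * (φ (monomial ν 1) - monomial ν 1) +
        ((φ (monomial μ 1) - monomial μ 1) * monomial ν 1 +
        monomial μ 1 * (φ (monomial ν 1) - monomial ν 1)) := by
      rw [e, map_mul]; ring
    rw [e2, map_add]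
    refine (h1.mul h2 (by omega)).add ((h1.mul (wm ν) (by omega)).add ((wm μ).mul h2 (by omega)))
  induction μ using Finsupp.induction_linear with
  | zero => intro μ hμ; simp at hμ
  | add f g hf hg => exact mulstep _ _ hf hg
  | single s n =>
    induction n with
    | zero => intro μ hμ; simp at hμ
    | succ n ih =>
      rw [Finsupp.single_add]
      refine mulstep _ _ ih ?_
      have := h s
      rw [X] at this
      simpa [Finsupp.weight_single] using this

/-- Top lemma : weights of `φ f - f`. -/
lemma top_lt (φ : MvPolynomial σ K →ₐ[K] MvPolynomial σ K) (w : σ → ℕ)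
    (h : ∀ s, WLt w (φ (X s) - X s) (w s)) (f : MvPolynomial σ K) (m : ℕ) (hf : WLt w f (m + 1)) :
    WLt w (φ f - f) m := by
  have e : φ f - f = ∑ μ ∈ f.support, C (coeff μ f) * (φ (monomial μ 1) - monomial μ 1) := by
    conv_lhs => rw [f.as_sum, map_sum, ← Finset.sum_sub_distrib]
    refine Finset.sum_congr rfl (fun μ _ => ?_)
    have : monomial μ (coeff μ f) = C (coeff μ f) * monomial μ 1 := by
      rw [C_mul_monomial, mul_one]
    rw [this, map_mul, show φ (C (coeff μ f)) = C (coeff μ f) from φ.commutes _, mul_sub]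
  rw [e]
  refine WLt.sum _ _ (fun μ hμ => ?_)
  have h1 := hf μ (mem_support_iff.1 hμ)
  refine WLt.mul (m := 1) (n := Finsupp.weight w μ) ?_ (top_mon φ w h μ) (by omega)
  exact WLt.of_wh (isWeightedHomogeneous_C w _) (by omega)

lemma whc_of_WLt {w : σ → ℕ} {f : MvPolynomial σ K} {m n : ℕ} (hf : WLt w f m) (h : m ≤ n) :
    weightedHomogeneousComponent w n f = 0 := by
  ext μ
  rw [coeff_weightedHomogeneousComponent, coeff_zero]
  split_ifs with e
  · by_contra h2
    have := hf μ h2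
    omega
  · rfl

lemma top_whc (φ : MvPolynomial σ K →ₐ[K] MvPolynomial σ K) (w : σ → ℕ)
    (h : ∀ s, WLt w (φ (X s) - X s) (w s)) (f : MvPolynomial σ K) (m : ℕ) (hf : WLt w f (m + 1)) :
    weightedHomogeneousComponent w m (φ f) = weightedHomogeneousComponent w m f := by
  have := whc_of_WLt (top_lt φ w h f m hf) le_rfl
  rwa [map_sub, sub_eq_zero] at this

/-- scaling -/
lemma aeval_scale {R : Type} [CommRing R] [Algebra K R] (u : σ → ℕ) (h : MvPolynomial σ K) (m : ℕ)
    (hh : IsWeightedHomogeneous u h m) (c : R) (Θ : σ → R) :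
    aeval (fun v => c ^ (u v) * Θ v) h = c ^ m * aeval Θ h := by
  rw [aeval_def, aeval_def, eval₂_eq, eval₂_eq, Finset.mul_sum]
  refine Finset.sum_congr rfl (fun μ hμ => ?_)
  have e := hh (mem_support_iff.1 hμ)
  rw [Finsupp.weight_apply, Finsupp.sum] at e
  simp only [mul_pow, Finset.prod_mul_distrib]
  have : ∏ i ∈ μ.support, (c ^ u i) ^ μ i = c ^ m := by
    simp only [← pow_mul]
    rw [Finset.prod_pow_eq_pow_sum, ← e]
    congr 1
    exact Finset.sum_congr rfl (fun i _ => by rw [smul_eq_mul, mul_comm])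
  rw [this]; ring

/-- supports from character -/
lemma supp_of_char [Infinite K] (F : MvPolynomial σ K) (χ : σ → K) (κ : K)
    (h : ∀ w : σ → K, eval (fun v => χ v * w v) F = κ * eval w F) (μ : σ →₀ ℕ)
    (hμ : coeff μ F ≠ 0) : μ.prod (fun s n => χ s ^ n) = κ := by
  have hc : ∀ (G : MvPolynomial σ K) (μ : σ →₀ ℕ),
      coeff μ (aeval (fun v => C (χ v) * X v : σ → MvPolynomial σ K) G) =
      coeff μ G * μ.prod (fun s n => χ s ^ n) := by
    intro G μ
    induction G using MvPolynomial.induction_on' with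
    | add p q hp hq => rw [map_add, coeff_add, hp, hq, coeff_add, add_mul]
    | monomial ν a =>
      rw [aeval_monomial]
      have : (ν.prod fun i k => (C (χ i) * X i : MvPolynomial σ K) ^ k) =
          C (ν.prod fun s n => χ s ^ n) * monomial ν 1 := by
        rw [monomial_eq]
        simp only [Finsupp.prod, mul_pow, Finset.prod_mul_distrib, map_prod, C_1, one_mul, map_pow]
      rw [this, algebraMap_eq, coeff_C_mul, coeff_C_mul, coeff_monomial, coeff_monomial]
      split_ifs with e
      · subst e; ring
      · simp
  have : aeval (fun v => C (χ v) * X v : σ → MvPolynomial σ K) F = C κ * F := by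
    apply MvPolynomial.funext
    intro w
    rw [map_mul, eval_C, ← h w]
    rw [← MvPolynomial.coe_aeval_eq_eval]
    change (aeval w) _ = _
    rw [← AlgHom.comp_apply, comp_aeval]
    rw [← MvPolynomial.coe_aeval_eq_eval]
    simp
  have h2 := hc F μ
  rw [this, coeff_C_mul, mul_comm] at h2
  exact (mul_left_cancel₀ hμ h2).symm

/-- one-parameter scaling -/
lemma wh_of_scale [IsAlgClosed K] (F : MvPolynomial σ K) (u : σ → ℕ) (m : ℕ)
    (h : ∀ (c : K), c ≠ 0 → ∀ w : σ → K, eval (fun v => c ^ u v * w v) F = c ^ m * eval w F) :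
    IsWeightedHomogeneous u F m := by
  intro μ hμ
  have hinf : Infinite K := IsAlgClosed.instInfinite
  have key : ∀ c : K, c ≠ 0 → c ^ (Finsupp.weight u μ) = c ^ m := by
    intro c hc
    have := supp_of_char F (fun v => c ^ u v) (c ^ m) (h c hc) μ hμ
    rw [← this, Finsupp.weight_apply, Finsupp.sum, Finsupp.prod, ← Finset.prod_pow_eq_pow_sum]
    refine Finset.prod_congr rfl (fun i _ => ?_)
    rw [smul_eq_mul, mul_comm, pow_mul]
  have hp : (Polynomial.X * Polynomial.X ^ (Finsupp.weight u μ) : Polynomial K) = Polynomial.X * Polynomial.X ^ m := by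
    apply Polynomial.funext
    intro c
    by_cases hc : c = 0
    · simp [hc]
    · simp [key c hc]
  have := congrArg Polynomial.natDegree hp
  rw [← pow_succ', ← pow_succ'] at this
  simpa using this

/-- dimension bound -/
lemma finrank_le_of_lead (W : Submodule K (MvPolynomial σ K)) (Λ : Finset (σ →₀ ℕ))
    (h : ∀ f ∈ W, f ≠ 0 → ∃ μ ∈ Λ, coeff μ f ≠ 0) :
    FiniteDimensional K W ∧ Module.finrank K W ≤ Λ.card := by
  let T : W →ₗ[K] (Λ → K) := LinearMap.pi (fun μ => (lcoeff K (μ : σ →₀ ℕ)).comp W.subtype)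
  have hT : Function.Injective T := by
    rw [← LinearMap.ker_eq_bot, LinearMap.ker_eq_bot']
    rintro ⟨f, hf⟩ h0
    by_contra hne
    obtain ⟨μ, hμ, hc⟩ := h f hf (fun h => hne (by simp [h]))
    exact hc (congrFun h0 ⟨μ, hμ⟩)
  refine ⟨FiniteDimensional.of_injective T hT, ?_⟩
  have := LinearMap.finrank_le_finrank_of_injective hT
  simpa using this

end gen
end QH

namespace QH
open Classical

section two
variable {σ : Type} {K : Type} [Field K]

lemma map_weight {Γ : Type} [AddCommMonoid Γ] (u : σ → Γ) (g : Γ →+ ℕ) (μ : σ →₀ ℕ) :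
    g (Finsupp.weight u μ) = Finsupp.weight (fun v => g (u v)) μ := by
  simp [Finsupp.weight_apply, Finsupp.sum, map_sum]

/-- content weight -/
noncomputable def ctw (x : ℕ → σ) (s : Finset ℕ) : σ → ℕ := fun v => ∑ c ∈ s, if v = x c then 1 else 0

lemma weight_ite (a : σ) (μ : σ →₀ ℕ) :
    Finsupp.weight (fun v => if v = a then 1 else 0) μ = μ a := by
  induction μ using Finsupp.induction_linear with
  | zero => simp
  | add f g hf hg => rw [map_add, hf, hg, Finsupp.add_apply]
  | single v n =>
    rw [Finsupp.weight_single, Finsupp.single_apply]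
    split_ifs <;> simp

lemma weight_fsum {ι : Type} (s : Finset ι) (u : ι → σ → ℕ) (μ : σ →₀ ℕ) :
    Finsupp.weight (fun v => ∑ i ∈ s, u i v) μ = ∑ i ∈ s, Finsupp.weight (u i) μ := by
  simp only [Finsupp.weight_apply, Finsupp.sum, Finset.smul_sum]
  rw [Finset.sum_comm]

lemma weight_ctw (x : ℕ → σ) (s : Finset ℕ) (μ : σ →₀ ℕ) :
    Finsupp.weight (ctw x s) μ = ∑ c ∈ s, μ (x c) := by
  unfold ctw
  rw [weight_fsum]
  simp only [weight_ite]

lemma ctw_self {x : ℕ → σ} (hx : Function.Injective x) (s : Finset ℕ) (c : ℕ) :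
    ctw x s (x c) = if c ∈ s then 1 else 0 := by
  unfold ctw
  simp only [hx.eq_iff]
  simp

lemma ctw_ne {x : ℕ → σ} (s : Finset ℕ) (v : σ) (h : ∀ c ∈ s, v ≠ x c) : ctw x s v = 0 := by
  unfold ctw
  refine Finset.sum_eq_zero (fun c hc => if_neg (h c hc))

/-- the substitution `x_c ↦ x_c + y_c` for `c ∈ s` -/
noncomputable def sgs (K : Type) [Field K] (x y : ℕ → σ) (s : Finset ℕ) :
    MvPolynomial σ K →ₐ[K] MvPolynomial σ K :=
  aeval (fun v => X v + ∑ c ∈ s, if v = x c then X (y c) else 0)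

lemma sgs_X (x y : ℕ → σ) (s : Finset ℕ) (v : σ) :
    sgs K x y s (X v) = X v + ∑ c ∈ s, if v = x c then X (y c) else 0 := by
  simp [sgs]

lemma sgs_Xx {x y : ℕ → σ} (hx : Function.Injective x) (s : Finset ℕ) (c : ℕ) (hc : c ∈ s) :
    sgs K x y s (X (x c)) = X (x c) + X (y c) := by
  rw [sgs_X]
  simp only [hx.eq_iff]
  simp [hc]

lemma sgs_Xne {x y : ℕ → σ} (s : Finset ℕ) (v : σ) (h : ∀ c ∈ s, v ≠ x c) :
    sgs K x y s (X v) = X v := by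
  rw [sgs_X, Finset.sum_eq_zero, add_zero]
  exact (fun c hc => if_neg (h c hc))

lemma eval_sgs (x y : ℕ → σ) (s : Finset ℕ) (w : σ → K) (f : MvPolynomial σ K) :
    eval w (sgs K x y s f) = eval (fun v => w v + ∑ c ∈ s, if v = x c then w (y c) else 0) f := by
  rw [sgs, ← MvPolynomial.coe_aeval_eq_eval, ← MvPolynomial.coe_aeval_eq_eval]
  change aeval w (aeval _ f) = aeval _ f
  rw [← AlgHom.comp_apply, comp_aeval]
  congr 2
  funext v
  rw [map_add, map_sum, aeval_X]
  congr 1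
  refine Finset.sum_congr rfl (fun c _ => ?_)
  split_ifs <;> simp

lemma sgs_wh {Γ : Type} [AddCommMonoid Γ] {x y : ℕ → σ} (s : Finset ℕ) (u : σ → Γ)
    (h : ∀ c ∈ s, u (x c) = u (y c)) (v : σ) : IsWeightedHomogeneous u (sgs K x y s (X v)) (u v) := by
  rw [sgs_X]
  refine (isWeightedHomogeneous_X _ _ _).add (IsWeightedHomogeneous.sum _ _ _ (fun c hc => ?_))
  split_ifs with e
  · rw [e, h c hc]; exact isWeightedHomogeneous_X _ _ _
  · exact isWeightedHomogeneous_zero _ _ _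

lemma sgs_top {x y : ℕ → σ} (s : Finset ℕ) (u : σ → ℕ)
    (h : ∀ c ∈ s, u (y c) < u (x c)) (v : σ) : WLt u (sgs K x y s (X v) - X v) (u v) := by
  rw [sgs_X, add_sub_cancel_left]
  refine WLt.sum _ _ (fun c hc => ?_)
  split_ifs with e
  · rw [e]; exact WLt.of_wh (isWeightedHomogeneous_X _ _ _) (h c hc)
  · intro μ hμ; simp at hμ

lemma natDegree_aeval_le (Θ : σ → Polynomial K) (u : σ → ℕ) (hΘ : ∀ v, (Θ v).natDegree ≤ u v)
    (h : MvPolynomial σ K) (B : ℕ) (hB : WLt u h (B + 1)) : (aeval Θ h).natDegree ≤ B := by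
  rw [aeval_def, eval₂_eq]
  refine Polynomial.natDegree_sum_le_of_forall_le _ _ (fun μ hμ => ?_)
  have e := hB μ (mem_support_iff.1 hμ)
  refine (Polynomial.natDegree_C_mul_le _ _).trans ?_
  refine (Polynomial.natDegree_prod_le _ _).trans ?_
  refine le_trans ?_ (Nat.lt_succ_iff.1 e)
  rw [Finsupp.weight_apply, Finsupp.sum]
  refine Finset.sum_le_sum (fun i _ => ?_)
  refine Polynomial.natDegree_pow_le.trans ?_
  rw [smul_eq_mul]
  exact Nat.mul_le_mul_left _ (hΘ i)

/-- the third substitution -/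
noncomputable def th3 (x y : ℕ → σ) (s : Finset ℕ) (w : σ → K) : σ → Polynomial K :=
  fun v => Polynomial.C (w v) + Polynomial.X * ∑ c ∈ s, if v = y c then Polynomial.C (w (x c)) else 0

lemma th3_eval (x y : ℕ → σ) (s : Finset ℕ) (w : σ → K) (h : MvPolynomial σ K) (t : K) :
    Polynomial.eval t (aeval (th3 x y s w) h) =
      eval (fun v => w v + t * ∑ c ∈ s, if v = y c then w (x c) else 0) h := by
  have : Polynomial.eval t (aeval (th3 x y s w) h) =
    (Polynomial.aeval t).comp (aeval (th3 x y s w)) h := by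
    rw [AlgHom.comp_apply, Polynomial.coe_aeval_eq_eval]
  rw [this, comp_aeval, ← MvPolynomial.coe_aeval_eq_eval]
  change aeval _ h = aeval _ h
  congr 2
  funext v
  simp only [th3, map_add, map_mul, map_sum, Polynomial.aeval_X, Polynomial.aeval_C]
  congr 2
  refine Finset.sum_congr rfl (fun c _ => ?_)
  split_ifs <;> simp

lemma key_deg {x y : ℕ → σ} (hx : Function.Injective x) (hy : Function.Injective y)
    (hxy : ∀ i j, x i ≠ y j) (s : Finset ℕ) (h : MvPolynomial σ K) (A B : ℕ)
    (hs : sgs K x y s h = h) (hA : IsWeightedHomogeneous (ctw x s) h A)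
    (hB : IsWeightedHomogeneous (ctw y s) h B) (w : σ → K) :
    ((-Polynomial.X) ^ A * aeval (th3 x y s w) h).natDegree ≤ B := by
  rw [← aeval_scale (ctw x s) h A hA]
  conv_lhs => rw [← hs]
  rw [sgs, ← AlgHom.comp_apply, comp_aeval]
  refine natDegree_aeval_le _ (ctw y s) (fun v => ?_) h B (WLt.of_wh hB (Nat.lt_succ_self _))
  have yv : ∀ c ∈ s, th3 x y s w (y c) = Polynomial.C (w (y c)) + Polynomial.X * Polynomial.C (w (x c)) := by
    intro c hc
    simp only [th3, hy.eq_iff]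
    simp [hc]
  have xv : ∀ c, th3 x y s w (x c) = Polynomial.C (w (x c)) := by
    intro c
    simp only [th3]
    rw [Finset.sum_eq_zero (fun i _ => if_neg (hxy _ _))]
    simp
  have c0 : ∀ c, ctw x s (y c) = 0 := fun c => ctw_ne s _ (fun i _ => (hxy _ _).symm)
  rw [map_add, map_sum, aeval_X]
  by_cases h1 : ∃ c ∈ s, v = x c
  · obtain ⟨c, hc, rfl⟩ := h1
    rw [ctw_self hx, if_pos hc, xv, pow_one]
    have : ∀ i, (aeval (fun v => (-Polynomial.X) ^ ctw x s v * th3 x y s w v))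
        (if x c = x i then (X (y i) : MvPolynomial σ K) else 0) = if i = c then th3 x y s w (y c) else 0 := by
      intro i
      by_cases e : i = c
      · subst e; rw [if_pos rfl, if_pos rfl, aeval_X, c0, pow_zero, one_mul]
      · rw [if_neg e, if_neg (fun h => e (hx h).symm), map_zero]
    rw [Finset.sum_congr rfl (fun i _ => this i), Finset.sum_ite_eq', if_pos hc, yv c hc]
    rw [show -Polynomial.X * Polynomial.C (w (x c)) + (Polynomial.C (w (y c)) + Polynomial.X * Polynomial.C (w (x c))) = Polynomial.C (w (y c)) by ring]
    simp
  · push Not at h1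
    rw [Finset.sum_eq_zero, add_zero, ctw_ne s v h1, pow_zero, one_mul]
    · by_cases h2 : ∃ c ∈ s, v = y c
      · obtain ⟨c, hc, rfl⟩ := h2
        rw [yv c hc, ctw_self hy, if_pos hc]
        refine (Polynomial.natDegree_add_le _ _).trans ?_
        simp only [Polynomial.natDegree_C, Nat.zero_le, max_eq_right]
        exact (Polynomial.natDegree_mul_C_le _ _).trans Polynomial.natDegree_X_le
      · push Not at h2
        simp only [th3]
        rw [Finset.sum_eq_zero (fun i hi => if_neg (h2 i hi))]
        simp
    · intro c hc
      rw [if_neg (h1 c hc), map_zero]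

/-- `SL2` lemma -/
lemma sl2_inv [Infinite K] {x y : ℕ → σ} (hx : Function.Injective x) (hy : Function.Injective y)
    (hxy : ∀ i j, x i ≠ y j) (s : Finset ℕ) (h : MvPolynomial σ K) (A : ℕ)
    (hs : sgs K x y s h = h) (hA : IsWeightedHomogeneous (ctw x s) h A)
    (hB : IsWeightedHomogeneous (ctw y s) h A) : sgs K y x s h = h := by
  apply MvPolynomial.funext
  intro w
  have hd := key_deg hx hy hxy s h A A hs hA hB w
  set q := aeval (th3 x y s w) h with hq
  have hc : q.natDegree ≤ 0 := by
    by_cases h0 : q = 0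
    · simp [h0]
    · rw [Polynomial.natDegree_mul (pow_ne_zero _ (neg_ne_zero.2 Polynomial.X_ne_zero)) h0,
        Polynomial.natDegree_pow, Polynomial.natDegree_neg, Polynomial.natDegree_X] at hd
      omega
  have h1 := th3_eval x y s w h 1
  have h0 := th3_eval x y s w h 0
  rw [← hq, Polynomial.eq_C_of_natDegree_le_zero hc, Polynomial.eval_C] at h1 h0
  rw [eval_sgs]
  simp only [one_mul, zero_mul, add_zero] at h1 h0
  rw [← h1, h0]

lemma key_ineq [Infinite K] {x y : ℕ → σ} (hx : Function.Injective x) (hy : Function.Injective y)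
    (hxy : ∀ i j, x i ≠ y j) (s : Finset ℕ) (h : MvPolynomial σ K) (A B e : ℕ)
    (hs : sgs K x y s h = h) (hA : IsWeightedHomogeneous (ctw x s) h A)
    (hB : IsWeightedHomogeneous (ctw y s) h B) (h0 : h ≠ 0) (c : ℕ) (hc : c ∈ s)
    (hd : X (y c) ^ e ∣ h) : A + e ≤ B := by
  obtain ⟨h', rfl⟩ := hd
  have hne : h' * X (x c) ≠ 0 := mul_ne_zero (right_ne_zero_of_mul h0) (X_ne_zero _)
  obtain ⟨w, hw⟩ : ∃ w, eval w (h' * X (x c)) ≠ 0 := by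
    by_contra hcon
    push Not at hcon
    exact hne (MvPolynomial.funext (fun w => by rw [hcon w, map_zero]))
  rw [map_mul, eval_X] at hw
  have hd := key_deg hx hy hxy s _ A B hs hA hB w
  rw [map_mul, map_pow, aeval_X] at hd
  have hq : aeval (th3 x y s w) h' ≠ 0 := by
    intro h0
    have := th3_eval x y s w h' 0
    rw [h0] at this
    simp only [zero_mul, add_zero, Polynomial.eval_zero] at this
    exact hw (by rw [← this, zero_mul])
  have yv : th3 x y s w (y c) = Polynomial.C (w (x c)) * Polynomial.X + Polynomial.C (w (y c)) := by
    simp only [th3, hy.eq_iff]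
    simp [hc]
    ring
  have hdeg : (th3 x y s w (y c)).natDegree = 1 := by
    rw [yv]; exact Polynomial.natDegree_linear (right_ne_zero_of_mul hw)
  have hyne : th3 x y s w (y c) ≠ 0 := by
    intro h0; rw [h0] at hdeg; simp at hdeg
  rw [Polynomial.natDegree_mul (pow_ne_zero _ (neg_ne_zero.2 Polynomial.X_ne_zero))
      (mul_ne_zero (pow_ne_zero _ hyne) hq), Polynomial.natDegree_mul (pow_ne_zero _ hyne) hq,
      Polynomial.natDegree_pow, Polynomial.natDegree_neg, Polynomial.natDegree_X,
      Polynomial.natDegree_pow, hdeg] at hd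
  omega

end two
end QH

set_option linter.unusedSectionVars false
namespace QH
open Classical

section lt
variable {σ : Type} [LinearOrder σ] {K : Type} [Field K]

/-- lex leading monomial -/
def IsLead (f : MvPolynomial σ K) (l : σ →₀ ℕ) : Prop :=
  coeff l f ≠ 0 ∧ ∀ μ, coeff μ f ≠ 0 → toLex μ ≤ toLex l

lemma exists_lead (f : MvPolynomial σ K) (hf : f ≠ 0) : ∃ l, IsLead f l := by
  obtain ⟨l, hl, hmax⟩ := Finset.exists_max_image f.support (fun μ => toLex μ)
    (by rwa [Finset.nonempty_iff_ne_empty, ne_eq, support_eq_empty])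
  exact ⟨l, mem_support_iff.1 hl, fun μ hμ => hmax μ (mem_support_iff.2 hμ)⟩

lemma X_pow_dvd_of (a : σ) (e : ℕ) (f : MvPolynomial σ K) (h : ∀ μ, coeff μ f ≠ 0 → e ≤ μ a) :
    X a ^ e ∣ f := by
  rw [f.as_sum]
  refine Finset.dvd_sum (fun μ hμ => ?_)
  refine ⟨monomial (μ - Finsupp.single a e) (coeff μ f), ?_⟩
  rw [X_pow_eq_monomial, monomial_mul, one_mul]
  congr 1
  rw [add_comm, tsub_add_cancel_of_le]
  rw [Finsupp.single_le_iff]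
  exact h μ (mem_support_iff.1 hμ)

lemma whc_lead {Γ : Type} [AddCommMonoid Γ] (u : σ → Γ) (f : MvPolynomial σ K) (l : σ →₀ ℕ)
    (h : IsLead f l) : IsLead (weightedHomogeneousComponent u (Finsupp.weight u l) f) l := by
  constructor
  · rw [coeff_weightedHomogeneousComponent, if_pos rfl]; exact h.1
  · intro μ hμ
    rw [coeff_weightedHomogeneousComponent] at hμ
    split_ifs at hμ with e
    · exact h.2 μ hμ
    · exact absurd rfl hμ

lemma coeff_whc_ne {Γ : Type} [AddCommMonoid Γ] {u : σ → Γ} {f : MvPolynomial σ K} {m : Γ} {μ : σ →₀ ℕ}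
    (h : coeff μ (weightedHomogeneousComponent u m f) ≠ 0) : coeff μ f ≠ 0 ∧ Finsupp.weight u μ = m := by
  rw [coeff_weightedHomogeneousComponent] at h
  split_ifs at h with e
  · exact ⟨h, e⟩
  · exact absurd rfl h

lemma weight_ite' (a : σ) (μ : σ →₀ ℕ) :
    Finsupp.weight (fun v => if v = a then 1 else 0) μ = μ a := by
  rw [← weight_ite a μ]
  congr!

lemma sgs_X' (x y : ℕ → σ) (s : Finset ℕ) (v : σ) :
    sgs K x y s (X v) = X v + ∑ c ∈ s, if v = x c then X (y c) else 0 := by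
  rw [sgs_X]
  congr!

lemma sgs_split {x y : ℕ → σ} (hxy : ∀ i j, x i ≠ y j) (c : ℕ) (s : Finset ℕ) (hc : c ∉ s)
    (f : MvPolynomial σ K) :
    sgs K x y (insert c s) f = sgs K x y s (sgs K x y {c} f) := by
  rw [← AlgHom.comp_apply]
  congr 1
  apply MvPolynomial.algHom_ext
  intro v
  rw [AlgHom.comp_apply, sgs_X', sgs_X', map_add, Finset.sum_singleton, Finset.sum_insert hc, sgs_X']
  have : sgs K x y s (if v = x c then X (y c) else 0) = if v = x c then X (y c) else 0 := by
    split_ifs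
    · exact sgs_Xne _ _ (fun i _ => (hxy _ _).symm)
    · rw [map_zero]
  rw [this]; ring

/-- the inductive form of the leading term lemma -/
lemma lt_aux [Infinite K] {x y : ℕ → σ} (hx : StrictMono x) (hy : Function.Injective y)
    (hxy : ∀ i j, x i ≠ y j) (hlt : ∀ i j, i ≤ j → x i < y j) (M : ℕ) (l : σ →₀ ℕ) (n : ℕ) :
    ∀ c, c + n = M → ∀ f : MvPolynomial σ K, sgs K x y (Finset.Ico c M) f = f → IsLead f l →
    (∀ μ, coeff μ f ≠ 0 → (∀ v, (∀ i ∈ Finset.Ico c M, v ≠ x i ∧ v ≠ y i) → μ v = l v) ∧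
      (∀ i ∈ Finset.Ico c M, μ (x i) + μ (y i) = l (x i) + l (y i)) ∧
      ∑ i ∈ Finset.Ico c M, μ (x i) = ∑ i ∈ Finset.Ico c M, l (x i)) →
    ∀ c', c ≤ c' → c' < M → ∑ i ∈ Finset.Ico c' M, l (x i) ≤ ∑ i ∈ Finset.Ico (c' + 1) M, l (y i) := by
  induction n with
  | zero => intro c hc f _ _ _ c' h1 h2; omega
  | succ n ih =>
    intro c hc f hf hl hsupp c' hc1 hc2
    have hcM : c < M := by omega
    have hcm : c ∈ Finset.Ico c M := Finset.mem_Ico.2 ⟨le_rfl, hcM⟩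
    have hle : ∀ μ, coeff μ f ≠ 0 → μ (x c) ≤ l (x c) := by
      intro μ hμ
      by_contra hcon
      push Not at hcon
      refine absurd (hl.2 μ hμ) (not_le.2 ?_)
      rw [Finsupp.Lex.lt_iff]
      refine ⟨x c, fun d hd => ?_, hcon⟩
      refine ((hsupp μ hμ).1 d (fun i hi => ⟨fun h => ?_, fun h => ?_⟩)).symm
      · have := (hx.le_iff_le (a := c) (b := i)).2 (Finset.mem_Ico.1 hi).1
        rw [h] at hd
        exact absurd hd (not_lt.2 this)
      · have := hlt c i (Finset.mem_Ico.1 hi).1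
        rw [h] at hd
        exact absurd hd (not_lt.2 this.le)
    have hins : Finset.Ico c M = insert c (Finset.Ico (c + 1) M) :=
      (Finset.insert_Ico_add_one_left_eq_Ico hcM).symm
    have hnot : c ∉ Finset.Ico (c + 1) M := by simp
    have hysum : ∀ μ, coeff μ f ≠ 0 → ∑ i ∈ Finset.Ico c M, μ (y i) = ∑ i ∈ Finset.Ico c M, l (y i) := by
      intro μ hμ
      have h1 := Finset.sum_congr rfl (hsupp μ hμ).2.1
      rw [Finset.sum_add_distrib, Finset.sum_add_distrib, (hsupp μ hμ).2.2] at h1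
      omega
    rcases Nat.eq_or_lt_of_le hc1 with rfl | hlt'
    · have hdvd : X (y c) ^ (l (y c)) ∣ f := by
        refine X_pow_dvd_of _ _ _ (fun μ hμ => ?_)
        have h1 := hle μ hμ
        have h2 := (hsupp μ hμ).2.1 c hcm
        omega
      have := key_ineq hx.injective hy hxy (Finset.Ico c M) f (∑ i ∈ Finset.Ico c M, l (x i))
        (∑ i ∈ Finset.Ico c M, l (y i)) (l (y c)) hf
        (fun μ hμ => by rw [weight_ctw]; exact (hsupp μ hμ).2.2)
        (fun μ hμ => by rw [weight_ctw]; exact hysum μ hμ)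
        (by rintro rfl; exact hl.1 (by simp)) c hcm hdvd
      rw [hins, Finset.sum_insert hnot, Finset.sum_insert hnot] at this
      rw [hins, Finset.sum_insert hnot]
      omega
    · have hw : Finsupp.weight (ctw x {c}) l = l (x c) := by rw [weight_ctw]; simp
      have hinv : sgs K x y (Finset.Ico (c + 1) M) (weightedHomogeneousComponent (ctw x {c}) (l (x c)) f)
          = weightedHomogeneousComponent (ctw x {c}) (l (x c)) f := by
        have h1 : sgs K x y (Finset.Ico (c + 1) M) (sgs K x y {c} f) = f := by
          rw [← sgs_split hxy c _ hnot, ← hins]; exact hf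
        have h2 : weightedHomogeneousComponent (ctw x {c}) (l (x c)) (sgs K x y {c} f) =
            weightedHomogeneousComponent (ctw x {c}) (l (x c)) f := by
          refine top_whc _ _ (sgs_top _ _ ?_) f _ ?_
          · intro i hi
            rw [ctw_self hx.injective, if_pos hi, ctw_ne _ _ (fun j _ => (hxy _ _).symm)]
            exact one_pos
          · intro μ hμ
            rw [weight_ctw, Finset.sum_singleton]
            exact Nat.lt_succ_of_le (hle μ hμ)
        rw [← h2, ← whc_comm, h1, h2]
        refine sgs_wh _ _ (fun i hi => ?_)
        rw [ctw_self hx.injective, if_neg, ctw_ne _ _ (fun j _ => (hxy _ _).symm)]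
        rintro h
        rw [Finset.mem_singleton] at h
        subst h
        exact hnot hi
      refine ih (c + 1) (by omega) _ hinv ?_ ?_ c' (by omega) hc2
      · rw [← hw]; exact whc_lead _ f l hl
      · intro μ hμ
        obtain ⟨hμ1, hμ2⟩ := coeff_whc_ne hμ
        rw [weight_ctw, Finset.sum_singleton] at hμ2
        obtain ⟨s1, s2, s3⟩ := hsupp μ hμ1
        have hyc := s2 c hcm
        refine ⟨fun v hv => ?_, fun i hi => s2 i (by rw [hins]; exact Finset.mem_insert_of_mem hi), ?_⟩
        · by_cases e1 : v = x c
          · rw [e1, hμ2]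
          · by_cases e2 : v = y c
            · rw [e2]; omega
            · refine s1 v (fun i hi => ?_)
              rw [hins, Finset.mem_insert] at hi
              rcases hi with rfl | hi
              · exact ⟨e1, e2⟩
              · exact hv i hi
        · rw [hins, Finset.sum_insert hnot, Finset.sum_insert hnot] at s3
          omega

/-- the class weight -/
noncomputable def clw (x y : ℕ → σ) (M : ℕ) : σ → (σ → ℕ) × (ℕ → ℕ) := fun v =>
  (fun s => if ∃ i < M, s = x i ∨ s = y i then 0 else if v = s then 1 else 0,
   fun i => (if v = x i then 1 else 0) + (if v = y i then 1 else 0))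

/-- low condition -/
def Low (x y : ℕ → σ) (M : ℕ) (l : σ →₀ ℕ) : Prop :=
  ∀ c < M, ∑ i ∈ Finset.range M, l (x i) + ∑ i ∈ Finset.range (c + 1), l (y i) ≤
    ∑ i ∈ Finset.range M, l (y i) + ∑ i ∈ Finset.range c, l (x i)

lemma lt_low [Infinite K] {x y : ℕ → σ} (hx : StrictMono x) (hy : Function.Injective y)
    (hxy : ∀ i j, x i ≠ y j) (hlt : ∀ i j, i ≤ j → x i < y j) (M : ℕ) (l : σ →₀ ℕ)
    (f : MvPolynomial σ K) (A : ℕ) (hf : sgs K x y (Finset.range M) f = f)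
    (hA : IsWeightedHomogeneous (ctw x (Finset.range M)) f A) (hl : IsLead f l) : Low x y M l := by
  intro c hc
  set u := clw x y M with hu
  have e0 : Finset.range M = Finset.Ico 0 M := Finset.range_eq_Ico M
  have := lt_aux hx hy hxy hlt M l M 0 (zero_add _)
    (weightedHomogeneousComponent u (Finsupp.weight u l) f) ?_ (whc_lead u f l hl) ?_ c (Nat.zero_le _) hc
  · have h1 := Finset.sum_range_add_sum_Ico (fun i => l (x i)) hc.le
    have h2 := Finset.sum_range_add_sum_Ico (fun i => l (y i)) (show c + 1 ≤ M from hc)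
    omega
  · rw [← whc_comm, ← e0, hf]
    refine sgs_wh _ _ (fun i hi => ?_)
    rw [← e0, Finset.mem_range] at hi
    rw [hu]
    refine Prod.ext (funext fun s => ?_) (funext fun j => ?_)
    · simp only [clw]
      split_ifs with h1 h2 h3 h4
      · rfl
      · exact absurd ⟨i, hi, Or.inl h2.symm⟩ h1
      · exact absurd ⟨i, hi, Or.inl h2.symm⟩ h1
      · exact absurd ⟨i, hi, Or.inr h4.symm⟩ h1
      · rfl
    · simp only [clw, if_neg (hxy _ _), if_neg (hxy _ _).symm, hx.injective.eq_iff, hy.eq_iff, add_zero, zero_add]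
  · intro μ hμ
    obtain ⟨hμ1, hμ2⟩ := coeff_whc_ne hμ
    have w1 : ∀ s (μ : σ →₀ ℕ), (Finsupp.weight u μ).1 s = if ∃ i < M, s = x i ∨ s = y i then 0 else μ s := by
      intro s μ
      have := map_weight u ((Pi.evalAddMonoidHom _ s).comp (AddMonoidHom.fst (σ → ℕ) (ℕ → ℕ))) μ
      refine this.trans ?_
      simp only [AddMonoidHom.comp_apply, AddMonoidHom.coe_fst, Pi.evalAddMonoidHom_apply, hu, clw]
      split_ifs
      · simp [Finsupp.weight_apply]
      · rw [weight_ite']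
    have w2 : ∀ i (μ : σ →₀ ℕ), (Finsupp.weight u μ).2 i = μ (x i) + μ (y i) := by
      intro s μ
      have := map_weight u ((Pi.evalAddMonoidHom _ s).comp (AddMonoidHom.snd (σ → ℕ) (ℕ → ℕ))) μ
      refine this.trans ?_
      simp only [AddMonoidHom.comp_apply, AddMonoidHom.coe_snd, Pi.evalAddMonoidHom_apply, hu, clw]
      rw [← weight_ite' (x s) μ, ← weight_ite' (y s) μ]
      simp only [Finsupp.weight_apply, Finsupp.sum, smul_add, Finset.sum_add_distrib]
    refine ⟨fun v hv => ?_, fun i hi => ?_, ?_⟩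
    · have h1 := w1 v μ
      have h2 := w1 v l
      have h3 : ¬ ∃ i < M, v = x i ∨ v = y i := by
        rintro ⟨i, hi, h | h⟩
        · exact (hv i (by simp [hi])).1 h
        · exact (hv i (by simp [hi])).2 h
      rw [if_neg h3] at h1 h2
      rw [← h1, ← h2, hμ2]
    · rw [← w2, ← w2, hμ2]
    · rw [← e0, ← weight_ctw, ← weight_ctw, hA hμ1, hA hl.1]

end lt
end QH

set_option linter.unusedSectionVars false
namespace QH
open Classical

/-- the running maximum -/
def EE (A B : ℕ → ℕ) : ℕ → ℕ
  | 0 => 0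
  | c + 1 => max (EE A B c) (B (c + 1) - A c)

/-- truncated running maximum -/
def EP (A B : ℕ → ℕ) (M a c : ℕ) : ℕ := EE A B c - (EE A B M - a)

lemma EE_succ (A B : ℕ → ℕ) (c : ℕ) : EE A B (c + 1) = max (EE A B c) (B (c + 1) - A c) := rfl

lemma EE_mono (A B : ℕ → ℕ) : Monotone (EE A B) :=
  monotone_nat_of_le_succ (fun c => by rw [EE_succ]; exact le_max_left _ _)

lemma EE_ge (A B : ℕ → ℕ) (c : ℕ) : B (c + 1) ≤ A c + EE A B (c + 1) := by
  rw [EE_succ]; omega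

lemma EE_le (A B : ℕ → ℕ) (X : ℕ) (c : ℕ) (h : ∀ c' < c, B (c' + 1) ≤ A c' + X) : EE A B c ≤ X := by
  induction c with
  | zero => simp [EE]
  | succ c ih =>
    have h1 := ih (fun c' h' => h c' (by omega))
    have h2 := h c (by omega)
    rw [EE_succ]; omega

lemma EE_ge' {A B : ℕ → ℕ} (hA : Monotone A) (h0 : B 0 = 0) (c : ℕ) : B c ≤ A c + EE A B c := by
  cases c with
  | zero => omega
  | succ c =>
    have h1 := EE_ge A B c
    have h2 := hA (Nat.le_succ c)
    simp only [Nat.succ_eq_add_one] at h2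
    omega

lemma EE_step {A B : ℕ → ℕ} (hA : Monotone A) (hB : Monotone B) (h0 : B 0 = 0) (c : ℕ) :
    EE A B (c + 1) + B c ≤ EE A B c + B (c + 1) := by
  have h1 := EE_ge' hA h0 c
  have h2 := hB (Nat.le_succ c)
  simp only [Nat.succ_eq_add_one] at h2
  rw [EE_succ]; omega

lemma EE_le_B {A B : ℕ → ℕ} (hA : Monotone A) (hB : Monotone B) (h0 : B 0 = 0) (c : ℕ) :
    EE A B c ≤ B c := by
  induction c with
  | zero => simp [EE]
  | succ c ih =>
    have h1 := EE_step hA hB h0 c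
    omega

lemma EE_low {A B : ℕ → ℕ} (hA : Monotone A) (h0 : B 0 = 0) (M : ℕ)
    (h : ∀ c < M, A M + B (c + 1) ≤ B M + A c) : EE A B M = B M - A M := by
  have h1 := EE_ge' hA h0 M
  have h2 : EE A B M ≤ B M - A M := EE_le A B _ _ (fun c' hc' => by have := h c' hc'; have := hA hc'.le; omega)
  omega

lemma EP_zero (A B : ℕ → ℕ) (M a : ℕ) : EP A B M a 0 = 0 := by simp [EP, EE]

lemma EP_mono (A B : ℕ → ℕ) (M a : ℕ) : Monotone (EP A B M a) := fun c d h => by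
  have := EE_mono A B h
  unfold EP; omega

lemma EP_step {A B : ℕ → ℕ} (hA : Monotone A) (hB : Monotone B) (h0 : B 0 = 0) (M a c : ℕ) :
    EP A B M a (c + 1) + B c ≤ EP A B M a c + B (c + 1) := by
  have := EE_step hA hB h0 c
  have := hB (Nat.le_succ c)
  simp only [Nat.succ_eq_add_one] at this
  unfold EP; omega

lemma EP_le_B {A B : ℕ → ℕ} (hA : Monotone A) (hB : Monotone B) (h0 : B 0 = 0) (M a c : ℕ) :
    EP A B M a c ≤ B c := by
  have := EE_le_B hA hB h0 c
  unfold EP; omega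

/-- the recovery step -/
lemma EP_recover {A B : ℕ → ℕ} (hA : Monotone A) (hB : Monotone B) (h0 : B 0 = 0) (M a : ℕ)
    (h : ∀ c < M, A M + B (c + 1) ≤ B M + A c) (ha : a ≤ EE A B M) (c : ℕ) (hc : c < M) :
    a - EP A B M a c = max (a - EP A B M a (c + 1))
      (((A M + EP A B M a M) + (B (c + 1) - EP A B M a (c + 1))) -
       ((A c + EP A B M a c) + (B M - EP A B M a M))) := by
  have h1 := EE_low hA h0 M h
  have h2 := EE_mono A B (show c + 1 ≤ M from hc)
  have h3 := EE_mono A B (Nat.le_succ c)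
  have h4 := EE_succ A B c
  have h5 := h c hc
  have h6 := EE_le_B hA hB h0 M
  have h7 := EE_le_B hA hB h0 (c + 1)
  have h8 := hA hc.le
  have h9 := hB (show c + 1 ≤ M from hc)
  simp only [Nat.succ_eq_add_one] at h3
  unfold EP
  omega

lemma EP_inj {A B A2 B2 : ℕ → ℕ} (hA : Monotone A) (hB : Monotone B) (h0 : B 0 = 0)
    (hA2 : Monotone A2) (hB2 : Monotone B2) (h02 : B2 0 = 0) (M a a2 : ℕ)
    (h : ∀ c < M, A M + B (c + 1) ≤ B M + A c) (ha : a ≤ EE A B M)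
    (h2 : ∀ c < M, A2 M + B2 (c + 1) ≤ B2 M + A2 c) (ha2 : a2 ≤ EE A2 B2 M)
    (eA : ∀ c ≤ M, A c + EP A B M a c = A2 c + EP A2 B2 M a2 c)
    (eB : ∀ c ≤ M, B c - EP A B M a c = B2 c - EP A2 B2 M a2 c) :
    ∀ c ≤ M, A c = A2 c ∧ B c = B2 c := by
  have key : ∀ n c, c + n = M → a - EP A B M a c = a2 - EP A2 B2 M a2 c := by
    intro n
    induction n with
    | zero =>
      intro c hc
      have : c = M := by omega
      subst this
      unfold EP; omega
    | succ n ih =>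
      intro c hc
      rw [EP_recover hA hB h0 M a h ha c (by omega), EP_recover hA2 hB2 h02 M a2 h2 ha2 c (by omega),
        ih (c + 1) (by omega), eA M le_rfl, eB (c + 1) (by omega), eA c (by omega), eB M le_rfl]
  have k0 := key M 0 (by omega)
  rw [EP_zero, EP_zero] at k0
  intro c hc
  have k1 := key (M - c) c (by omega)
  have k2 := eA c hc
  have k3 := eB c hc
  have k4 := EP_le_B hA hB h0 M a c
  have k5 := EP_le_B hA2 hB2 h02 M a2 c
  have k6 := EP_mono A B M a hc
  have k7 := EP_mono A2 B2 M a2 hc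
  have k8 : EP A B M a M = a := by unfold EP; omega
  have k9 : EP A2 B2 M a2 M = a2 := by unfold EP; omega
  omega

/-- the stages of the sweep -/
structure ST (j z k M q : ℕ) (P : ℕ → ℕ → ℕ) : Prop where
  c1 : ∀ p, j < p → p ≤ z → p ≠ q → P p M = k
  c2 : q ≠ j → P q M + P j M = 2 * k ∧ k ≤ P q M
  c3 : q = j → P j M = k
  low : ∀ r, j ≤ r → r < z → r ≠ q → ∀ c < M, P r M + P (r + 1) (c + 1) ≤ P (r + 1) M + P r c
  cc1 : j < q → q < z → ∀ c < M, P (q + 1) (c + 1) ≤ P q c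
  cc2 : j < q → q < z → ∀ c < M, ∀ c' < c, P (q + 1) (c + 1) + P q (c' + 1) + P (q - 1) M ≤
    P q c + P (q - 1) c' + k

lemma ST_step {j z k M r : ℕ} {P P' : ℕ → ℕ → ℕ} (hP : ∀ p, Monotone (P p)) (hP0 : ∀ p, P p 0 = 0)
    (hj : j ≤ r) (hz : r + 1 ≤ z) (h : ST j z k M (r + 1) P)
    (h1 : ∀ c ≤ M, P' r c = P r c + EP (P r) (P (r + 1)) M (P (r + 1) M - k) c)
    (h2 : ∀ c ≤ M, P' (r + 1) c = P (r + 1) c - EP (P r) (P (r + 1)) M (P (r + 1) M - k) c)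
    (h3 : ∀ p, p ≠ r → p ≠ r + 1 → ∀ c, P' p c = P p c) : ST j z k M r P' := by
  obtain ⟨c1, c2, c3, low, cc1, cc2⟩ := h
  have lowr := low r hj hz (by omega)
  have hEM := EE_low (hP r) (hP0 (r + 1)) M lowr
  obtain ⟨d1, d2⟩ := c2 (by omega)
  have hAk : r ≠ j → P r M = k := fun hne => c1 r (by omega) (by omega) (by omega)
  have hAj : r = j → P r M = P j M := fun e => by rw [e]
  have hAM : P r M ≤ k := by
    by_cases e : r = j
    · have := hAj e; omega
    · exact (hAk e).le
  have hEPM : EP (P r) (P (r + 1)) M (P (r + 1) M - k) M = P (r + 1) M - k := by unfold EP; omega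
  have hEle := EP_le_B (hP r) (hP (r + 1)) (hP0 (r + 1)) M (P (r + 1) M - k)
  have hEmono := EP_mono (P r) (P (r + 1)) M (P (r + 1) M - k)
  have hEE : r ≠ j → ∀ c, EP (P r) (P (r + 1)) M (P (r + 1) M - k) c = EE (P r) (P (r + 1)) c := by
    intro hne c
    have := hAk hne
    unfold EP; omega
  constructor
  · intro p hp1 hp2 hp3
    by_cases e : p = r + 1
    · rw [e, h2 M le_rfl, hEPM]; omega
    · rw [h3 p hp3 e]; exact c1 p hp1 hp2 e
  · intro hne
    rw [h1 M le_rfl, h3 j (by omega) (by omega), hEPM]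
    have := hAk hne
    omega
  · intro e
    have := hAj e
    rw [← e, h1 M le_rfl, hEPM]
    omega
  · intro r' hr1 hr2 hr3 c hc
    by_cases e1 : r' = r + 1
    · subst e1
      rw [h2 M le_rfl, h2 c hc.le, hEPM, h3 (r + 1 + 1) (by omega) (by omega), h3 (r + 1 + 1) (by omega) (by omega)]
      have e2 : P (r + 1 + 1) M = k := c1 _ (by omega) (by omega) (by omega)
      have k1 := cc1 (by omega) (by omega) c hc
      have k2 := cc2 (by omega) (by omega) c hc
      have k3 : EE (P r) (P (r + 1)) c ≤ P (r + 1) c - P (r + 1 + 1) (c + 1) + (EE (P r) (P (r + 1)) M - (P (r + 1) M - k)) := by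
        refine EE_le _ _ _ _ (fun c' hc' => ?_)
        have := k2 c' hc'
        simp only [Nat.add_sub_cancel] at this
        omega
      have := hEle c
      unfold EP at this ⊢
      omega
    · by_cases e2 : r' + 1 = r
      · subst e2
        rw [h1 M le_rfl, h1 (c + 1) hc, hEPM, h3 r' (by omega) (by omega), h3 r' (by omega) (by omega)]
        have k1 := low r' hr1 hr2 (by omega) c hc
        have k2 := hEmono (show c + 1 ≤ M from hc)
        rw [hEPM] at k2
        omega
      · rw [h3 r' hr3 e1, h3 r' hr3 e1, h3 (r' + 1) e2 (by omega), h3 (r' + 1) e2 (by omega)]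
        exact low r' hr1 hr2 (by omega) c hc
  · intro hjr _ c hc
    rw [h2 (c + 1) hc, h1 c hc.le, hEE (by omega), hEE (by omega)]
    have := EE_ge (P r) (P (r + 1)) c
    omega
  · intro hjr _ c hc c' hc'
    rw [h2 (c + 1) hc, h1 c hc.le, h1 (c' + 1) (by omega), h3 (r - 1) (by omega) (by omega),
      h3 (r - 1) (by omega) (by omega), hEE (by omega), hEE (by omega), hEE (by omega)]
    have k1 := EE_ge (P r) (P (r + 1)) c
    have k2 := EE_mono (P r) (P (r + 1)) (show c' + 1 ≤ c from hc')
    have k3 := low (r - 1) (by omega) (by omega) (by omega) c' (by omega)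
    rw [show r - 1 + 1 = r by omega] at k3
    have k4 := hAk (by omega)
    have k5 : EE (P r) (P (r + 1)) (c + 1) ≤ P (r + 1) (c + 1) := EE_le_B (hP r) (hP (r + 1)) (hP0 (r + 1)) (c + 1)
    omega

end QH

set_option linter.unusedSectionVars false
namespace QH
open Classical

/-- charts -/
structure Chart (σ : Type) [LinearOrder σ] where
  v : ℕ → ℕ → σ
  inj : ∀ p c q d, v p c = v q d → p = q ∧ c = d
  mono : ∀ p c d, c < d → v p c < v p d
  mono2 : ∀ p q c d, p < q → c ≤ d → v p c < v q d

section
variable {σ : Type} [LinearOrder σ] (C : Chart σ) (M : ℕ)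

lemma Chart.injc (p : ℕ) : Function.Injective (C.v p) := fun _ _ h => (C.inj _ _ _ _ h).2
lemma Chart.ne {p q : ℕ} (h : p ≠ q) (i j : ℕ) : C.v p i ≠ C.v q j := fun e => h (C.inj _ _ _ _ e).1

/-- prefix sums -/
def PS (p : ℕ) (l : σ →₀ ℕ) (c : ℕ) : ℕ := ∑ i ∈ Finset.range c, l (C.v p i)

lemma PS_zero (p : ℕ) (l : σ →₀ ℕ) : PS C p l 0 = 0 := by simp [PS]
lemma PS_succ (p : ℕ) (l : σ →₀ ℕ) (c : ℕ) : PS C p l (c + 1) = PS C p l c + l (C.v p c) := by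
  rw [PS, Finset.sum_range_succ, PS]
lemma PS_mono (p : ℕ) (l : σ →₀ ℕ) : Monotone (PS C p l) :=
  monotone_nat_of_le_succ (fun c => by rw [PS_succ]; omega)

/-- low for letters r, r+1 -/
abbrev LowC (r : ℕ) (l : σ →₀ ℕ) : Prop :=
  ∀ c < M, PS C r l M + PS C (r + 1) l (c + 1) ≤ PS C (r + 1) l M + PS C r l c

/-- increments -/
def dl (r a : ℕ) (l : σ →₀ ℕ) (i : ℕ) : ℕ :=
  EP (PS C r l) (PS C (r + 1) l) M a (i + 1) - EP (PS C r l) (PS C (r + 1) l) M a i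

lemma dl_le (r a : ℕ) (l : σ →₀ ℕ) (i : ℕ) : dl C M r a l i ≤ l (C.v (r + 1) i) := by
  have h1 := EP_step (PS_mono C r l) (PS_mono C (r + 1) l) (PS_zero C (r + 1) l) M a i
  rw [PS_succ] at h1
  unfold dl; omega

lemma dl_le2 (r a : ℕ) (l : σ →₀ ℕ) (i : ℕ) :
    dl C M r a l (i + 1) ≤ l (C.v (r + 1) (i + 1)) - l (C.v r i) := by
  have h2 := EE_ge (PS C r l) (PS C (r + 1) l) i
  have h3 := EE_succ (PS C r l) (PS C (r + 1) l) (i + 1)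
  rw [PS_succ C (r + 1) l (i + 1), PS_succ C r l i] at h3
  unfold dl EP; omega

/-- raising -/
noncomputable def raise (r a : ℕ) (l : σ →₀ ℕ) : σ →₀ ℕ :=
  l + ∑ i ∈ Finset.range M, Finsupp.single (C.v r i) (dl C M r a l i) -
    ∑ i ∈ Finset.range M, Finsupp.single (C.v (r + 1) i) (dl C M r a l i)

lemma sum_single_at (p : ℕ) (d : ℕ → ℕ) (i : ℕ) (hi : i < M) :
    (∑ i ∈ Finset.range M, Finsupp.single (C.v p i) (d i)) (C.v p i) = d i := by
  rw [Finsupp.finsetSum_apply, Finset.sum_eq_single i]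
  · simp
  · intro j _ hj
    rw [Finsupp.single_apply, if_neg]
    intro h; exact hj (C.injc p h)
  · intro h; simp [hi] at h

lemma sum_single_off (p : ℕ) (d : ℕ → ℕ) (v : σ) (h : ∀ i < M, v ≠ C.v p i) :
    (∑ i ∈ Finset.range M, Finsupp.single (C.v p i) (d i)) v = 0 := by
  rw [Finsupp.finsetSum_apply]
  refine Finset.sum_eq_zero (fun i hi => ?_)
  rw [Finsupp.single_apply, if_neg]
  exact fun e => h i (Finset.mem_range.1 hi) e.symm

lemma raise_x (r a : ℕ) (l : σ →₀ ℕ) (i : ℕ) (hi : i < M) :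
    raise C M r a l (C.v r i) = l (C.v r i) + dl C M r a l i := by
  rw [raise, Finsupp.tsub_apply, Finsupp.add_apply, sum_single_at C M r _ i hi,
    sum_single_off C M (r + 1) _ _ (fun j _ => C.ne (by omega) _ _)]
  omega

lemma raise_y (r a : ℕ) (l : σ →₀ ℕ) (i : ℕ) (hi : i < M) :
    raise C M r a l (C.v (r + 1) i) = l (C.v (r + 1) i) - dl C M r a l i := by
  rw [raise, Finsupp.tsub_apply, Finsupp.add_apply, sum_single_at C M (r + 1) _ i hi,
    sum_single_off C M r _ _ (fun j _ => C.ne (by omega) _ _)]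
  omega

lemma raise_off (r a : ℕ) (l : σ →₀ ℕ) (v : σ) (h1 : ∀ i < M, v ≠ C.v r i) (h2 : ∀ i < M, v ≠ C.v (r + 1) i) :
    raise C M r a l v = l v := by
  rw [raise, Finsupp.tsub_apply, Finsupp.add_apply, sum_single_off C M _ _ _ h1, sum_single_off C M _ _ _ h2]
  omega

lemma PS_raise_x (r a : ℕ) (l : σ →₀ ℕ) (c : ℕ) (hc : c ≤ M) :
    PS C r (raise C M r a l) c = PS C r l c + EP (PS C r l) (PS C (r + 1) l) M a c := by
  induction c with
  | zero => simp [PS_zero, EP_zero]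
  | succ c ih =>
    rw [PS_succ, ih (by omega), PS_succ, raise_x C M _ _ _ _ (by omega)]
    have := EP_mono (PS C r l) (PS C (r + 1) l) M a (Nat.le_succ c)
    simp only [Nat.succ_eq_add_one] at this
    unfold dl; omega

lemma PS_raise_y (r a : ℕ) (l : σ →₀ ℕ) (c : ℕ) (hc : c ≤ M) :
    PS C (r + 1) (raise C M r a l) c = PS C (r + 1) l c - EP (PS C r l) (PS C (r + 1) l) M a c := by
  induction c with
  | zero => simp [PS_zero]
  | succ c ih =>
    rw [PS_succ, ih (by omega), raise_y C M _ _ _ _ (by omega)]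
    have h1 := EP_mono (PS C r l) (PS C (r + 1) l) M a (Nat.le_succ c)
    have h2 := dl_le C M r a l c
    have h3 := EP_le_B (PS_mono C r l) (PS_mono C (r + 1) l) (PS_zero C (r + 1) l) M a c
    have h4 := EP_le_B (PS_mono C r l) (PS_mono C (r + 1) l) (PS_zero C (r + 1) l) M a (c + 1)
    simp only [Nat.succ_eq_add_one] at h1
    rw [PS_succ C (r + 1) l c] at h4 ⊢
    unfold dl at *; omega

lemma PS_raise_off (r a : ℕ) (l : σ →₀ ℕ) (p : ℕ) (h1 : p ≠ r) (h2 : p ≠ r + 1) (c : ℕ) :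
    PS C p (raise C M r a l) c = PS C p l c := by
  unfold PS
  refine Finset.sum_congr rfl (fun i _ => ?_)
  exact raise_off C M _ _ _ _ (fun j _ => C.ne h1 _ _) (fun j _ => C.ne h2 _ _)

lemma raise_inj (r a a2 : ℕ) (l l2 : σ →₀ ℕ) (h : LowC C M r l) (h2 : LowC C M r l2)
    (ha : a ≤ PS C (r + 1) l M - PS C r l M) (ha2 : a2 ≤ PS C (r + 1) l2 M - PS C r l2 M)
    (e : raise C M r a l = raise C M r a2 l2) : l = l2 := by
  rw [← EE_low (PS_mono C r l) (PS_zero C (r + 1) l) M h] at ha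
  rw [← EE_low (PS_mono C r l2) (PS_zero C (r + 1) l2) M h2] at ha2
  have key := EP_inj (PS_mono C r l) (PS_mono C (r + 1) l) (PS_zero C (r + 1) l)
    (PS_mono C r l2) (PS_mono C (r + 1) l2) (PS_zero C (r + 1) l2) M a a2 h ha h2 ha2
    (fun c hc => by rw [← PS_raise_x C M r a l c hc, ← PS_raise_x C M r a2 l2 c hc, e])
    (fun c hc => by rw [← PS_raise_y C M r a l c hc, ← PS_raise_y C M r a2 l2 c hc, e])
  ext v
  by_cases e1 : ∃ i < M, v = C.v r i
  · obtain ⟨i, hi, rfl⟩ := e1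
    have k1 := (key (i + 1) hi).1
    have k2 := (key i hi.le).1
    rw [PS_succ, PS_succ] at k1
    omega
  · by_cases e2 : ∃ i < M, v = C.v (r + 1) i
    · obtain ⟨i, hi, rfl⟩ := e2
      have k1 := (key (i + 1) hi).2
      have k2 := (key i hi.le).2
      rw [PS_succ, PS_succ] at k1
      omega
    · push Not at e1 e2
      rw [← raise_off C M r a l v e1 e2, e, raise_off C M r a2 l2 v e1 e2]

/-- weights equal on both letters are preserved -/
lemma raise_weight {Γ : Type} [AddCommMonoid Γ] [IsCancelAdd Γ] (u : σ → Γ) (r a : ℕ) (l : σ →₀ ℕ)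
    (h : ∀ i < M, u (C.v r i) = u (C.v (r + 1) i)) :
    Finsupp.weight u (raise C M r a l) = Finsupp.weight u l := by
  have e : raise C M r a l + ∑ i ∈ Finset.range M, Finsupp.single (C.v (r + 1) i) (dl C M r a l i) =
      l + ∑ i ∈ Finset.range M, Finsupp.single (C.v r i) (dl C M r a l i) := by
    rw [raise]
    refine tsub_add_cancel_of_le ?_
    intro v
    by_cases e2 : ∃ i < M, v = C.v (r + 1) i
    · obtain ⟨i, hi, rfl⟩ := e2
      rw [sum_single_at C M (r + 1) _ i hi, Finsupp.add_apply]
      have := dl_le C M r a l i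
      omega
    · push Not at e2
      rw [sum_single_off C M _ _ _ e2]
      exact Nat.zero_le _
  have := congrArg (Finsupp.weight u) e
  rw [map_add, map_add, map_sum, map_sum] at this
  simp only [Finsupp.weight_single] at this
  rw [Finset.sum_congr rfl (fun i hi => by rw [← h i (Finset.mem_range.1 hi)])] at this
  exact add_right_cancel this

/-- the sweep count -/
lemma sweep_card (Λ : Finset (σ →₀ ℕ)) (j z k : ℕ)
    (H4 : ∀ r a l, j ≤ r → r + 1 ≤ z → l ∈ Λ → LowC C M r l → a ≤ PS C (r + 1) l M - PS C r l M →
      raise C M r a l ∈ Λ) (q : ℕ) (hq : j ≤ q) (hqz : q ≤ z) :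
    (Λ.filter (fun l => ST j z k M z (fun p => PS C p l))).card ≤
    (Λ.filter (fun l => ST j z k M q (fun p => PS C p l))).card := by
  obtain ⟨n, hn⟩ := Nat.exists_eq_add_of_le hqz
  induction n generalizing q with
  | zero => rw [hn, add_zero]
  | succ n ih =>
    refine (ih (q + 1) (by omega) (by omega) (by omega)).trans ?_
    have aux : ∀ l, ST j z k M (q + 1) (fun p => PS C p l) → LowC C M q l ∧
        PS C (q + 1) l M - k ≤ PS C (q + 1) l M - PS C q l M := by
      intro l hl
      refine ⟨hl.low q hq (by omega) (by omega), ?_⟩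
      have h2 : PS C (q + 1) l M + PS C j l M = 2 * k ∧ k ≤ PS C (q + 1) l M := hl.c2 (by omega)
      by_cases e : q = j
      · subst e; omega
      · have : PS C q l M = k := hl.c1 q (by omega) (by omega) (by omega)
        omega
    refine Finset.card_le_card_of_injOn (fun l => raise C M q (PS C (q + 1) l M - k) l) ?_ ?_
    · intro l hl
      simp only [Finset.coe_filter, Set.mem_ofPred_eq] at hl ⊢
      obtain ⟨h1, h2⟩ := aux l hl.2
      refine ⟨H4 _ _ _ hq (by omega) hl.1 h1 h2, ?_⟩
      exact ST_step (fun p => PS_mono C p l) (fun p => PS_zero C p l) hq (by omega) hl.2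
        (fun c hc => PS_raise_x C M _ _ _ _ hc) (fun c hc => PS_raise_y C M _ _ _ _ hc)
        (fun p hp1 hp2 c => PS_raise_off C M _ _ _ _ hp1 hp2 c)
    · intro l hl l2 hl2 e
      simp only [Finset.coe_filter, Set.mem_ofPred_eq] at hl hl2
      obtain ⟨h1, h2⟩ := aux l hl.2
      obtain ⟨h3, h4⟩ := aux l2 hl2.2
      exact raise_inj C M _ _ _ _ _ h1 h3 h2 h4 e

/-- commutation: raising in one chart preserves low in the transposed chart -/
lemma low_comm (D : Chart σ) (N m : ℕ) (hN : M = m * N) (hCD : ∀ e p q, p < N → q < N → C.v p (e * N + q) = D.v q (e * N + p))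
    (r a : ℕ) (hr : r + 1 < N) (k : ℕ) (hk : k + 1 < N) (l : σ →₀ ℕ) (h : LowC D M k l) :
    LowC D M k (raise C M r a l) := by
  have key : ∀ k < N, ∀ ρ ≤ M, PS D k (raise C M r a l) ρ = PS D k l ρ +
      (if ρ % N = r + 1 then dl C M r a l (ρ / N * N + k) else 0) := by
    intro k hk ρ hρ
    induction ρ with
    | zero => rw [PS_zero, PS_zero, Nat.zero_mod, if_neg (by omega)]
    | succ ρ ih =>
      rw [PS_succ, ih (by omega), PS_succ]
      have hmod : ρ % N < N := Nat.mod_lt _ (by omega)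
      have hv : D.v k ρ = C.v (ρ % N) (ρ / N * N + k) := by
        rw [hCD _ _ _ hmod hk, Nat.div_add_mod']
      have hlt : ρ / N * N + k < M := by
        have : ρ / N < m := Nat.div_lt_of_lt_mul (by rw [mul_comm]; omega)
        calc ρ / N * N + k < ρ / N * N + N := by omega
          _ = (ρ / N + 1) * N := by ring
          _ ≤ m * N := Nat.mul_le_mul_right _ this
          _ = M := hN.symm
      have hs : (ρ % N + 1 < N ∧ (ρ + 1) % N = ρ % N + 1 ∧ (ρ + 1) / N = ρ / N) ∨
          (ρ % N + 1 = N ∧ (ρ + 1) % N = 0) := by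
        have hdm := Nat.div_add_mod ρ N
        rcases Nat.lt_or_ge (ρ % N + 1) N with h1 | h1
        · left
          have e : ρ + 1 = (ρ % N + 1) + N * (ρ / N) := by omega
          refine ⟨h1, ?_, ?_⟩
          · rw [e, Nat.add_mul_mod_self_left, Nat.mod_eq_of_lt h1]
          · rw [e, Nat.add_mul_div_left _ _ (by omega), Nat.div_eq_of_lt h1, zero_add]
        · right
          have h2 : ρ % N + 1 = N := by omega
          refine ⟨h2, ?_⟩
          have e : ρ + 1 = N * (ρ / N) + N := by omega
          rw [e]
          simp
      rw [hv]
      by_cases e1 : ρ % N = r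
      · rw [e1, raise_x C M _ _ _ _ hlt, if_neg (by omega)]
        rcases hs with ⟨_, h2, h3⟩ | ⟨h2, _⟩
        · rw [if_pos (by omega), h3]; omega
        · omega
      · by_cases e2 : ρ % N = r + 1
        · rw [e2, raise_y C M _ _ _ _ hlt, if_pos rfl, if_neg (by omega)]
          have := dl_le C M r a l (ρ / N * N + k)
          omega
        · rw [raise_off C M _ _ _ _ (fun i _ => C.ne e1 _ _) (fun i _ => C.ne e2 _ _), if_neg e2, if_neg (by omega)]
          omega
  intro ρ hρ
  have hMm : M % N = 0 := by rw [hN]; simp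
  rw [key k (by omega) M le_rfl, key k (by omega) ρ hρ.le, key (k + 1) hk M le_rfl, key (k + 1) hk (ρ + 1) hρ,
    if_neg (show ¬ M % N = r + 1 by omega), if_neg (show ¬ M % N = r + 1 by omega)]
  have h1 := h ρ hρ
  by_cases e : (ρ + 1) % N = r + 1
  · rw [if_pos e]
    have hlt : ρ + 1 < M := by
      rcases Nat.lt_or_ge (ρ + 1) M with h | h
      · exact h
      · exfalso
        have : ρ + 1 = M := by omega
        rw [this] at e; omega
    have h2 := h (ρ + 1) hlt
    have hdm := Nat.div_add_mod' (ρ + 1) N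
    have h3 := dl_le2 C M r a l ((ρ + 1) / N * N + k)
    have v1 : C.v (r + 1) ((ρ + 1) / N * N + k + 1) = D.v (k + 1) (ρ + 1) := by
      rw [add_assoc, hCD _ _ _ hr hk, ← e, hdm]
    have v2 : C.v r ((ρ + 1) / N * N + k) = D.v k ρ := by
      rw [hCD _ _ _ (by omega) (by omega)]
      congr 1; omega
    rw [v1, v2] at h3
    rw [PS_succ D (k + 1) l (ρ + 1), PS_succ D k l ρ] at h2
    rw [add_assoc] at h3
    omega
  · rw [if_neg e]; omega

end
end QH

set_option linter.unusedSectionVars false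
set_option linter.unusedSimpArgs false
namespace QH
open Classical

section
variable {σ : Type} [LinearOrder σ] (K : Type) [Field K] (C : Chart σ) (M : ℕ)

/-- row operation -/
noncomputable abbrev sg (p q : ℕ) : MvPolynomial σ K →ₐ[K] MvPolynomial σ K :=
  sgs K (C.v p) (C.v q) (Finset.range M)

/-- content weight -/
noncomputable abbrev ct (p : ℕ) : σ → ℕ := ctw (C.v p) (Finset.range M)

lemma weight_ct (p : ℕ) (μ : σ →₀ ℕ) : Finsupp.weight (ct C M p) μ = PS C p μ M := weight_ctw _ _ _

lemma ct_var (p s c : ℕ) (hc : c < M) : ct C M p (C.v s c) = if s = p then 1 else 0 := by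
  split_ifs with h
  · subst h; rw [ct, ctw_self (C.injc _), if_pos (Finset.mem_range.2 hc)]
  · rw [ct, ctw_ne]; exact fun i _ => C.ne h _ _

lemma sg_var (p q s c : ℕ) (hc : c < M) :
    sg K C M p q (X (C.v s c)) = X (C.v s c) + if s = p then X (C.v q c) else 0 := by
  split_ifs with h
  · subst h; rw [sg, sgs_Xx (C.injc _)]; exact Finset.mem_range.2 hc
  · rw [sg, sgs_Xne, add_zero]; exact fun i _ => C.ne h _ _

lemma sg_other (p q : ℕ) (v : σ) (h : ∀ s, ∀ c < M, v ≠ C.v s c) : sg K C M p q (X v) = X v := by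
  rw [sg, sgs_Xne]; exact fun i hi => h _ i (Finset.mem_range.1 hi)

variable {K}

lemma hom_ext (φ ψ : MvPolynomial σ K →ₐ[K] MvPolynomial σ K)
    (h1 : ∀ s, ∀ c < M, φ (X (C.v s c)) = ψ (X (C.v s c)))
    (h2 : ∀ v, (∀ s, ∀ c < M, v ≠ C.v s c) → φ (X v) = ψ (X v)) (f : MvPolynomial σ K) : φ f = ψ f := by
  congr 1
  apply MvPolynomial.algHom_ext
  intro v
  by_cases h : ∀ s, ∀ c < M, v ≠ C.v s c
  · exact h2 v h
  · push Not at h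
    obtain ⟨s, c, hc, rfl⟩ := h
    exact h1 s c hc

lemma sg_comm (a b c d : ℕ) (h1 : b ≠ c) (h2 : a ≠ d) (f : MvPolynomial σ K) :
    sg K C M a b (sg K C M c d f) = sg K C M c d (sg K C M a b f) := by
  rw [← AlgHom.comp_apply, ← AlgHom.comp_apply]
  refine hom_ext C M _ _ (fun s i hi => ?_) (fun v hv => ?_) f
  · rw [AlgHom.comp_apply, AlgHom.comp_apply, sg_var K C M _ _ _ _ hi, sg_var K C M _ _ _ _ hi, map_add, map_add,
      sg_var K C M _ _ _ _ hi, sg_var K C M _ _ _ _ hi]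
    have e1 : sg K C M a b (if s = c then X (C.v d i) else 0) = if s = c then X (C.v d i) else 0 := by
      split_ifs
      · rw [sg_var K C M _ _ _ _ hi, if_neg (Ne.symm h2), add_zero]
      · rw [map_zero]
    have e2 : sg K C M c d (if s = a then X (C.v b i) else 0) = if s = a then X (C.v b i) else 0 := by
      split_ifs
      · rw [sg_var K C M _ _ _ _ hi, if_neg h1, add_zero]
      · rw [map_zero]
    rw [e1, e2]; ring
  · rw [AlgHom.comp_apply, AlgHom.comp_apply]
    simp only [sg_other K C M _ _ v hv]

lemma sg_ident (j z i : ℕ) (h1 : i ≠ z) (h2 : i ≠ j) (h3 : j ≠ z) (f : MvPolynomial σ K) :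
    sg K C M z i (sg K C M j z f) = sg K C M j z (sg K C M j i (sg K C M z i f)) := by
  rw [← AlgHom.comp_apply, ← AlgHom.comp_apply, ← AlgHom.comp_apply]
  refine hom_ext C M _ _ (fun s c hc => ?_) (fun v hv => ?_) f
  · simp only [AlgHom.comp_apply]
    by_cases e1 : s = j
    · subst e1
      simp only [sg_var K C M _ _ _ _ hc, if_true, map_add, if_neg h3, if_neg h1, if_neg h2, if_neg h3.symm, add_zero]
      ring
    · by_cases e2 : s = z
      · subst e2
        simp only [sg_var K C M _ _ _ _ hc, if_true, map_add, if_neg e1, if_neg h2, add_zero]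
      · simp only [sg_var K C M _ _ _ _ hc, map_add, if_neg e1, if_neg e2, add_zero]
  · simp only [AlgHom.comp_apply, sg_other K C M _ _ v hv]

/-- top component is invariant: the rank one case -/
lemma top_inv [Infinite K] (j z : ℕ) (hjz : j ≠ z) (f : MvPolynomial σ K) (k n : ℕ)
    (hz : IsWeightedHomogeneous (ct C M z) f k)
    (hn : WLt (ct C M z) (sg K C M j z f) (n + 1)) (hkn : k ≤ n) :
    sg K C M j z (weightedHomogeneousComponent (ct C M z) n (sg K C M j z f)) =
      weightedHomogeneousComponent (ct C M z) n (sg K C M j z f) := by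
  set F := sg K C M j z f with hF
  -- the polynomial
  let Q : (σ → K) → Polynomial K := fun w => aeval (fun v => Polynomial.X ^ (ct C M z v) * Polynomial.C (w v)) F
  let P : (σ → K) → Polynomial K := fun w => aeval (th3 (C.v z) (C.v j) (Finset.range M) w) f
  have hQcoeff : ∀ w m, (Q w).coeff m = eval w (weightedHomogeneousComponent (ct C M z) m F) := by
    intro w m
    have : ∀ G : MvPolynomial σ K, (aeval (fun v => Polynomial.X ^ (ct C M z v) * Polynomial.C (w v)) G : Polynomial K).coeff m
        = eval w (weightedHomogeneousComponent (ct C M z) m G) := by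
      intro G
      induction G using MvPolynomial.induction_on' with
      | add p q hp hq => rw [map_add, Polynomial.coeff_add, hp, hq, map_add, map_add]
      | monomial ν a =>
        have h1 : IsWeightedHomogeneous (ct C M z) (monomial ν a) (Finsupp.weight (ct C M z) ν) :=
          isWeightedHomogeneous_monomial _ _ _ rfl
        rw [aeval_scale _ _ _ h1]
        have h2 : aeval (fun v => Polynomial.C (w v)) (monomial ν a) = Polynomial.C (eval w (monomial ν a)) := by
          rw [aeval_monomial, eval_monomial, map_mul, Finsupp.prod, Finsupp.prod, map_prod]
          simp only [map_pow]
          rfl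
        rw [h2, Polynomial.coeff_X_pow_mul', Polynomial.coeff_C]
        by_cases e : m = Finsupp.weight (ct C M z) ν
        · subst e
          rw [if_pos le_rfl, if_pos (by omega), h1.weightedHomogeneousComponent_same]
        · rw [h1.weightedHomogeneousComponent_ne _ e, map_zero]
          split_ifs with e1 e2
          · omega
          · rfl
          · rfl
    exact this F
  have hQP : ∀ w, Q w = Polynomial.X ^ k * P w := by
    intro w
    change aeval _ (sg K C M j z f) = _ * aeval _ f
    rw [← aeval_scale _ _ _ hz, sg, sgs, ← AlgHom.comp_apply, comp_aeval]
    congr 2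
    funext v
    rw [map_add, map_sum, aeval_X, th3, mul_add]
    congr 1
    rw [Finset.mul_sum, Finset.mul_sum]
    refine Finset.sum_congr rfl (fun c hc => ?_)
    rw [Finset.mem_range] at hc
    split_ifs with e
    · rw [aeval_X, ct_var C M z z c hc, if_pos rfl, e, ct_var C M z j c hc, if_neg hjz]
      ring
    · simp
  have hdeg : ∀ w, (P w).natDegree ≤ n - k := by
    intro w
    rw [Polynomial.natDegree_le_iff_coeff_eq_zero]
    intro m hm
    have h1 := hQcoeff w (m + k)
    rw [hQP, mul_comm, Polynomial.coeff_mul_X_pow, whc_of_WLt hn (by omega), map_zero] at h1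
    exact h1
  have htop : ∀ w, (P w).coeff (n - k) = eval w (weightedHomogeneousComponent (ct C M z) n F) := by
    intro w
    have h1 := hQcoeff w (n - k + k)
    rw [hQP, mul_comm, Polynomial.coeff_mul_X_pow, Nat.sub_add_cancel hkn] at h1
    exact h1
  apply MvPolynomial.funext
  intro w
  rw [sg, eval_sgs, ← htop, ← htop]
  set w2 : σ → K := fun v => w v + ∑ c ∈ Finset.range M, if v = C.v j c then w (C.v z c) else 0 with hw2
  have hw2z : ∀ c, w2 (C.v z c) = w (C.v z c) := by
    intro c
    rw [hw2]
    simp only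
    rw [Finset.sum_eq_zero, add_zero]
    intro i _
    rw [if_neg (C.ne hjz.symm _ _)]
  have hcomp : P w2 = Polynomial.taylor 1 (P w) := by
    apply Polynomial.funext
    intro t
    rw [Polynomial.taylor_eval, th3_eval, th3_eval]
    congr 1
    congr 1
    funext v
    simp only [hw2z]
    rw [hw2]
    simp only
    ring_nf
  suffices h : (P w2).coeff (n - k) = (P w).coeff (n - k) by
    rw [← h]; congr!
  rw [hcomp]
  rcases Nat.lt_or_ge (P w).natDegree (n - k) with h | h
  · rw [Polynomial.coeff_eq_zero_of_natDegree_lt h, Polynomial.coeff_eq_zero_of_natDegree_lt]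
    rwa [Polynomial.natDegree_taylor]
  · have e : n - k = (P w).natDegree := le_antisymm h (hdeg w)
    rw [e, Polynomial.coeff_taylor_natDegree]
    rfl

end
end QH

set_option linter.unusedSectionVars false
set_option linter.unusedSimpArgs false
namespace QH
open Classical

section
variable {σ : Type} [LinearOrder σ] {K : Type} [Field K] (C : Chart σ) (M : ℕ)

lemma weight_add2 {Γ : Type} [AddCommMonoid Γ] (u1 u2 : σ → Γ) (μ : σ →₀ ℕ) :
    Finsupp.weight (fun v => u1 v + u2 v) μ = Finsupp.weight u1 μ + Finsupp.weight u2 μ := by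
  rw [Finsupp.weight_apply, Finsupp.weight_apply, Finsupp.weight_apply, Finsupp.sum, Finsupp.sum, Finsupp.sum,
    ← Finset.sum_add_distrib]
  exact Finset.sum_congr rfl (fun i _ => smul_add _ _ _)

/-- truncated invariants -/
def TT (W : Submodule K (MvPolynomial σ K)) (lo hi k j : ℕ) : Submodule K (MvPolynomial σ K) where
  carrier := {f | f ∈ W ∧ (∀ p, lo ≤ p → p < hi → IsWeightedHomogeneous (ct C M p) f k) ∧
    ∀ p q, j ≤ p → p < hi → j ≤ q → q < hi → p ≠ q → sg K C M p q f = f}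
  add_mem' := by
    rintro f g ⟨h1, h2, h3⟩ ⟨h4, h5, h6⟩
    refine ⟨W.add_mem h1 h4, fun p a b => (h2 p a b).add (h5 p a b), fun p q a b c d e => ?_⟩
    rw [map_add, h3 p q a b c d e, h6 p q a b c d e]
  zero_mem' := ⟨W.zero_mem, fun p a b => isWeightedHomogeneous_zero _ _ _, fun p q a b c d e => map_zero _⟩
  smul_mem' := by
    rintro t f ⟨h1, h2, h3⟩
    refine ⟨W.smul_mem _ h1, fun p a b => ?_, fun p q a b c d e => ?_⟩
    · exact (weightedHomogeneousSubmodule K (ct C M p) k).smul_mem t (h2 p a b)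
    · rw [map_smul, h3 p q a b c d e]

lemma mem_TT (W : Submodule K (MvPolynomial σ K)) (lo hi k j : ℕ) (f : MvPolynomial σ K) :
    f ∈ TT C M W lo hi k j ↔ f ∈ W ∧ (∀ p, lo ≤ p → p < hi → IsWeightedHomogeneous (ct C M p) f k) ∧
    ∀ p q, j ≤ p → p < hi → j ≤ q → q < hi → p ≠ q → sg K C M p q f = f := Iff.rfl

/-- truncated low monomials -/
noncomputable def LB (Λ : Finset (σ →₀ ℕ)) (lo hi k j : ℕ) : Finset (σ →₀ ℕ) :=
  Λ.filter (fun l => (∀ p, lo ≤ p → p < hi → PS C p l M = k) ∧ ∀ r, j ≤ r → r + 1 < hi → LowC C M r l)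

lemma low_of_lead [Infinite K] (r : ℕ) (f : MvPolynomial σ K) (A : ℕ) (l : σ →₀ ℕ)
    (hf : sg K C M r (r + 1) f = f) (hA : IsWeightedHomogeneous (ct C M r) f A) (hl : IsLead f l) :
    LowC C M r l :=
  lt_low (fun c d h => C.mono r c d h) (C.injc _) (C.ne (by omega)) (fun i j h => C.mono2 _ _ _ _ (by omega) h) M l f A hf hA hl

lemma ker_step [Infinite K] (W : Submodule K (MvPolynomial σ K)) (Λ : Finset (σ →₀ ℕ)) (lo k j z : ℕ)
    (H1 : ∀ p q, lo ≤ p → p < z + 1 → lo ≤ q → q < z + 1 → p ≠ q → ∀ f ∈ W, sg K C M p q f ∈ W)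
    (H2 : ∀ p m, lo ≤ p → p < z + 1 → ∀ f ∈ W, weightedHomogeneousComponent (ct C M p) m f ∈ W)
    (H3 : ∀ f ∈ W, ∀ l, IsLead f l → l ∈ Λ) (hlj : lo ≤ j) (hjz : j < z)
    (f : MvPolynomial σ K) (hf : f ∈ TT C M W lo (z + 1) k (j + 1))
    (hc : ∀ l ∈ Λ, (∀ p, lo ≤ p → p < j → PS C p l M = k) → ST j z k M z (fun p => PS C p l) →
      k < PS C z l M → coeff l (sg K C M j z f) = 0) :
    f ∈ TT C M W lo (z + 1) k j := by
  obtain ⟨hW, hct, hinv⟩ := hf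
  generalize hF : sg K C M j z f = F at hc
  have cj := hct j hlj (by omega)
  have cz := hct z (by omega) (by omega)
  have homsame : ∀ p q s : ℕ, (s = p ↔ s = q) → ∀ v, IsWeightedHomogeneous (ct C M s) (sg K C M p q (X v)) (ct C M s v) := by
    intro p q s h v
    refine sgs_wh _ _ (fun c hc => ?_) v
    rw [Finset.mem_range] at hc
    rw [ct_var C M _ _ _ hc, ct_var C M _ _ _ hc]
    simp only [eq_comm (a := p), eq_comm (a := q), h]
  have homsum : ∀ p q : ℕ, p ≠ q → ∀ v, IsWeightedHomogeneous (fun v => ct C M p v + ct C M q v) (sg K C M p q (X v))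
      (ct C M p v + ct C M q v) := by
    intro p q hpq v
    refine sgs_wh _ (fun v => ct C M p v + ct C M q v) (fun c hc => ?_) v
    rw [Finset.mem_range] at hc
    rw [ct_var C M _ _ _ hc, ct_var C M _ _ _ hc, ct_var C M _ _ _ hc, ct_var C M _ _ _ hc, if_pos rfl, if_pos rfl,
      if_neg hpq, if_neg hpq.symm]
  have homtop : ∀ p q : ℕ, p ≠ q → ∀ v, WLt (ct C M p) (sg K C M p q (X v) - X v) (ct C M p v) := by
    intro p q hpq v
    refine sgs_top _ _ (fun c hc => ?_) v
    rw [Finset.mem_range] at hc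
    rw [ct_var C M _ _ _ hc, ct_var C M _ _ _ hc, if_pos rfl, if_neg hpq.symm]
    omega
  have hFp : ∀ p, lo ≤ p → p < z + 1 → p ≠ j → p ≠ z → IsWeightedHomogeneous (ct C M p) F k := by
    intro p h1 h2 h3 h4
    rw [← hF]
    exact whc_idem_hom _ _ (homsame j z p (by omega)) _ _ (hct p h1 h2)
  have hFs : ∀ μ, coeff μ F ≠ 0 → Finsupp.weight (ct C M j) μ + Finsupp.weight (ct C M z) μ = 2 * k := by
    intro μ hμ
    rw [← weight_add2]
    have : IsWeightedHomogeneous (fun v => ct C M j v + ct C M z v) F (2 * k) := by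
      rw [← hF]
      refine whc_idem_hom _ _ (homsum j z (by omega)) _ _ ?_
      intro ν hν
      rw [weight_add2, cj hν, cz hν]; omega
    exact this hμ
  have hji : ∀ i, j < i → i < z → sg K C M j i F = sg K C M z i F := by
    intro i h1 h2
    rw [← hF, sg_ident C M j z i (by omega) (by omega) (by omega), hinv z i (by omega) (by omega) (by omega) (by omega) (by omega),
      sg_comm C M j z j i (by omega) (by omega)]
  have hFf : F = f := by
    by_contra hne
    have hlt : WLt (ct C M j) (F - f) k := by
      rw [← hF]
      exact top_lt _ _ (homtop j z (by omega)) f k (WLt.of_wh cj (by omega))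
    obtain ⟨μ0, hμ0⟩ := MvPolynomial.ne_zero_iff.1 (sub_ne_zero.2 hne)
    have h0 := hlt μ0 hμ0
    have hF0 : coeff μ0 F ≠ 0 := by
      intro h
      rw [coeff_sub, h, zero_sub, neg_ne_zero] at hμ0
      have := cj hμ0
      omega
    obtain ⟨μ1, hm1, hmax⟩ := Finset.exists_max_image F.support (fun μ => Finsupp.weight (ct C M z) μ)
      ⟨μ0, mem_support_iff.2 hF0⟩
    generalize hn1 : Finsupp.weight (ct C M z) μ1 = n at hmax
    have hkn : k < n := by
      have e1 := hFs μ0 hF0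
      have e2 := hmax μ0 (mem_support_iff.2 hF0)
      omega
    have hWn : WLt (ct C M z) F (n + 1) := fun μ hμ => by
      have := hmax μ (mem_support_iff.2 hμ); omega
    generalize hg : weightedHomogeneousComponent (ct C M z) n F = g
    have hg0 : g ≠ 0 := by
      intro h
      have e : coeff μ1 g = coeff μ1 F := by
        rw [← hg, coeff_weightedHomogeneousComponent, if_pos hn1]
      rw [h, coeff_zero] at e
      exact mem_support_iff.1 hm1 e.symm
    have hgW : g ∈ W := by
      rw [← hg, ← hF]
      exact H2 z n (by omega) (by omega) _ (H1 j z hlj (by omega) (by omega) (by omega) (by omega) _ hW)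
    have hgc : ∀ μ, coeff μ g ≠ 0 → coeff μ F ≠ 0 ∧ Finsupp.weight (ct C M z) μ = n := by
      intro μ hμ
      rw [← hg] at hμ
      exact coeff_whc_ne hμ
    have hgj : IsWeightedHomogeneous (ct C M j) g (2 * k - n) := by
      intro μ hμ
      have e1 := hgc μ hμ
      have e2 := hFs μ e1.1
      omega
    have hgp : ∀ p, lo ≤ p → p < z + 1 → p ≠ j → p ≠ z → IsWeightedHomogeneous (ct C M p) g k :=
      fun p h1 h2 h3 h4 μ hμ => hFp p h1 h2 h3 h4 (hgc μ hμ).1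
    have hgi : ∀ r, j ≤ r → r < z → sg K C M r (r + 1) g = g := by
      intro r h1 h2
      rcases Nat.eq_or_lt_of_le h1 with h3 | h3
      · subst h3
        rcases Nat.eq_or_lt_of_le (show j + 1 ≤ z by omega) with h4 | h4
        · subst h4
          rw [← hg, ← hF]
          rw [← hF] at hWn
          exact top_inv C M j (j + 1) (by omega) f k n cz hWn (by omega)
        · have e1 := hji (j + 1) (by omega) h4
          have e2 := top_whc _ _ (homtop z (j + 1) (by omega)) F n hWn
          rw [← e1, whc_comm _ _ (homsame j (j + 1) z (by omega)), hg] at e2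
          exact e2
      · have e1 : sg K C M r (r + 1) F = F := by
          rw [← hF, sg_comm C M r (r + 1) j z (by omega) (by omega),
            hinv r (r + 1) (by omega) (by omega) (by omega) (by omega) (by omega)]
        rcases Nat.eq_or_lt_of_le (show r + 1 ≤ z by omega) with h4 | h4
        · have e2 : weightedHomogeneousComponent (fun v => ct C M r v + ct C M (r + 1) v) (k + n) F = g := by
            rw [← hg]
            ext μ
            rw [coeff_weightedHomogeneousComponent, coeff_weightedHomogeneousComponent]
            by_cases h5 : coeff μ F = 0
            · rw [h5, ite_self, ite_self]
            · rw [weight_add2, hFp r (by omega) (by omega) (by omega) (by omega) h5, h4]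
              congr 1
              rw [eq_iff_iff]; omega
          rw [← e2, ← whc_comm _ _ (homsum r (r + 1) (by omega)), e1]
        · rw [← hg, ← whc_comm _ _ (homsame r (r + 1) z (by omega)), e1]
    obtain ⟨l, hl⟩ := exists_lead g hg0
    have hlc := hgc l hl.1
    refine hlc.1 (hc l (H3 g hgW l hl) ?_ ?_ ?_)
    · intro p h1 h2
      rw [← weight_ct]
      exact hFp p h1 (by omega) (by omega) (by omega) hlc.1
    · refine ⟨?_, ?_, ?_, ?_, ?_, ?_⟩
      · intro p h1 h2 h3
        rw [← weight_ct]
        exact hFp p (by omega) (by omega) (by omega) (by omega) hlc.1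
      · intro _
        rw [← weight_ct, ← weight_ct]
        have := hFs l hlc.1
        omega
      · intro h; omega
      · intro r h1 h2 h3
        rcases Nat.eq_or_lt_of_le h1 with h4 | h4
        · subst h4
          exact low_of_lead C M j g _ l (hgi j le_rfl h2) hgj hl
        · exact low_of_lead C M r g _ l (hgi r h1 h2) (hgp r (by omega) (by omega) (by omega) (by omega)) hl
      · intro h1 h2; omega
      · intro h1 h2; omega
    · rw [← weight_ct]; omega
  rw [hFf] at hji hF
  have hjq : ∀ q, j < q → q < z + 1 → sg K C M j q f = f := by
    intro q h1 h2
    rcases Nat.eq_or_lt_of_le (show q ≤ z by omega) with h4 | h4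
    · rw [h4]; exact hF
    · rw [hji q h1 h4]
      exact hinv z q (by omega) (by omega) (by omega) (by omega) (by omega)
  refine ⟨hW, hct, fun p q h1 h2 h3 h4 h5 => ?_⟩
  rcases Nat.eq_or_lt_of_le h1 with h6 | h6
  · subst h6; exact hjq q (by omega) h4
  · rcases Nat.eq_or_lt_of_le h3 with h7 | h7
    · subst h7
      exact sl2_inv (C.injc _) (C.injc _) (C.ne (by omega)) _ f k (hjq p h6 h2) cj (hct p (by omega) h2)
    · exact hinv p q h6 h2 h7 h4 h5

lemma block_step [Infinite K] (W : Submodule K (MvPolynomial σ K)) (Λ : Finset (σ →₀ ℕ)) (lo k j z : ℕ)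
    (H1 : ∀ p q, lo ≤ p → p < z + 1 → lo ≤ q → q < z + 1 → p ≠ q → ∀ f ∈ W, sg K C M p q f ∈ W)
    (H2 : ∀ p m, lo ≤ p → p < z + 1 → ∀ f ∈ W, weightedHomogeneousComponent (ct C M p) m f ∈ W)
    (H3 : ∀ f ∈ W, ∀ l, IsLead f l → l ∈ Λ)
    (H4 : ∀ r a l, lo ≤ r → r + 1 < z + 1 → l ∈ Λ → LowC C M r l → a ≤ PS C (r + 1) l M - PS C r l M →
      raise C M r a l ∈ Λ) (hlj : lo ≤ j) (hjz : j < z)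
    (hb : (LB C M Λ lo (z + 1) k (j + 1)).card ≤ Module.finrank K (TT C M W lo (z + 1) k (j + 1))) :
    (LB C M Λ lo (z + 1) k j).card ≤ Module.finrank K (TT C M W lo (z + 1) k j) := by
  have hfd : ∀ i, FiniteDimensional K (TT C M W lo (z + 1) k i) := fun i =>
    (finrank_le_of_lead _ Λ (fun f hf hf0 => by
      obtain ⟨l, hl⟩ := exists_lead f hf0
      exact ⟨l, H3 f hf.1 l hl, hl.1⟩)).1
  have := hfd j
  have := hfd (j + 1)
  let Λ0 := Λ.filter (fun l => ∀ p, lo ≤ p → p < j → PS C p l M = k)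
  have h0 := sweep_card C M Λ0 j z k (fun r a l h1 h2 h3 h4 h5 => by
    rw [Finset.mem_filter] at h3 ⊢
    refine ⟨H4 r a l (by omega) (by omega) h3.1 h4 h5, fun p h6 h7 => ?_⟩
    rw [PS_raise_off C M r a l p (by omega) (by omega)]
    exact h3.2 p h6 h7) j le_rfl (by omega)
  let L0 := Λ0.filter (fun l => ST j z k M z (fun p => PS C p l))
  have h1 : (Λ0.filter (fun l => ST j z k M j (fun p => PS C p l))) ⊆ LB C M Λ lo (z + 1) k (j + 1) := by
    intro l hl
    simp only [Λ0, LB, Finset.mem_filter] at hl ⊢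
    obtain ⟨⟨hl1, hl2⟩, hst⟩ := hl
    refine ⟨hl1, fun p h3 h4 => ?_, fun r h3 h4 => hst.low r (by omega) (by omega) (by omega)⟩
    rcases lt_trichotomy p j with h5 | h5 | h5
    · exact hl2 p h3 h5
    · rw [h5]; exact hst.c3 rfl
    · exact hst.c1 p h5 (by omega) (by omega)
  have h2 : LB C M Λ lo (z + 1) k j ⊆ L0 := by
    intro l hl
    simp only [L0, Λ0, LB, Finset.mem_filter] at hl ⊢
    obtain ⟨hl1, hl2, hl3⟩ := hl
    refine ⟨⟨hl1, fun p h3 h4 => hl2 p h3 (by omega)⟩, ?_, ?_, ?_, ?_, ?_, ?_⟩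
    · intro p h3 h4 _; exact hl2 p (by omega) (by omega)
    · intro _; rw [hl2 z (by omega) (by omega), hl2 j (by omega) (by omega)]; omega
    · intro h; omega
    · intro r h3 h4 _; exact hl3 r h3 (by omega)
    · intro h3 h4; omega
    · intro h3 h4; omega
  let S := L0 \ LB C M Λ lo (z + 1) k j
  have hS : S.card + (LB C M Λ lo (z + 1) k j).card = L0.card := Finset.card_sdiff_add_card_eq_card h2
  have h3 : L0.card ≤ Module.finrank K (TT C M W lo (z + 1) k (j + 1)) := h0.trans ((Finset.card_le_card h1).trans hb)
  let T : TT C M W lo (z + 1) k (j + 1) →ₗ[K] (S → K) :=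
    LinearMap.pi (fun l => ((lcoeff K (l : σ →₀ ℕ)).comp (sg K C M j z).toLinearMap).comp (Submodule.subtype _))
  have hr := LinearMap.finrank_range_add_finrank_ker T
  have hr1 : Module.finrank K (LinearMap.range T) ≤ S.card := by
    have := Submodule.finrank_le (LinearMap.range T)
    rwa [Module.finrank_fintype_fun_eq_card, Fintype.card_coe] at this
  have hr2 : Module.finrank K (LinearMap.ker T) ≤ Module.finrank K (TT C M W lo (z + 1) k j) := by
    have hk : ∀ f ∈ LinearMap.ker T, ((Submodule.subtype _) f) ∈ TT C M W lo (z + 1) k j := by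
      intro f hf
      refine ker_step C M W Λ lo k j z H1 H2 H3 hlj hjz f f.2 (fun l hl h4 h5 h6 => ?_)
      have hlS : l ∈ S := by
        simp only [S, L0, Λ0, Finset.mem_sdiff, Finset.mem_filter, LB]
        refine ⟨⟨⟨hl, h4⟩, h5⟩, ?_⟩
        rintro ⟨_, h7, _⟩
        have := h7 z (by omega) (by omega)
        omega
      have := congrFun (LinearMap.mem_ker.1 hf) ⟨l, hlS⟩
      exact this
    refine LinearMap.finrank_le_finrank_of_injective
      (f := ((Submodule.subtype _).comp (Submodule.subtype (LinearMap.ker T))).codRestrict (TT C M W lo (z + 1) k j) (fun x => hk x.1 x.2)) ?_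
    intro x y hxy
    have h9 := congrArg (fun t : TT C M W lo (z + 1) k j => (t : MvPolynomial σ K)) hxy
    exact Subtype.ext (Subtype.ext h9)
  omega

theorem one_block [Infinite K] (W : Submodule K (MvPolynomial σ K)) (Λ : Finset (σ →₀ ℕ)) (lo hi k : ℕ) (hlh : lo ≤ hi)
    (H1 : ∀ p q, lo ≤ p → p < hi → lo ≤ q → q < hi → p ≠ q → ∀ f ∈ W, sg K C M p q f ∈ W)
    (H2 : ∀ p m, lo ≤ p → p < hi → ∀ f ∈ W, weightedHomogeneousComponent (ct C M p) m f ∈ W)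
    (H3 : ∀ f ∈ W, ∀ l, IsLead f l → l ∈ Λ)
    (H4 : ∀ r a l, lo ≤ r → r + 1 < hi → l ∈ Λ → LowC C M r l → a ≤ PS C (r + 1) l M - PS C r l M →
      raise C M r a l ∈ Λ)
    (hb : (LB C M Λ lo hi k hi).card ≤ Module.finrank K (TT C M W lo hi k hi)) :
    (LB C M Λ lo hi k lo).card ≤ Module.finrank K (TT C M W lo hi k lo) := by
  rcases Nat.eq_or_lt_of_le hlh with h | h
  · subst h; exact hb
  · obtain ⟨z, rfl⟩ : ∃ z, hi = z + 1 := ⟨hi - 1, by omega⟩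
    have e1 : TT C M W lo (z + 1) k z = TT C M W lo (z + 1) k (z + 1) := by
      ext f
      rw [mem_TT, mem_TT]
      refine and_congr_right (fun _ => and_congr_right (fun _ => ⟨fun _ p q _ _ _ _ _ => by omega, fun _ p q _ _ _ _ _ => by omega⟩))
    have e2 : LB C M Λ lo (z + 1) k z = LB C M Λ lo (z + 1) k (z + 1) := by
      unfold LB
      refine Finset.filter_congr (fun l _ => and_congr_right (fun _ => ⟨fun _ r _ _ => by omega, fun _ r _ _ => by omega⟩))
    rw [← e1, ← e2] at hb
    have key : ∀ n, ∀ j, lo ≤ j → j + n = z →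
        (LB C M Λ lo (z + 1) k j).card ≤ Module.finrank K (TT C M W lo (z + 1) k j) := by
      intro n
      induction n with
      | zero => intro j _ h2; rw [add_zero] at h2; rw [h2]; exact hb
      | succ n ih =>
        intro j h1 h2
        exact block_step C M W Λ lo k j z H1 H2 H3 H4 h1 (by omega) (ih (j + 1) (by omega) (by omega))
    exact key (z - lo) lo le_rfl (by omega)

end
end QH

set_option linter.unusedSectionVars false
set_option linter.unusedSimpArgs false
namespace QH
open Classical

/-- variables -/
abbrev VV : Type := ℕ ×ₗ (ℕ ×ₗ ℕ)

/-- the variable (arrow, row, column) -/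
def vx (e r c : ℕ) : VV := toLex (e, toLex (r, c))

lemma vx_inj {e r c e' r' c' : ℕ} : vx e r c = vx e' r' c' ↔ e = e' ∧ r = r' ∧ c = c' := by
  simp [vx]

lemma vx_surj (v : VV) : ∃ e r c, v = vx e r c := ⟨(ofLex v).1, (ofLex (ofLex v).2).1, (ofLex (ofLex v).2).2, rfl⟩

lemma vx_lt {e r c e' r' c' : ℕ} : vx e r c < vx e' r' c' ↔ e < e' ∨ e = e' ∧ (r < r' ∨ r = r' ∧ c < c') := by
  unfold vx
  rw [Prod.Lex.toLex_lt_toLex]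
  simp only [Prod.Lex.toLex_lt_toLex]

lemma dm_lt (N c d : ℕ) (h : c < d) : c / N < d / N ∨ c / N = d / N ∧ c % N < d % N := by
  have h1 := Nat.div_le_div_right (c := N) h.le
  rcases Nat.eq_or_lt_of_le h1 with h2 | h2
  · right
    refine ⟨h2, ?_⟩
    have a := Nat.div_add_mod c N
    have b := Nat.div_add_mod d N
    rw [h2] at a
    omega
  · left; exact h2

lemma dm_inj (N c d : ℕ) (h : c / N = d / N) (h' : c % N = d % N) : c = d := by
  rw [← Nat.div_add_mod c N, ← Nat.div_add_mod d N, h, h']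

/-- row and column charts -/
def Ch (N : ℕ) (s : Bool) : Chart VV where
  v p c := if s then vx (c / N) p (c % N) else vx (c / N) (c % N) p
  inj p c q d h := by
    cases s
    · simp [vx_inj] at h
      exact ⟨h.2.2, dm_inj N _ _ h.1 h.2.1⟩
    · simp [vx_inj] at h
      exact ⟨h.2.1, dm_inj N _ _ h.1 h.2.2⟩
  mono p c d h := by
    have := dm_lt N c d h
    cases s
    · simp [vx_lt]; omega
    · simp [vx_lt]; omega
  mono2 p q c d hpq h := by
    have : c = d ∨ c < d := by omega
    rcases this with rfl | h
    · cases s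
      · simp [vx_lt]; omega
      · simp [vx_lt]; omega
    · have := dm_lt N c d h
      cases s
      · simp [vx_lt]; omega
      · simp [vx_lt]; omega

lemma Ch_cross (N : ℕ) (s : Bool) (e p q : ℕ) (hp : p < N) (hq : q < N) :
    (Ch N s).v p (e * N + q) = (Ch N (!s)).v q (e * N + p) := by
  have h1 : (e * N + q) / N = e := by
    rw [mul_comm, Nat.mul_add_div (by omega), Nat.div_eq_of_lt hq, add_zero]
  have h2 : (e * N + p) / N = e := by
    rw [mul_comm, Nat.mul_add_div (by omega), Nat.div_eq_of_lt hp, add_zero]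
  have h3 : (e * N + q) % N = q := by
    rw [mul_comm, Nat.mul_add_mod, Nat.mod_eq_of_lt hq]
  have h4 : (e * N + p) % N = p := by
    rw [mul_comm, Nat.mul_add_mod, Nat.mod_eq_of_lt hp]
  cases s <;> simp [Ch, h1, h2, h3, h4]

lemma lt_mul_aux {e m N q : ℕ} (he : e < m) (hq : q < N) : e * N + q < m * N := by
  calc e * N + q < e * N + N := by omega
    _ = (e + 1) * N := by ring
    _ ≤ m * N := Nat.mul_le_mul_right _ he

/-- decomposition of an index -/
lemma idx_dec {N m c : ℕ} (hc : c < m * N) : ∃ e q, e < m ∧ q < N ∧ c = e * N + q := by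
  have hN : 0 < N := by
    rcases Nat.eq_zero_or_pos N with h | h
    · subst h; simp at hc
    · exact h
  refine ⟨c / N, c % N, Nat.div_lt_of_lt_mul (by rwa [mul_comm]), Nat.mod_lt _ hN, ?_⟩
  have := Nat.div_add_mod c N
  rw [mul_comm] at this
  exact this.symm

lemma ct_cross (N m : ℕ) (s : Bool) (r p q c : ℕ) (hp : p < N) (hq : q < N) (hc : c < m * N) :
    ct (Ch N (!s)) (m * N) r ((Ch N s).v p c) = ct (Ch N (!s)) (m * N) r ((Ch N s).v q c) := by
  obtain ⟨e, i, he, hi, rfl⟩ := idx_dec hc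
  rw [Ch_cross N s e p i hp hi, Ch_cross N s e q i hq hi, ct_var _ _ _ _ _ (lt_mul_aux he hp),
    ct_var _ _ _ _ _ (lt_mul_aux he hq)]

/-- action on a variable index -/
lemma Ch_eq_iff (N m : ℕ) (p e r c : ℕ) (hN : 0 < N) :
    (∃ i < m * N, vx e r c = (Ch N true).v p i) ↔ (r = p ∧ e < m ∧ c < N) := by
  constructor
  · rintro ⟨i, hi, h⟩
    simp [Ch, vx_inj] at h
    refine ⟨h.2.1, ?_, ?_⟩
    · rw [h.1]; exact Nat.div_lt_of_lt_mul (by rwa [mul_comm])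
    · rw [h.2.2]; exact Nat.mod_lt _ hN
  · rintro ⟨rfl, he, hc⟩
    refine ⟨e * N + c, lt_mul_aux he hc, ?_⟩
    rw [mul_comm e N]
    simp [Ch, vx_inj, Nat.mul_add_div hN, Nat.div_eq_of_lt hc, Nat.mod_eq_of_lt hc]

lemma Ch_eq_iff' (N m : ℕ) (p e r c : ℕ) (hN : 0 < N) :
    (∃ i < m * N, vx e r c = (Ch N false).v p i) ↔ (c = p ∧ e < m ∧ r < N) := by
  constructor
  · rintro ⟨i, hi, h⟩
    simp [Ch, vx_inj] at h
    refine ⟨h.2.2, ?_, ?_⟩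
    · rw [h.1]; exact Nat.div_lt_of_lt_mul (by rwa [mul_comm])
    · rw [h.2.1]; exact Nat.mod_lt _ hN
  · rintro ⟨rfl, he, hc⟩
    refine ⟨e * N + r, lt_mul_aux he hc, ?_⟩
    rw [mul_comm e N]
    simp [Ch, vx_inj, Nat.mul_add_div hN, Nat.div_eq_of_lt hc, Nat.mod_eq_of_lt hc]

/-- generic sum -/
lemma sum_rowop {A : Type} [AddCommMonoid A] (N m : ℕ) (hN : 0 < N) (p q e r c : ℕ) (g : VV → A) :
    (∑ i ∈ Finset.range (m * N), if vx e r c = (Ch N true).v p i then g ((Ch N true).v q i) else 0) =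
      if r = p ∧ e < m ∧ c < N then g (vx e q c) else 0 := by
  by_cases h : r = p ∧ e < m ∧ c < N
  · obtain ⟨i, hi, h2⟩ := (Ch_eq_iff N m p e r c hN).2 h
    rw [if_pos h, Finset.sum_eq_single i]
    · rw [if_pos h2]
      congr 1
      simp [Ch, vx_inj] at h2 ⊢
      exact ⟨h2.1.symm, h2.2.2.symm⟩
    · intro j _ hj
      rw [if_neg]
      intro h3
      exact hj ((Ch N true).injc p (h3.symm.trans h2))
    · intro h3; exact absurd (Finset.mem_range.2 hi) h3
  · rw [if_neg h, Finset.sum_eq_zero]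
    intro i hi
    rw [if_neg]
    intro h2
    exact h ((Ch_eq_iff N m p e r c hN).1 ⟨i, Finset.mem_range.1 hi, h2⟩)

lemma sum_colop {A : Type} [AddCommMonoid A] (N m : ℕ) (hN : 0 < N) (p q e r c : ℕ) (g : VV → A) :
    (∑ i ∈ Finset.range (m * N), if vx e r c = (Ch N false).v p i then g ((Ch N false).v q i) else 0) =
      if c = p ∧ e < m ∧ r < N then g (vx e r q) else 0 := by
  by_cases h : c = p ∧ e < m ∧ r < N
  · obtain ⟨i, hi, h2⟩ := (Ch_eq_iff' N m p e r c hN).2 h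
    rw [if_pos h, Finset.sum_eq_single i]
    · rw [if_pos h2]
      congr 1
      simp [Ch, vx_inj] at h2 ⊢
      exact ⟨h2.1.symm, h2.2.1.symm⟩
    · intro j _ hj
      rw [if_neg]
      intro h3
      exact hj ((Ch N false).injc p (h3.symm.trans h2))
    · intro h3; exact absurd (Finset.mem_range.2 hi) h3
  · rw [if_neg h, Finset.sum_eq_zero]
    intro i hi
    rw [if_neg]
    intro h2
    exact h ((Ch_eq_iff' N m p e r c hN).1 ⟨i, Finset.mem_range.1 hi, h2⟩)

section
variable {K : Type} [Field K]

lemma sg_row (N m : ℕ) (hN : 0 < N) (p q e r c : ℕ) :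
    sg K (Ch N true) (m * N) p q (X (vx e r c)) =
      X (vx e r c) + if r = p ∧ e < m ∧ c < N then X (vx e q c) else 0 := by
  rw [sg, sgs_X, ← sum_rowop N m hN p q e r c (X (R := K))]
  congr!

lemma sg_col (N m : ℕ) (hN : 0 < N) (p q e r c : ℕ) :
    sg K (Ch N false) (m * N) p q (X (vx e r c)) =
      X (vx e r c) + if c = p ∧ e < m ∧ r < N then X (vx e r q) else 0 := by
  rw [sg, sgs_X, ← sum_colop N m hN p q e r c (X (R := K))]
  congr!

lemma sg_cross0 (N m : ℕ) (p q p' q' : ℕ) (hp : p < N) (hp' : p' < N) (hq : q < N) (hq' : q' < N)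
    (f : MvPolynomial VV K) :
    sg K (Ch N true) (m * N) p q (sg K (Ch N false) (m * N) p' q' f) =
    sg K (Ch N false) (m * N) p' q' (sg K (Ch N true) (m * N) p q f) := by
  have hN : 0 < N := by omega
  rw [← AlgHom.comp_apply, ← AlgHom.comp_apply]
  refine DFunLike.congr_fun (MvPolynomial.algHom_ext ?_) f
  intro v
  obtain ⟨e, r, c, rfl⟩ := vx_surj v
  rw [AlgHom.comp_apply, AlgHom.comp_apply, sg_row N m hN, sg_col N m hN, map_add, map_add, sg_row N m hN, sg_col N m hN]
  by_cases h1 : r = p ∧ e < m ∧ c < N <;> by_cases h2 : c = p' ∧ e < m ∧ r < N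
  · have h3 : r = p ∧ e < m ∧ q' < N := ⟨h1.1, h1.2.1, hq'⟩
    have h4 : c = p' ∧ e < m ∧ q < N := ⟨h2.1, h1.2.1, hq⟩
    rw [if_pos h1, if_pos h2, sg_row N m hN, sg_col N m hN, if_pos h3, if_pos h4]
    ring
  · rw [if_pos h1, if_neg h2, map_zero, sg_col N m hN, add_zero, add_zero]
    rw [if_neg]
    · ring
    · rintro ⟨h5, h6, h7⟩; exact h2 ⟨h5, h6, h1.1 ▸ hp⟩
  · rw [if_neg h1, if_pos h2, map_zero, sg_row N m hN, add_zero, add_zero]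
    rw [if_neg]
    · ring
    · rintro ⟨h5, h6, h7⟩; exact h1 ⟨h5, h6, h2.1 ▸ hp'⟩
  · rw [if_neg h1, if_neg h2]; simp

end
end QH

set_option linter.unusedSectionVars false
set_option linter.unusedSimpArgs false
namespace QH
open Classical

/-- block data -/
structure BD (N m : ℕ) (β ι : Type) where
  sd : β → Bool
  lo : β → ℕ
  hi : β → ℕ
  k : β → ℕ
  u : ι → VV → ℕ
  tg : ι → ℕ
  Λ0 : Finset (VV →₀ ℕ)
  hle : ∀ b, lo b ≤ hi b
  hN : ∀ b, hi b ≤ N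
  dis : ∀ b b', b ≠ b' → sd b = sd b' → ∀ p, lo b ≤ p → p < hi b → lo b' ≤ p → p < hi b' → False
  ucomp : ∀ i b p q, lo b ≤ p → p < hi b → lo b ≤ q → q < hi b → ∀ c < m * N,
    u i ((Ch N (sd b)).v p c) = u i ((Ch N (sd b)).v q c)
  mem0 : ∀ l, l ∈ Λ0 ↔ ∀ i, Finsupp.weight (u i) l = tg i

section
variable {K : Type} [Field K] {N m : ℕ} {β ι : Type} (B : BD N m β ι)

/-- general space: contents for blocks satisfying `P`, invariance for blocks satisfying `Q` -/
def VS (K : Type) [Field K] (P Q : β → Prop) : Submodule K (MvPolynomial VV K) where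
  carrier := {f | (∀ i, IsWeightedHomogeneous (B.u i) f (B.tg i)) ∧
    (∀ b, P b → ∀ p, B.lo b ≤ p → p < B.hi b → IsWeightedHomogeneous (ct (Ch N (B.sd b)) (m * N) p) f (B.k b)) ∧
    ∀ b, Q b → ∀ p q, B.lo b ≤ p → p < B.hi b → B.lo b ≤ q → q < B.hi b → p ≠ q →
      sg K (Ch N (B.sd b)) (m * N) p q f = f}
  add_mem' := by
    rintro f g ⟨h1, h2, h3⟩ ⟨h4, h5, h6⟩
    refine ⟨fun i => (h1 i).add (h4 i), fun b hb p a c => (h2 b hb p a c).add (h5 b hb p a c), fun b hb p q a1 a2 a3 a4 a5 => ?_⟩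
    rw [map_add, h3 b hb p q a1 a2 a3 a4 a5, h6 b hb p q a1 a2 a3 a4 a5]
  zero_mem' := ⟨fun i => isWeightedHomogeneous_zero _ _ _, fun b hb p a c => isWeightedHomogeneous_zero _ _ _,
    fun b hb p q a1 a2 a3 a4 a5 => map_zero _⟩
  smul_mem' := by
    rintro t f ⟨h1, h2, h3⟩
    refine ⟨fun i => ?_, fun b hb p a c => ?_, fun b hb p q a1 a2 a3 a4 a5 => ?_⟩
    · exact (weightedHomogeneousSubmodule K _ _).smul_mem t (h1 i)
    · exact (weightedHomogeneousSubmodule K _ _).smul_mem t (h2 b hb p a c)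
    · rw [map_smul, h3 b hb p q a1 a2 a3 a4 a5]

lemma mem_VS (P Q : β → Prop) (f : MvPolynomial VV K) : f ∈ VS B K P Q ↔
    (∀ i, IsWeightedHomogeneous (B.u i) f (B.tg i)) ∧
    (∀ b, P b → ∀ p, B.lo b ≤ p → p < B.hi b → IsWeightedHomogeneous (ct (Ch N (B.sd b)) (m * N) p) f (B.k b)) ∧
    ∀ b, Q b → ∀ p q, B.lo b ≤ p → p < B.hi b → B.lo b ≤ q → q < B.hi b → p ≠ q →
      sg K (Ch N (B.sd b)) (m * N) p q f = f := Iff.rfl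

/-- general low monomials -/
noncomputable def LS (P Q : β → Prop) : Finset (VV →₀ ℕ) :=
  B.Λ0.filter (fun l => (∀ b, P b → ∀ p, B.lo b ≤ p → p < B.hi b → PS (Ch N (B.sd b)) p l (m * N) = B.k b) ∧
    ∀ b, Q b → ∀ r, B.lo b ≤ r → r + 1 < B.hi b → LowC (Ch N (B.sd b)) (m * N) r l)

lemma lead_mem [Infinite K] (P Q : β → Prop) (hPQ : ∀ b, Q b → P b) (f : MvPolynomial VV K) (hf : f ∈ VS B K P Q)
    (l : VV →₀ ℕ) (hl : IsLead f l) : l ∈ LS B P Q := by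
  obtain ⟨h1, h2, h3⟩ := hf
  rw [LS, Finset.mem_filter, B.mem0]
  refine ⟨fun i => h1 i hl.1, fun b hb p a1 a2 => ?_, fun b hb r a1 a2 => ?_⟩
  · rw [← weight_ct]; exact h2 b hb p a1 a2 hl.1
  · exact low_of_lead _ _ r f _ l (h3 b hb r (r + 1) a1 (by omega) (by omega) a2 (by omega))
      (h2 b (hPQ b hb) r a1 (by omega)) hl

lemma VS_fin [Infinite K] (P Q : β → Prop) (hPQ : ∀ b, Q b → P b) :
    FiniteDimensional K (VS B K P Q) ∧ Module.finrank K (VS B K P Q) ≤ (LS B P Q).card :=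
  finrank_le_of_lead _ _ (fun f hf hf0 => by
    obtain ⟨l, hl⟩ := exists_lead f hf0
    exact ⟨l, lead_mem B P Q hPQ f hf l hl, hl.1⟩)

/-- compatibility of contents -/
lemma ct_compat (b b' : β) (hb : b ≠ b') (r p q c : ℕ) (hr : B.lo b ≤ r) (hr2 : r < B.hi b)
    (hp : B.lo b' ≤ p) (hp2 : p < B.hi b') (hq : B.lo b' ≤ q) (hq2 : q < B.hi b') (hc : c < m * N) :
    ct (Ch N (B.sd b)) (m * N) r ((Ch N (B.sd b')).v p c) = ct (Ch N (B.sd b)) (m * N) r ((Ch N (B.sd b')).v q c) := by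
  by_cases h : B.sd b = B.sd b'
  · rw [h, ct_var _ _ _ _ _ hc, ct_var _ _ _ _ _ hc, if_neg, if_neg]
    · rintro rfl; exact B.dis b b' hb h q hr hr2 hq hq2
    · rintro rfl; exact B.dis b b' hb h p hr hr2 hp hp2
  · have h2 : B.sd b = !(B.sd b') := by
      cases h3 : B.sd b <;> cases h4 : B.sd b' <;> simp_all
    rw [h2]
    exact ct_cross N m _ r p q c (lt_of_lt_of_le hp2 (B.hN b')) (lt_of_lt_of_le hq2 (B.hN b')) hc

lemma sg_compat (b b' : β) (hb : b ≠ b') (p q p' q' : ℕ) (hp : B.lo b ≤ p) (hp2 : p < B.hi b)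
    (hq : B.lo b ≤ q) (hq2 : q < B.hi b)
    (hp' : B.lo b' ≤ p') (hp2' : p' < B.hi b') (hq' : B.lo b' ≤ q') (hq2' : q' < B.hi b') (f : MvPolynomial VV K) :
    sg K (Ch N (B.sd b)) (m * N) p q (sg K (Ch N (B.sd b')) (m * N) p' q' f) =
    sg K (Ch N (B.sd b')) (m * N) p' q' (sg K (Ch N (B.sd b)) (m * N) p q f) := by
  have hN := B.hN b
  have hN' := B.hN b'
  by_cases h : B.sd b = B.sd b'
  · rw [h]
    refine sg_comm _ _ _ _ _ _ ?_ ?_ f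
    · rintro rfl; exact B.dis b b' hb h q hq hq2 hp' hp2'
    · rintro rfl; exact B.dis b b' hb h p hp hp2 hq' hq2'
  · cases h3 : B.sd b <;> cases h4 : B.sd b'
    · exact absurd (h3.trans h4.symm) h
    · exact (sg_cross0 N m p' q' p q (by omega) (by omega) (by omega) (by omega) f).symm
    · exact sg_cross0 N m p q p' q' (by omega) (by omega) (by omega) (by omega) f
    · exact absurd (h3.trans h4.symm) h

lemma IsWH_whc {Γ Γ' : Type} [AddCommMonoid Γ] [AddCommMonoid Γ'] (u : VV → Γ) (u' : VV → Γ') (f : MvPolynomial VV K) (a : Γ) (a' : Γ')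
    (h : IsWeightedHomogeneous u f a) : IsWeightedHomogeneous u (weightedHomogeneousComponent u' a' f) a :=
  fun _ hμ => h (coeff_whc_ne hμ).1

lemma chain_step [Infinite K] (ps : β → Prop) (b : β) (hb : ¬ ps b)
    (ih : (LS B (fun _ => True) ps).card ≤ Module.finrank K (VS B K (fun _ => True) ps)) :
    (LS B (fun _ => True) (fun x => x = b ∨ ps x)).card ≤ Module.finrank K (VS B K (fun _ => True) (fun x => x = b ∨ ps x)) := by
  have hne : ∀ b', ps b' → b' ≠ b := fun b' h1 h2 => hb (h2 ▸ h1)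
  have key := one_block (Ch N (B.sd b)) (m * N) (VS B K (fun x => x ≠ b) ps) (LS B (fun x => x ≠ b) ps)
    (B.lo b) (B.hi b) (B.k b) (B.hle b) ?_ ?_ ?_ ?_ ?_
  · have e1 : TT (Ch N (B.sd b)) (m * N) (VS B K (fun x => x ≠ b) ps) (B.lo b) (B.hi b) (B.k b) (B.lo b) =
        VS B K (fun _ => True) (fun x => x = b ∨ ps x) := by
      ext f
      rw [mem_TT, mem_VS, mem_VS]
      constructor
      · rintro ⟨⟨h1, h2, h3⟩, h4, h5⟩
        refine ⟨h1, fun b' _ => ?_, fun b' hb' => ?_⟩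
        · by_cases e : b' = b
          · subst e; exact h4
          · exact h2 b' e
        · rcases hb' with rfl | hb'
          · exact h5
          · exact h3 b' hb'
      · rintro ⟨h1, h2, h3⟩
        exact ⟨⟨h1, fun b' _ => h2 b' trivial, fun b' hb' => h3 b' (Or.inr hb')⟩, h2 b trivial, h3 b (Or.inl rfl)⟩
    have e2 : LS B (fun _ => True) (fun x => x = b ∨ ps x) ⊆
        LB (Ch N (B.sd b)) (m * N) (LS B (fun x => x ≠ b) ps) (B.lo b) (B.hi b) (B.k b) (B.lo b) := by
      intro l hl
      rw [LB, Finset.mem_filter, LS, Finset.mem_filter]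
      rw [LS, Finset.mem_filter] at hl
      obtain ⟨h1, h2, h3⟩ := hl
      exact ⟨⟨h1, fun b' _ => h2 b' trivial, fun b' hb' => h3 b' (Or.inr hb')⟩, h2 b trivial, h3 b (Or.inl rfl)⟩
    rw [e1] at key
    exact (Finset.card_le_card e2).trans key
  · rintro p q a1 a2 a3 a4 a5 f ⟨h1, h2, h3⟩
    refine ⟨fun i => ?_, fun b' hb' s c1 c2 => ?_, fun b' hb' p' q' c1 c2 c3 c4 c5 => ?_⟩
    · refine whc_idem_hom _ _ (sgs_wh _ _ (fun c hc => ?_)) _ _ (h1 i)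
      exact B.ucomp i b p q a1 a2 a3 a4 c (Finset.mem_range.1 hc)
    · refine whc_idem_hom _ _ (sgs_wh _ _ (fun c hc => ?_)) _ _ (h2 b' hb' s c1 c2)
      exact ct_compat B b' b hb' s p q c c1 c2 a1 a2 a3 a4 (Finset.mem_range.1 hc)
    · rw [sg_compat B b' b (hne b' hb') p' q' p q c1 c2 c3 c4 a1 a2 a3 a4, h3 b' hb' p' q' c1 c2 c3 c4 c5]
  · rintro p n a1 a2 f ⟨h1, h2, h3⟩
    refine ⟨fun i => IsWH_whc _ _ _ _ _ (h1 i), fun b' hb' s c1 c2 => IsWH_whc _ _ _ _ _ (h2 b' hb' s c1 c2),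
      fun b' hb' p' q' c1 c2 c3 c4 c5 => ?_⟩
    rw [← whc_comm, h3 b' hb' p' q' c1 c2 c3 c4 c5]
    refine sgs_wh _ _ (fun c hc => ?_)
    exact ct_compat B b b' (hne b' hb').symm p p' q' c a1 a2 c1 c2 c3 c4 (Finset.mem_range.1 hc)
  · exact fun f hf l hl => lead_mem B _ _ hne f hf l hl
  · intro r a l a1 a2 hl hlow ha
    rw [LS, Finset.mem_filter, B.mem0] at hl ⊢
    obtain ⟨h1, h2, h3⟩ := hl
    refine ⟨fun i => ?_, fun b' hb' p c1 c2 => ?_, fun b' hb' r' c1 c2 => ?_⟩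
    · rw [raise_weight, h1 i]
      exact fun c hc => B.ucomp i b r (r + 1) a1 (by omega) (by omega) a2 c hc
    · rw [← weight_ct, raise_weight, weight_ct, h2 b' hb' p c1 c2]
      exact fun c hc => ct_compat B b' b hb' p r (r + 1) c c1 c2 a1 (by omega) (by omega) a2 hc
    · have hl' := h3 b' hb' r' c1 c2
      have hNb := B.hN b
      have hNb' := B.hN b'
      by_cases h : B.sd b = B.sd b'
      · have dd := B.dis b b' (hne b' hb').symm h
        have n1 : r' ≠ r := by rintro rfl; exact dd r' a1 (by omega) c1 (by omega)
        have n2 : r' ≠ r + 1 := by rintro rfl; exact dd (r + 1) (by omega) a2 c1 (by omega)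
        have n3 : r' + 1 ≠ r := by rintro rfl; exact dd (r' + 1) a1 (by omega) (by omega) c2
        have n4 : r' + 1 ≠ r + 1 := by omega
        rw [← h] at hl' ⊢
        intro c hc
        rw [PS_raise_off _ _ _ _ _ _ n1 n2, PS_raise_off _ _ _ _ _ _ n1 n2, PS_raise_off _ _ _ _ _ _ n3 n4,
          PS_raise_off _ _ _ _ _ _ n3 n4]
        exact hl' c hc
      · have h2 : B.sd b' = !(B.sd b) := by
          cases h3 : B.sd b <;> cases h4 : B.sd b' <;> simp_all
        rw [h2] at hl' ⊢
        exact low_comm _ (m * N) _ N m rfl (fun e p q hp hq => Ch_cross N _ e p q hp hq) r a (by omega) r' (by omega) l hl'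
  · have e1 : TT (Ch N (B.sd b)) (m * N) (VS B K (fun x => x ≠ b) ps) (B.lo b) (B.hi b) (B.k b) (B.hi b) =
        VS B K (fun _ => True) ps := by
      ext f
      rw [mem_TT, mem_VS, mem_VS]
      constructor
      · rintro ⟨⟨h1, h2, h3⟩, h4, h5⟩
        refine ⟨h1, fun b' _ => ?_, h3⟩
        by_cases e : b' = b
        · subst e; exact h4
        · exact h2 b' e
      · rintro ⟨h1, h2, h3⟩
        exact ⟨⟨h1, fun b' _ => h2 b' trivial, h3⟩, h2 b trivial, fun p q _ _ _ _ _ => by omega⟩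
    have e2 : LB (Ch N (B.sd b)) (m * N) (LS B (fun x => x ≠ b) ps) (B.lo b) (B.hi b) (B.k b) (B.hi b) ⊆
        LS B (fun _ => True) ps := by
      intro l hl
      rw [LB, Finset.mem_filter, LS, Finset.mem_filter] at hl
      rw [LS, Finset.mem_filter]
      obtain ⟨⟨h1, h2, h3⟩, h4, _⟩ := hl
      refine ⟨h1, fun b' _ => ?_, h3⟩
      by_cases e : b' = b
      · subst e; exact h4
      · exact h2 b' e
    rw [e1]
    exact (Finset.card_le_card e2).trans ih

lemma chain_base [Infinite K] :
    (LS B (fun _ => True) (fun _ => False)).card ≤ Module.finrank K (VS B K (fun _ => True) (fun _ => False)) := by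
  have := (VS_fin (K := K) B (fun _ => True) (fun _ => False) (fun _ _ => trivial)).1
  have hm : ∀ l : LS B (fun _ => True) (fun _ => False), monomial (l : VV →₀ ℕ) (1 : K) ∈ VS B K (fun _ => True) (fun _ => False) := by
    rintro ⟨l, hl⟩
    rw [LS, Finset.mem_filter, B.mem0] at hl
    refine ⟨fun i => isWeightedHomogeneous_monomial _ _ _ (hl.1 i), fun b hb p a1 a2 => isWeightedHomogeneous_monomial _ _ _ ?_,
      fun b hb => hb.elim⟩
    rw [weight_ct]; exact hl.2.1 b hb p a1 a2
  have hli : LinearIndependent K (fun l : LS B (fun _ => True) (fun _ => False) =>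
      (⟨monomial (l : VV →₀ ℕ) (1 : K), hm l⟩ : VS B K (fun _ => True) (fun _ => False))) := by
    apply LinearIndependent.of_comp (Submodule.subtype _)
    have h1 := (MvPolynomial.basisMonomials VV K).linearIndependent
    rw [MvPolynomial.coe_basisMonomials] at h1
    exact h1.comp (fun l : LS B (fun _ => True) (fun _ => False) => (l : VV →₀ ℕ)) Subtype.val_injective
  have := hli.fintype_card_le_finrank
  rwa [Fintype.card_coe] at this

theorem chain [Infinite K] [Fintype β] :
    Module.finrank K (VS B K (fun _ => True) (fun _ => True)) = (LS B (fun _ => True) (fun _ => True)).card := by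
  refine le_antisymm (VS_fin B _ _ (fun _ _ => trivial)).2 ?_
  have key : ∀ s : Finset β, (LS B (fun _ => True) (fun x => x ∈ s)).card ≤
      Module.finrank K (VS B K (fun _ => True) (fun x => x ∈ s)) := by
    intro s
    induction s using Finset.induction_on with
    | empty =>
      have := chain_base (K := K) B
      have e : (fun x : β => x ∈ (∅ : Finset β)) = fun _ => False := by funext x; simp
      rw [e]; exact this
    | insert b s hb ih =>
      have := chain_step B (fun x => x ∈ s) b hb ih
      have e : (fun x : β => x ∈ insert b s) = fun x => x = b ∨ x ∈ s := by funext x; simp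
      rw [e]; exact this
  have := key Finset.univ
  have e : (fun x : β => x ∈ (Finset.univ : Finset β)) = fun _ => True := by funext x; simp
  rwa [e] at this

end
end QH

set_option linter.unusedSectionVars false
set_option linter.unusedSimpArgs false
namespace QH
open Classical

section
variable {I E : Type} [Fintype I] [Fintype E] (h t : E → I) (α : I → ℕ)

/-- offset of a vertex -/
noncomputable def lo (i : I) : ℕ := (Fintype.equivFin I i).val * (∑ j, α j + 1)
/-- total size -/
noncomputable def NN : ℕ := Fintype.card I * (∑ j, α j + 1) + 1
/-- index of an arrow -/
noncomputable def ex (e : E) : ℕ := (Fintype.equivFin E e).val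
/-- block of a vertex -/
def blk (i : I) (r : ℕ) : Prop := lo α i ≤ r ∧ r < lo α i + α i

lemma NN_pos : 0 < NN α := by unfold NN; omega
lemma ex_lt (e : E) : ex e < Fintype.card E := (Fintype.equivFin E e).2
lemma ex_inj {e e' : E} (hh : ex e = ex e') : e = e' := (Fintype.equivFin E).injective (Fin.ext hh)

lemma alpha_lt (i : I) : α i < ∑ j, α j + 1 := by
  have := Finset.single_le_sum (f := α) (fun j _ => Nat.zero_le _) (Finset.mem_univ i)
  omega

lemma hi_le (i : I) : lo α i + α i ≤ NN α := by
  have h1 := alpha_lt α i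
  have h2 := (Fintype.equivFin I i).2
  unfold lo NN
  have h3 : ((Fintype.equivFin I i).val + 1) * (∑ j, α j + 1) ≤ Fintype.card I * (∑ j, α j + 1) :=
    Nat.mul_le_mul_right _ h2
  rw [add_mul] at h3
  omega

lemma blk_inj {i j : I} {r : ℕ} (h1 : blk α i r) (h2 : blk α j r) : i = j := by
  have a1 := alpha_lt α i
  have a2 := alpha_lt α j
  unfold blk lo at h1 h2
  have key : ∀ x : ℕ, ∀ S a : ℕ, x * S ≤ r → r < x * S + a → a < S → r / S = x := by
    intro x S a b1 b2 b3
    rw [Nat.div_eq_iff (by omega)]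
    have : x * S + S - 1 = x * S + (S - 1) := by omega
    constructor
    · omega
    · rw [mul_comm] at b2 b1 ⊢; omega
  have e1 := key _ _ _ h1.1 h1.2 a1
  have e2 := key _ _ _ h2.1 h2.2 a2
  exact (Fintype.equivFin I).injective (Fin.ext (e1.symm.trans e2))

lemma blk_self (i : I) (r : Fin (α i)) : blk α i (lo α i + r) := ⟨by omega, by have := r.2; omega⟩
lemma blk_lt {i : I} {r : ℕ} (hr : blk α i r) : r < NN α := lt_of_lt_of_le hr.2 (hi_le α i)
lemma blk_fin {i : I} {r : ℕ} (hr : blk α i r) : ∃ r0 : Fin (α i), r = lo α i + r0 :=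
  ⟨⟨r - lo α i, by have := hr.1; have := hr.2; omega⟩, by have := hr.1; simp; omega⟩

/-- arrow variables -/
noncomputable def ev (e : E) (r : Fin (α (h e))) (c : Fin (α (t e))) : VV := vx (ex e) (lo α (h e) + r) (lo α (t e) + c)
/-- arrow coordinates -/
abbrev YY := (e : E) × (Fin (α (h e)) × Fin (α (t e)))
/-- embedding -/
noncomputable def emb (y : YY h t α) : VV := ev h t α y.1 y.2.1 y.2.2

lemma emb_inj : Function.Injective (emb h t α) := by
  rintro ⟨e, r, c⟩ ⟨e', r', c'⟩ hh
  simp only [emb, ev, vx_inj] at hh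
  obtain ⟨h1, h2, h3⟩ := hh
  obtain rfl := ex_inj h1
  have : r = r' := Fin.ext (by omega)
  have : c = c' := Fin.ext (by omega)
  subst_vars; rfl

/-- allowed -/
def alw (v : VV) : Prop := ∃ y, v = emb h t α y

lemma alw_iff (e r c : ℕ) : alw h t α (vx e r c) ↔ ∃ e', e = ex e' ∧ blk α (h e') r ∧ blk α (t e') c := by
  constructor
  · rintro ⟨⟨e', r', c'⟩, hh⟩
    simp only [emb, ev, vx_inj] at hh
    obtain ⟨h1, rfl, rfl⟩ := hh
    exact ⟨e', h1, blk_self α _ _, blk_self α _ _⟩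
  · rintro ⟨e', rfl, h1, h2⟩
    obtain ⟨r0, rfl⟩ := blk_fin α h1
    obtain ⟨c0, rfl⟩ := blk_fin α h2
    exact ⟨⟨e', r0, c0⟩, rfl⟩

/-- weights -/
noncomputable def uw (o : Option E) (v : VV) : ℕ :=
  match o with
  | none => if alw h t α v then 0 else 1
  | some e => if (ofLex v).1 = ex e then 1 else 0

lemma uw_some (e : E) (e' r c : ℕ) : uw h t α (some e) (vx e' r c) = if e' = ex e then 1 else 0 := rfl

/-- targets -/
def tgt (δ : E → ℕ) (o : Option E) : ℕ :=
  match o with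
  | none => 0
  | some e => δ e

lemma weight_le {σ : Type} (u : σ → ℕ) (l : σ →₀ ℕ) (v : σ) (hv : u v ≠ 0) : l v ≤ Finsupp.weight u l := by
  rw [Finsupp.weight_apply, Finsupp.sum]
  by_cases h0 : l v = 0
  · omega
  · have := Finset.single_le_sum (f := fun i => l i • u i) (fun j _ => Nat.zero_le _) (Finsupp.mem_support_iff.2 h0)
    have h2 : l v ≤ l v * u v := Nat.le_mul_of_pos_right _ (Nat.pos_of_ne_zero hv)
    simp only [smul_eq_mul] at this
    exact h2.trans this

lemma fin0 (δ : E → ℕ) : {l : VV →₀ ℕ | ∀ o, Finsupp.weight (uw h t α o) l = tgt δ o}.Finite := by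
  refine (Set.finite_Icc 0 (∑ y : YY h t α, Finsupp.single (emb h t α y) (δ y.1))).subset ?_
  intro l hl
  refine ⟨zero_le, fun v => ?_⟩
  by_cases hv : alw h t α v
  · obtain ⟨y, rfl⟩ := hv
    rw [Finsupp.finsetSum_apply]
    refine le_trans ?_ (Finset.single_le_sum (f := fun y' : YY h t α => (Finsupp.single (emb h t α y') (δ y'.1)) (emb h t α y))
      (fun j _ => Nat.zero_le _) (Finset.mem_univ y))
    simp only [Finsupp.single_eq_same]
    have := weight_le (uw h t α (some y.1)) l (emb h t α y) (by
      rw [emb, ev, uw_some, if_pos rfl]; exact one_ne_zero)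
    rw [hl (some y.1)] at this
    exact this
  · have := weight_le (uw h t α none) l v (by simp [uw, hv])
    rw [hl none] at this
    exact le_trans this (Nat.zero_le _)

/-- the block data of a quiver -/
noncomputable def bd (kr kc : I → ℕ) (δ : E → ℕ) : BD (NN α) (Fintype.card E) (Bool × I) (Option E) where
  sd b := b.1
  lo b := lo α b.2
  hi b := lo α b.2 + α b.2
  k b := if b.1 then kr b.2 else kc b.2
  u := uw h t α
  tg := tgt δ
  Λ0 := (fin0 h t α δ).toFinset
  hle b := by omega
  hN b := hi_le α b.2
  dis := by
    rintro ⟨s, i⟩ ⟨s', j⟩ hne hs p h1 h2 h3 h4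
    simp only at hs h1 h2 h3 h4
    subst hs
    have := blk_inj α (i := i) (j := j) ⟨h1, h2⟩ ⟨h3, h4⟩
    exact hne (by rw [this])
  ucomp := by
    rintro o ⟨s, i⟩ p q h1 h2 h3 h4 c hc
    have e1 : ∀ j, blk α j p ↔ blk α j q := fun j =>
      ⟨fun hj => by rw [← blk_inj α (i := i) (j := j) ⟨h1, h2⟩ hj]; exact ⟨h3, h4⟩,
       fun hj => by rw [← blk_inj α (i := i) (j := j) ⟨h3, h4⟩ hj]; exact ⟨h1, h2⟩⟩
    cases o with
    | none =>
      cases s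
      · simp [uw, Ch, alw_iff, e1]
      · simp [uw, Ch, alw_iff, e1]
    | some e =>
      cases s
      · simp [Ch, uw_some]
      · simp [Ch, uw_some]
  mem0 l := by rw [Set.Finite.mem_toFinset]; rfl

variable {K : Type} [Field K]

/-- matrix of a point -/
noncomputable def mt (w : VV → K) (e : E) : Matrix (Fin (α (h e))) (Fin (α (t e))) K := of fun r c => w (ev h t α e r c)

/-- point of a family of matrices -/
noncomputable def pt (x : (e : E) → Matrix (Fin (α (h e))) (Fin (α (t e))) K) : VV → K :=
  Function.extend (emb h t α) (fun y => x y.1 y.2.1 y.2.2) 0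

lemma mt_pt (x : (e : E) → Matrix (Fin (α (h e))) (Fin (α (t e))) K) (e : E) : mt h t α (pt h t α x) e = x e := by
  ext r c
  exact (emb_inj h t α).extend_apply (fun y => x y.1 y.2.1 y.2.2) 0 ⟨e, r, c⟩

lemma eval_congr_mt (F : MvPolynomial VV K) (hF : IsWeightedHomogeneous (uw h t α none) F 0) (w w' : VV → K)
    (hw : ∀ e, mt h t α w e = mt h t α w' e) : eval w F = eval w' F := by
  have key : ∀ w : VV → K, eval w F = eval (fun v => 0 ^ (uw h t α none v) * w v) F := by
    intro w
    have := aeval_scale (R := K) _ F 0 hF 0 w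
    rw [pow_zero, one_mul] at this
    exact this.symm
  rw [key w, key w']
  congr 2
  funext v
  by_cases hv : alw h t α v
  · obtain ⟨y, rfl⟩ := hv
    have := congrFun (congrFun (hw y.1) y.2.1) y.2.2
    have e : w (emb h t α y) = w' (emb h t α y) := this
    rw [e]
  · simp [uw, hv]

lemma ct_row_vx (N m : ℕ) (hN : 0 < N) (p e r c : ℕ) :
    ct (Ch N true) (m * N) p (vx e r c) = if r = p ∧ e < m ∧ c < N then 1 else 0 := by
  rw [ct, ctw, ← sum_rowop N m hN p 0 e r c (fun _ => 1)]
  congr!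

lemma ct_col_vx (N m : ℕ) (hN : 0 < N) (p e r c : ℕ) :
    ct (Ch N false) (m * N) p (vx e r c) = if c = p ∧ e < m ∧ r < N then 1 else 0 := by
  rw [ct, ctw, ← sum_colop N m hN p 0 e r c (fun _ => 1)]
  congr!

lemma eval_sg_row (N m : ℕ) (hN : 0 < N) (p q : ℕ) (w : VV → K) (f : MvPolynomial VV K) :
    ∃ w' : VV → K, eval w (sg K (Ch N true) (m * N) p q f) = eval w' f ∧
      ∀ e r c, w' (vx e r c) = w (vx e r c) + if r = p ∧ e < m ∧ c < N then w (vx e q c) else 0 := by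
  refine ⟨_, eval_sgs _ _ _ w f, fun e r c => ?_⟩
  rw [← sum_rowop N m hN p q e r c w]
  congr!

lemma eval_sg_col (N m : ℕ) (hN : 0 < N) (p q : ℕ) (w : VV → K) (f : MvPolynomial VV K) :
    ∃ w' : VV → K, eval w (sg K (Ch N false) (m * N) p q f) = eval w' f ∧
      ∀ e r c, w' (vx e r c) = w (vx e r c) + if c = p ∧ e < m ∧ r < N then w (vx e r q) else 0 := by
  refine ⟨_, eval_sgs _ _ _ w f, fun e r c => ?_⟩
  rw [← sum_colop N m hN p q e r c w]
  congr!

/-- single matrix -/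
noncomputable abbrev ms (i : I) (S : Matrix (Fin (α i)) (Fin (α i)) K) : (j : I) → Matrix (Fin (α j)) (Fin (α j)) K :=
  Function.update (fun _ => 1) i S

lemma ms_same (i : I) (S : Matrix (Fin (α i)) (Fin (α i)) K) : ms α i S i = S := Function.update_self _ _ _
lemma ms_ne (i j : I) (hj : j ≠ i) (S : Matrix (Fin (α i)) (Fin (α i)) K) : ms α i S j = 1 := Function.update_of_ne hj _ _

lemma lo_ne {i j : I} (hij : j ≠ i) (r : Fin (α j)) (r0 : Fin (α i)) : lo α j + r ≠ lo α i + r0 := fun e =>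
  hij (blk_inj α (blk_self α j r) (e ▸ blk_self α i r0))

/-- one-entry diagonal -/
noncomputable abbrev dg {n : ℕ} (r : Fin n) (d : K) : Matrix (Fin n) (Fin n) K := diagonal (Function.update (fun _ => 1) r d)

lemma mt_scale_row (i : I) (r0 : Fin (α i)) (d : K) (w w' : VV → K)
    (hw : ∀ v, w' v = d ^ (ct (Ch (NN α) true) (Fintype.card E * NN α) (lo α i + r0) v) * w v) (e : E) :
    mt h t α w' e = ms α i (dg r0 d) (h e) * mt h t α w e := by
  ext r c
  have e0 : mt h t α w' e r c = w' (ev h t α e r c) := rfl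
  have e1 : mt h t α w e r c = w (ev h t α e r c) := rfl
  rw [e0, hw, ev, ct_row_vx _ _ (NN_pos α)]
  have hc := blk_lt α (blk_self α (t e) c)
  have he := ex_lt e
  by_cases hi : h e = i
  · subst hi
    rw [ms_same, diagonal_mul, e1]
    by_cases hr : r = r0
    · subst hr
      rw [if_pos ⟨rfl, he, hc⟩, Function.update_self, pow_one, ev]
    · rw [if_neg, Function.update_of_ne hr, pow_zero, ev]
      rintro ⟨h1, _⟩
      exact hr (Fin.ext (by omega))
  · rw [ms_ne α i _ hi, Matrix.one_mul, if_neg, pow_zero, one_mul, e1, ev]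
    rintro ⟨h1, _⟩
    exact lo_ne α hi r r0 h1

lemma mt_scale_col (i : I) (r0 : Fin (α i)) (d : K) (w w' : VV → K)
    (hw : ∀ v, w' v = d ^ (ct (Ch (NN α) false) (Fintype.card E * NN α) (lo α i + r0) v) * w v) (e : E) :
    mt h t α w' e = mt h t α w e * ms α i (dg r0 d) (t e) := by
  ext r c
  have e0 : mt h t α w' e r c = w' (ev h t α e r c) := rfl
  have e1 : mt h t α w e r c = w (ev h t α e r c) := rfl
  rw [e0, hw, ev, ct_col_vx _ _ (NN_pos α)]
  have hc := blk_lt α (blk_self α (h e) r)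
  have he := ex_lt e
  by_cases hi : t e = i
  · subst hi
    rw [ms_same, mul_diagonal, e1]
    by_cases hr : c = r0
    · subst hr
      rw [if_pos ⟨rfl, he, hc⟩, Function.update_self, pow_one, ev, mul_comm]
    · rw [if_neg, Function.update_of_ne hr, pow_zero, ev, mul_comm]
      rintro ⟨h1, _⟩
      exact hr (Fin.ext (by omega))
  · rw [ms_ne α i _ hi, Matrix.mul_one, if_neg, pow_zero, one_mul, e1, ev]
    rintro ⟨h1, _⟩
    exact lo_ne α hi c r0 h1

lemma mt_sg_row (i : I) (r0 r1 : Fin (α i)) (w w' : VV → K)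
    (hw : ∀ e r c, w' (vx e r c) = w (vx e r c) +
      if r = lo α i + r0 ∧ e < Fintype.card E ∧ c < NN α then w (vx e (lo α i + r1) c) else 0) (e : E) :
    mt h t α w' e = ms α i (transvection r0 r1 (1 : K)) (h e) * mt h t α w e := by
  ext r c
  have e0 : mt h t α w' e r c = w' (ev h t α e r c) := rfl
  have e1 : ∀ r, mt h t α w e r c = w (ev h t α e r c) := fun _ => rfl
  rw [e0, ev, hw]
  have hc := blk_lt α (blk_self α (t e) c)
  have he := ex_lt e
  by_cases hi : h e = i
  · subst hi
    rw [ms_same]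
    by_cases hr : r = r0
    · subst hr
      rw [if_pos ⟨rfl, he, hc⟩, transvection_mul_apply_same, one_mul, e1, e1, ev, ev]
    · rw [if_neg, transvection_mul_apply_of_ne _ _ _ _ hr, e1, ev, add_zero]
      rintro ⟨h1, _⟩
      exact hr (Fin.ext (by omega))
  · rw [ms_ne α i _ hi, Matrix.one_mul, if_neg, add_zero, e1, ev]
    rintro ⟨h1, _⟩
    exact lo_ne α hi r r0 h1

lemma mt_sg_col (i : I) (r0 r1 : Fin (α i)) (w w' : VV → K)
    (hw : ∀ e r c, w' (vx e r c) = w (vx e r c) +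
      if c = lo α i + r0 ∧ e < Fintype.card E ∧ r < NN α then w (vx e r (lo α i + r1)) else 0) (e : E) :
    mt h t α w' e = mt h t α w e * ms α i (transvection r1 r0 (1 : K)) (t e) := by
  ext r c
  have e0 : mt h t α w' e r c = w' (ev h t α e r c) := rfl
  have e1 : ∀ c, mt h t α w e r c = w (ev h t α e r c) := fun _ => rfl
  rw [e0, ev, hw]
  have hc := blk_lt α (blk_self α (h e) r)
  have he := ex_lt e
  by_cases hi : t e = i
  · subst hi
    rw [ms_same]
    by_cases hr : c = r0
    · subst hr
      rw [if_pos ⟨rfl, he, hc⟩, mul_transvection_apply_same, one_mul, e1, e1, ev, ev]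
    · rw [if_neg, mul_transvection_apply_of_ne _ _ _ _ hr, e1, ev, add_zero]
      rintro ⟨h1, _⟩
      exact hr (Fin.ext (by omega))
  · rw [ms_ne α i _ hi, Matrix.mul_one, if_neg, add_zero, e1, ev]
    rintro ⟨h1, _⟩
    exact lo_ne α hi c r0 h1

lemma mt_scale_e (e0 : E) (d : K) (w w' : VV → K) (hw : ∀ v, w' v = d ^ (uw h t α (some e0) v) * w v) (e : E) :
    mt h t α w' e = (if e = e0 then d else 1) • mt h t α w e := by
  ext r c
  have e1 : mt h t α w' e r c = w' (ev h t α e r c) := rfl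
  have e2 : mt h t α w e r c = w (ev h t α e r c) := rfl
  rw [e1, hw, Matrix.smul_apply, e2, ev, uw_some, smul_eq_mul]
  congr 1
  by_cases hh : e = e0
  · subst hh; simp
  · rw [if_neg hh, if_neg (fun h2 => hh (ex_inj h2)), pow_zero]

lemma mt_scale_none (d : K) (w w' : VV → K) (hw : ∀ v, w' v = d ^ (uw h t α none v) * w v) (e : E) :
    mt h t α w' e = mt h t α w e := by
  ext r c
  have e1 : mt h t α w' e r c = w' (ev h t α e r c) := rfl
  have e2 : mt h t α w e r c = w (ev h t α e r c) := rfl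
  have : alw h t α (ev h t α e r c) := ⟨⟨e, r, c⟩, rfl⟩
  rw [e1, hw, e2]
  simp [uw, this]

end
end QH

set_option linter.unusedSectionVars false
set_option linter.unusedSimpArgs false
namespace QH
open Classical

section
variable {K : Type} [Field K]

lemma dg_mul {n : ℕ} (r : Fin n) (a b : K) : dg r a * dg r b = dg r (a * b) := by
  rw [dg, dg, diagonal_mul_diagonal, dg]
  congr 1
  funext x
  by_cases hx : x = r
  · subst hx; simp
  · simp [Function.update_of_ne hx]

lemma dg_one {n : ℕ} (r : Fin n) : dg r (1 : K) = 1 := by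
  rw [dg, ← diagonal_one]; congr 1; exact Function.update_eq_self r _

lemma det_dg {n : ℕ} (r : Fin n) (d : K) : (dg r d).det = d := by
  rw [dg, det_diagonal, Finset.prod_update_of_mem (Finset.mem_univ _)]; simp

lemma mat_ind {n : ℕ} (P : Matrix (Fin n) (Fin n) K → Prop) (h1 : P 1) (hm : ∀ A B, P A → P B → P (A * B))
    (hd : ∀ r d, P (dg r d)) (ht : ∀ i j, i ≠ j → P (transvection i j 1)) (S : Matrix (Fin n) (Fin n) K)
    (hS : S.det ≠ 0) : P S := by
  refine Matrix.diagonal_transvection_induction_of_det_ne_zero P S hS ?_ ?_ ?_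
  · intro D _
    have key : ∀ s : Finset (Fin n), P (diagonal fun x => if x ∈ s then D x else 1) := by
      intro s
      induction s using Finset.induction_on with
      | empty => simpa using h1
      | insert a s ha ih =>
        have := hm _ _ (hd a (D a)) ih
        rw [dg, diagonal_mul_diagonal] at this
        convert this using 2
        funext x
        by_cases hx : x = a
        · subst hx; simp [ha]
        · simp [hx, Function.update_of_ne hx]
    simpa using key Finset.univ
  · rintro ⟨i, j, hij, c⟩
    rw [TransvectionStruct.toMatrix]
    by_cases hc : c = 0
    · subst hc; simpa using h1
    · have := hm _ _ (hm _ _ (hd i c) (ht i j hij)) (hd i c⁻¹)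
      convert this using 1
      ext x y
      rw [dg, dg, mul_diagonal, diagonal_mul, transvection, transvection, Matrix.add_apply, Matrix.add_apply]
      by_cases hx : x = i
      · subst hx
        by_cases hy : y = x
        · subst hy
          simp [single_apply, hij.symm, hc]
        · rw [Matrix.one_apply_ne (Ne.symm hy)]
          simp [single_apply, Function.update_of_ne hy]
      · by_cases hy : y = i
        · subst hy
          rw [Matrix.one_apply_ne hx]
          simp [single_apply, Ne.symm hx]
        · simp [single_apply, Function.update_of_ne hy, Function.update_of_ne hx, Ne.symm hx]
  · intro A B _ _ hA hB
    exact hm A B hA hB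

variable {I E : Type} [Fintype I] [Fintype E] (h t : E → I) (α : I → ℕ) (kr kc : I → ℕ) (δ : E → ℕ)

/-- full space -/
noncomputable abbrev WS (K : Type) [Field K] : Submodule K (MvPolynomial VV K) :=
  VS (bd h t α kr kc δ) K (fun _ => True) (fun _ => True)

variable {h t α kr kc δ} {F : MvPolynomial VV K} (hF : F ∈ WS h t α kr kc δ K)
include hF

lemma law_congr (w w' : VV → K) (hw : ∀ e, mt h t α w e = mt h t α w' e) : eval w F = eval w' F :=
  eval_congr_mt h t α F (hF.1 none) w w' hw

lemma law_row1 (i : I) (S : Matrix (Fin (α i)) (Fin (α i)) K) (hS : S.det ≠ 0) :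
    ∀ w w' : VV → K, (∀ e, mt h t α w' e = ms α i S (h e) * mt h t α w e) →
      eval w' F = S.det ^ kr i * eval w F := by
  have hC := (hF.2.1 (true, i) trivial)
  have hS' := (hF.2.2 (true, i) trivial)
  refine mat_ind (fun S => ∀ w w' : VV → K, (∀ e, mt h t α w' e = ms α i S (h e) * mt h t α w e) →
      eval w' F = S.det ^ kr i * eval w F) ?_ ?_ ?_ ?_ S hS
  · intro w w' hw
    rw [det_one, one_pow, one_mul]
    refine law_congr hF _ _ fun e => ?_
    rw [hw e]
    have : ms α i (1 : Matrix (Fin (α i)) (Fin (α i)) K) = fun _ => 1 := Function.update_eq_self i _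
    rw [this, Matrix.one_mul]
  · intro A B hA hB w w' hw
    have h1 := hB w (pt h t α fun e => ms α i B (h e) * mt h t α w e) (fun e => mt_pt h t α _ e)
    have h2 := hA (pt h t α fun e => ms α i B (h e) * mt h t α w e) w' (fun e => by
      rw [hw e, mt_pt, ← Matrix.mul_assoc]
      congr 1
      by_cases hi : h e = i
      · subst hi; rw [ms_same, ms_same, ms_same]
      · rw [ms_ne _ _ _ hi, ms_ne _ _ _ hi, ms_ne _ _ _ hi, Matrix.one_mul])
    rw [h2, h1, det_mul, mul_pow, mul_assoc]
  · intro r d w w' hw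
    have h1 := aeval_scale (R := K) _ F _ (hC (lo α i + r) (by simp [bd]) (by simp [bd])) d w
    rw [det_dg]
    have h2 : eval w' F = eval (fun v => d ^ (ct (Ch (NN α) true) (Fintype.card E * NN α) (lo α i + r) v) * w v) F := by
      refine law_congr hF _ _ fun e => ?_
      rw [hw e, mt_scale_row h t α i r d w _ (fun _ => rfl) e]
    rw [h2]
    exact h1
  · intro r0 r1 hne w w' hw
    rw [det_transvection_of_ne _ _ hne, one_pow, one_mul]
    have h1 := hS' (lo α i + r0) (lo α i + r1) (by simp [bd]) (by simp [bd]) (by simp [bd]) (by simp [bd])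
      (fun hh => hne (Fin.ext (by omega)))
    obtain ⟨w2, h2, h3⟩ := eval_sg_row (NN α) (Fintype.card E) (NN_pos α) (lo α i + r0) (lo α i + r1) w F
    have h4 : eval w' F = eval w2 F := law_congr hF _ _ fun e => by
      rw [hw e, mt_sg_row h t α i r0 r1 w w2 h3 e]
    rw [h4, ← h2]
    exact congrArg (eval w) h1

lemma law_col1 (i : I) (S : Matrix (Fin (α i)) (Fin (α i)) K) (hS : S.det ≠ 0) :
    ∀ w w' : VV → K, (∀ e, mt h t α w' e = mt h t α w e * ms α i S (t e)) →
      eval w' F = S.det ^ kc i * eval w F := by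
  have hC := (hF.2.1 (false, i) trivial)
  have hS' := (hF.2.2 (false, i) trivial)
  refine mat_ind (fun S => ∀ w w' : VV → K, (∀ e, mt h t α w' e = mt h t α w e * ms α i S (t e)) →
      eval w' F = S.det ^ kc i * eval w F) ?_ ?_ ?_ ?_ S hS
  · intro w w' hw
    rw [det_one, one_pow, one_mul]
    refine law_congr hF _ _ fun e => ?_
    rw [hw e]
    have : ms α i (1 : Matrix (Fin (α i)) (Fin (α i)) K) = fun _ => 1 := Function.update_eq_self i _
    rw [this, Matrix.mul_one]
  · intro A B hA hB w w' hw
    have h1 := hA w (pt h t α fun e => mt h t α w e * ms α i A (t e)) (fun e => mt_pt h t α _ e)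
    have h2 := hB (pt h t α fun e => mt h t α w e * ms α i A (t e)) w' (fun e => by
      rw [hw e, mt_pt, Matrix.mul_assoc]
      congr 1
      by_cases hi : t e = i
      · subst hi; rw [ms_same, ms_same, ms_same]
      · rw [ms_ne _ _ _ hi, ms_ne _ _ _ hi, ms_ne _ _ _ hi, Matrix.one_mul])
    rw [h2, h1, det_mul, mul_pow]; ring
  · intro r d w w' hw
    have h1 := aeval_scale (R := K) _ F _ (hC (lo α i + r) (by simp [bd]) (by simp [bd])) d w
    rw [det_dg]
    have h2 : eval w' F = eval (fun v => d ^ (ct (Ch (NN α) false) (Fintype.card E * NN α) (lo α i + r) v) * w v) F := by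
      refine law_congr hF _ _ fun e => ?_
      rw [hw e, mt_scale_col h t α i r d w _ (fun _ => rfl) e]
    rw [h2]
    exact h1
  · intro r1 r0 hne w w' hw
    rw [det_transvection_of_ne _ _ hne, one_pow, one_mul]
    have h1 := hS' (lo α i + r0) (lo α i + r1) (by simp [bd]) (by simp [bd]) (by simp [bd]) (by simp [bd])
      (fun hh => hne (Fin.ext (by omega)))
    obtain ⟨w2, h2, h3⟩ := eval_sg_col (NN α) (Fintype.card E) (NN_pos α) (lo α i + r0) (lo α i + r1) w F
    have h4 : eval w' F = eval w2 F := law_congr hF _ _ fun e => by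
      rw [hw e, mt_sg_col h t α i r0 r1 w w2 h3 e]
    rw [h4, ← h2]
    exact congrArg (eval w) h1

lemma law_row (L : (i : I) → Matrix (Fin (α i)) (Fin (α i)) K) (hL : ∀ i, (L i).det ≠ 0) (w w' : VV → K)
    (hw : ∀ e, mt h t α w' e = L (h e) * mt h t α w e) :
    eval w' F = (∏ i, (L i).det ^ kr i) * eval w F := by
  have key : ∀ s : Finset I, ∀ w' : VV → K, (∀ e, mt h t α w' e = (if h e ∈ s then L (h e) else 1) * mt h t α w e) →
      eval w' F = (∏ i ∈ s, (L i).det ^ kr i) * eval w F := by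
    intro s
    induction s using Finset.induction_on with
    | empty =>
      intro w' hw
      rw [Finset.prod_empty, one_mul]
      exact law_congr hF _ _ fun e => by rw [hw e, if_neg (Finset.notMem_empty _), Matrix.one_mul]
    | insert a s ha ih =>
      intro w' hw
      have h1 := ih (pt h t α fun e => (if h e ∈ s then L (h e) else 1) * mt h t α w e) (fun e => mt_pt h t α _ e)
      have h2 := law_row1 hF a (L a) (hL a) (pt h t α fun e => (if h e ∈ s then L (h e) else 1) * mt h t α w e) w' (fun e => by
        rw [hw e, mt_pt, ← Matrix.mul_assoc]
        congr 1
        by_cases hi : h e = a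
        · subst hi; rw [ms_same, if_pos (Finset.mem_insert_self _ _), if_neg ha, Matrix.mul_one]
        · rw [ms_ne _ _ _ hi, Matrix.one_mul]
          simp [Finset.mem_insert, hi])
      rw [h2, h1, Finset.prod_insert ha, mul_assoc]
  exact key Finset.univ w' (fun e => by rw [hw e, if_pos (Finset.mem_univ _)])

lemma law_col (L : (i : I) → Matrix (Fin (α i)) (Fin (α i)) K) (hL : ∀ i, (L i).det ≠ 0) (w w' : VV → K)
    (hw : ∀ e, mt h t α w' e = mt h t α w e * L (t e)) :
    eval w' F = (∏ i, (L i).det ^ kc i) * eval w F := by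
  have key : ∀ s : Finset I, ∀ w' : VV → K, (∀ e, mt h t α w' e = mt h t α w e * (if t e ∈ s then L (t e) else 1)) →
      eval w' F = (∏ i ∈ s, (L i).det ^ kc i) * eval w F := by
    intro s
    induction s using Finset.induction_on with
    | empty =>
      intro w' hw
      rw [Finset.prod_empty, one_mul]
      exact law_congr hF _ _ fun e => by rw [hw e, if_neg (Finset.notMem_empty _), Matrix.mul_one]
    | insert a s ha ih =>
      intro w' hw
      have h1 := ih (pt h t α fun e => mt h t α w e * (if t e ∈ s then L (t e) else 1)) (fun e => mt_pt h t α _ e)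
      have h2 := law_col1 hF a (L a) (hL a) (pt h t α fun e => mt h t α w e * (if t e ∈ s then L (t e) else 1)) w' (fun e => by
        rw [hw e, mt_pt, Matrix.mul_assoc]
        congr 1
        by_cases hi : t e = a
        · subst hi; rw [ms_same, if_pos (Finset.mem_insert_self _ _), if_neg ha, Matrix.one_mul]
        · rw [ms_ne _ _ _ hi, Matrix.mul_one]
          simp [Finset.mem_insert, hi])
      rw [h2, h1, Finset.prod_insert ha, mul_assoc]
  exact key Finset.univ w' (fun e => by rw [hw e, if_pos (Finset.mem_univ _)])

end
end QH

set_option linter.unusedSectionVars false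
set_option linter.unusedSimpArgs false
namespace QH
open Classical

section
variable {Q0 Q1 : Type} [Fintype Q0] [Fintype Q1] (ta ha : Q1 → Q0) (α : Q0 → ℕ)

/-- heads of the extended quiver -/
abbrev hh : Q1 ⊕ Q0 → Q0 := Sum.elim ha id
/-- coordinates -/
abbrev XX := (a : Q1) × (Fin (α (ha a)) × Fin (α (ta a)))

/-- incoming degree -/
noncomputable def inn (δ : Q1 → ℕ) (i : Q0) : ℕ := ∑ a, if ha a = i then δ a else 0
/-- extended degrees -/
noncomputable def dex (δ : Q1 → ℕ) : Q1 ⊕ Q0 → ℕ := Sum.elim δ (fun i => (α i - 1) * inn ha δ i)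
/-- column weights -/
noncomputable def kcc (δ : Q1 → ℕ) (i : Q0) : ℕ := (inn ta δ i + (α i - 1) * inn ha δ i) / α i

variable {K : Type} [Field K]

/-- arrow matrices -/
noncomputable def mL (w : VV → K) (a : Q1) : Matrix (Fin (α (ha a))) (Fin (α (ta a))) K :=
  mt (hh ha) (hh ta) α w (Sum.inl a)
/-- vertex matrices -/
noncomputable def mR (w : VV → K) (i : Q0) : Matrix (Fin (α i)) (Fin (α i)) K :=
  mt (hh ha) (hh ta) α w (Sum.inr i)

/-- points -/
noncomputable def p2 (v : (a : Q1) → Matrix (Fin (α (ha a))) (Fin (α (ta a))) K)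
    (x : (i : Q0) → Matrix (Fin (α i)) (Fin (α i)) K) : VV → K :=
  pt (hh ha) (hh ta) α (fun e => match e with
    | Sum.inl a => v a
    | Sum.inr i => x i)

lemma mL_p2 (v : (a : Q1) → Matrix (Fin (α (ha a))) (Fin (α (ta a))) K)
    (x : (i : Q0) → Matrix (Fin (α i)) (Fin (α i)) K) (a : Q1) : mL ta ha α (p2 ta ha α v x) a = v a :=
  mt_pt (hh ha) (hh ta) α _ (Sum.inl a)
lemma mR_p2 (v : (a : Q1) → Matrix (Fin (α (ha a))) (Fin (α (ta a))) K)
    (x : (i : Q0) → Matrix (Fin (α i)) (Fin (α i)) K) (i : Q0) : mR ta ha α (p2 ta ha α v x) i = x i :=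
  mt_pt (hh ha) (hh ta) α _ (Sum.inr i)

/-- generic arrow matrices -/
noncomputable def gL (K : Type) [Field K] (a : Q1) : Matrix (Fin (α (ha a))) (Fin (α (ta a))) (MvPolynomial VV K) :=
  of fun r c => X (ev (hh ha) (hh ta) α (Sum.inl a) r c)
/-- generic vertex matrices -/
noncomputable def gR (K : Type) [Field K] (i : Q0) : Matrix (Fin (α i)) (Fin (α i)) (MvPolynomial VV K) :=
  of fun r c => X (ev (hh ha) (hh ta) α (Sum.inr i) r c)

lemma gL_map (w : VV → K) (a : Q1) : (gL ta ha α K a).map (eval w) = mL ta ha α w a := by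
  ext r c
  exact eval_X _
lemma gR_map (w : VV → K) (i : Q0) : (gR ta ha α K i).map (eval w) = mR ta ha α w i := by
  ext r c
  exact eval_X _

/-- the forward map -/
noncomputable def fh (K : Type) [Field K] : MvPolynomial (XX ta ha α) K →ₐ[K] MvPolynomial VV K :=
  aeval (fun x => (adjugate (gR ta ha α K (ha x.1)) * gL ta ha α K x.1) x.2.1 x.2.2)

/-- modified arrow matrices -/
noncomputable def vp (w : VV → K) (a : Q1) : Matrix (Fin (α (ha a))) (Fin (α (ta a))) K :=
  adjugate (mR ta ha α w (ha a)) * mL ta ha α w a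

lemma eval_fh (w : VV → K) (f : MvPolynomial (XX ta ha α) K) :
    eval w (fh ta ha α K f) = eval (repCoords (vp ta ha α w)) f := by
  rw [fh, map_aeval]
  have e1 : ((eval w).comp (algebraMap K (MvPolynomial VV K))) = RingHom.id K := by
    ext c; simp [algebraMap_eq]
  rw [e1]
  have e2 : (fun x : XX ta ha α => eval w ((adjugate (gR ta ha α K (ha x.1)) * gL ta ha α K x.1) x.2.1 x.2.2)) =
      repCoords (vp ta ha α w) := by
    funext x
    have : ((adjugate (gR ta ha α K (ha x.1)) * gL ta ha α K x.1).map (eval w)) = vp ta ha α w x.1 := by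
      rw [Matrix.map_mul, gL_map, vp, ← gR_map, ← RingHom.mapMatrix_apply, RingHom.map_adjugate, RingHom.mapMatrix_apply]
    exact congrFun (congrFun this x.2.1) x.2.2
  rw [e2]
  rfl

/-- multidegree weights -/
noncomputable def u0 (a : Q1) (x : XX ta ha α) : ℕ := if x.1 = a then 1 else 0

/-- multihomogeneous semi-invariants -/
noncomputable def SD (K : Type) [Field K] (δ : Q1 → ℕ) : Submodule K (MvPolynomial (XX ta ha α) K) :=
  Subalgebra.toSubmodule (quiverSemiInvariants K ta ha α) ⊓
    ⨅ a, weightedHomogeneousSubmodule K (u0 ta ha α a) (δ a)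

lemma mem_SI (f : MvPolynomial (XX ta ha α) K) : f ∈ quiverSemiInvariants K ta ha α ↔
    ∀ (A : (i : Q0) → SpecialLinearGroup (Fin (α i)) K)
    (v : (a : Q1) → Matrix (Fin (α (ha a))) (Fin (α (ta a))) K),
      eval (repCoords fun a => (A (ha a)).val * v a * ((A (ta a))⁻¹).val) f = eval (repCoords v) f := by
  simp only [quiverSemiInvariants, Algebra.mem_iInf, AlgHom.mem_equalizer, aeval_eq_eval]

lemma mem_SD (δ : Q1 → ℕ) (f : MvPolynomial (XX ta ha α) K) : f ∈ SD ta ha α K δ ↔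
    f ∈ quiverSemiInvariants K ta ha α ∧ ∀ a, IsWeightedHomogeneous (u0 ta ha α a) f (δ a) := by
  simp only [SD, Submodule.mem_inf, Submodule.mem_iInf, mem_weightedHomogeneousSubmodule, Subalgebra.mem_toSubmodule]

variable {ta ha α}

lemma si_inv {f : MvPolynomial (XX ta ha α) K} (hf : f ∈ quiverSemiInvariants K ta ha α)
    (S : (i : Q0) → Matrix (Fin (α i)) (Fin (α i)) K) (hS : ∀ i, (S i).det = 1)
    (v : (a : Q1) → Matrix (Fin (α (ha a))) (Fin (α (ta a))) K) :
    eval (repCoords fun a => adjugate (S (ha a)) * v a * S (ta a)) f = eval (repCoords v) f := by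
  let A : (i : Q0) → SpecialLinearGroup (Fin (α i)) K := fun i => ⟨S i, hS i⟩
  have := (mem_SI ta ha α f).1 hf (fun i => (A i)⁻¹) v
  have e1 : ∀ i, (((A i)⁻¹)⁻¹).val = S i := fun i => congrArg Subtype.val (inv_inv (A i))
  have e2 : ∀ i, ((A i)⁻¹).val = adjugate (S i) := fun i => rfl
  have e3 : (fun a => adjugate (S (ha a)) * v a * S (ta a)) = fun a =>
      ((A (ha a))⁻¹).val * v a * (((A (ta a))⁻¹)⁻¹).val := by
    funext a; rw [e1, e2]
  rw [e3]
  exact this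

lemma md_scale {f : MvPolynomial (XX ta ha α) K} {δ : Q1 → ℕ} (hf : ∀ a, IsWeightedHomogeneous (u0 ta ha α a) f (δ a))
    (s : Q1 → K) (v : (a : Q1) → Matrix (Fin (α (ha a))) (Fin (α (ta a))) K) :
    eval (repCoords fun a => s a • v a) f = (∏ a, s a ^ δ a) * eval (repCoords v) f := by
  have key : ∀ T : Finset Q1, eval (repCoords fun a => (if a ∈ T then s a else 1) • v a) f =
      (∏ a ∈ T, s a ^ δ a) * eval (repCoords v) f := by
    intro T
    induction T using Finset.induction_on with
    | empty => simp
    | insert b T hb ih =>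
      have := aeval_scale (R := K) _ f _ (hf b) (s b) (repCoords fun a => (if a ∈ T then s a else 1) • v a)
      rw [aeval_eq_eval, aeval_eq_eval, ih] at this
      rw [Finset.prod_insert hb, mul_assoc, ← this]
      congr 2
      funext x
      obtain ⟨x, r, c⟩ := x
      simp only [repCoords, u0, Matrix.smul_apply, smul_eq_mul, Finset.mem_insert]
      by_cases hx : x = b
      · subst hx; simp [hb]
      · simp [hx]
  simpa using key Finset.univ

/-- forward map is in the space -/
lemma vp_row (L : (i : Q0) → Matrix (Fin (α i)) (Fin (α i)) K) (w w' : VV → K)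
    (hw : ∀ e, mt (hh ha) (hh ta) α w' e = L (hh ha e) * mt (hh ha) (hh ta) α w e) (a : Q1) :
    vp ta ha α w' a = (L (ha a)).det • vp ta ha α w a := by
  have h1 : mL ta ha α w' a = L (ha a) * mL ta ha α w a := hw (Sum.inl a)
  have h2 : mR ta ha α w' (ha a) = L (ha a) * mR ta ha α w (ha a) := hw (Sum.inr (ha a))
  rw [vp, vp, h1, h2, adjugate_mul_distrib, Matrix.mul_assoc, ← Matrix.mul_assoc (adjugate (L (ha a))), adjugate_mul,
    Matrix.smul_mul, Matrix.one_mul, Matrix.mul_smul]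

lemma vp_col (L : (i : Q0) → Matrix (Fin (α i)) (Fin (α i)) K) (w w' : VV → K)
    (hw : ∀ e, mt (hh ha) (hh ta) α w' e = mt (hh ha) (hh ta) α w e * L (hh ta e)) (a : Q1) :
    vp ta ha α w' a = adjugate (L (ha a)) * vp ta ha α w a * L (ta a) := by
  have h1 : mL ta ha α w' a = mL ta ha α w a * L (ta a) := hw (Sum.inl a)
  have h2 : mR ta ha α w' (ha a) = mR ta ha α w (ha a) * L (ha a) := hw (Sum.inr (ha a))
  rw [vp, vp, h1, h2, adjugate_mul_distrib, Matrix.mul_assoc, Matrix.mul_assoc, Matrix.mul_assoc]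

lemma vp_id (w w' : VV → K)
    (hw : ∀ e, mt (hh ha) (hh ta) α w' e = mt (hh ha) (hh ta) α w e) :
    vp ta ha α w' = vp ta ha α w := by
  funext a
  have h1 : mL ta ha α w' a = mL ta ha α w a := hw (Sum.inl a)
  have h2 : mR ta ha α w' (ha a) = mR ta ha α w (ha a) := hw (Sum.inr (ha a))
  rw [vp, vp, h1, h2]

lemma ms_det (i j : Q0) (S : Matrix (Fin (α i)) (Fin (α i)) K) : (ms α i S j).det = if j = i then S.det else 1 := by
  by_cases hj : j = i
  · subst hj; rw [ms_same, if_pos rfl]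
  · rw [ms_ne _ _ _ hj, det_one, if_neg hj]

lemma prod_inn (g : Q1 → Q0) (δ : Q1 → ℕ) (i : Q0) (c : K) :
    ∏ a, (if g a = i then c else 1) ^ δ a = c ^ inn g δ i := by
  rw [inn, ← Finset.prod_pow_eq_pow_sum]
  refine Finset.prod_congr rfl fun a _ => ?_
  by_cases hi : g a = i
  · simp [hi]
  · simp [hi]

lemma row_law {f : MvPolynomial (XX ta ha α) K} {δ : Q1 → ℕ} (hf : f ∈ SD ta ha α K δ) (i : Q0)
    (S : Matrix (Fin (α i)) (Fin (α i)) K) (w w' : VV → K)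
    (hw : ∀ e, mt (hh ha) (hh ta) α w' e = ms α i S (hh ha e) * mt (hh ha) (hh ta) α w e) :
    eval w' (fh ta ha α K f) = S.det ^ inn ha δ i * eval w (fh ta ha α K f) := by
  rw [eval_fh, eval_fh]
  have : vp ta ha α w' = fun a => (if ha a = i then S.det else 1) • vp ta ha α w a := by
    funext a
    rw [vp_row _ w w' hw a, ms_det]
  rw [this, md_scale ((mem_SD ta ha α δ f).1 hf).2, prod_inn]

lemma col_law {f : MvPolynomial (XX ta ha α) K} {δ : Q1 → ℕ} (hf : f ∈ SD ta ha α K δ) (i : Q0)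
    (S : Matrix (Fin (α i)) (Fin (α i)) K) (hS : S.det = 1) (b : K) (w w' : VV → K)
    (hw : ∀ e, mt (hh ha) (hh ta) α w' e = mt (hh ha) (hh ta) α w e * ms α i (b • S) (hh ta e)) :
    eval w' (fh ta ha α K f) = b ^ (inn ta δ i + (α i - 1) * inn ha δ i) * eval w (fh ta ha α K f) := by
  rw [eval_fh, eval_fh]
  have : vp ta ha α w' = fun a => ((if ha a = i then b ^ (α i - 1) else 1) * (if ta a = i then b else 1)) •
      (adjugate (ms α i S (ha a)) * vp ta ha α w a * ms α i S (ta a)) := by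
    funext a
    rw [vp_col _ w w' hw a]
    have e1 : ∀ j, ms α i (b • S) j = (if j = i then b else 1) • ms α i S j := by
      intro j
      by_cases hj : j = i
      · subst hj; rw [ms_same, ms_same, if_pos rfl]
      · rw [ms_ne _ _ _ hj, ms_ne _ _ _ hj, if_neg hj, one_smul]
    rw [e1, e1, adjugate_smul, Fintype.card_fin, Matrix.mul_smul, Matrix.smul_mul, Matrix.smul_mul, smul_smul, mul_comm]
    congr 2
    by_cases hj : ha a = i
    · rw [if_pos hj, if_pos hj, hj]
    · rw [if_neg hj, if_neg hj, one_pow]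
  rw [this, md_scale ((mem_SD ta ha α δ f).1 hf).2]
  have hi := si_inv ((mem_SD ta ha α δ f).1 hf).1 (ms α i S) (fun j => by rw [ms_det, hS, ite_self]) (vp ta ha α w)
  rw [hi]
  congr 1
  simp only [mul_pow]
  rw [Finset.prod_mul_distrib, prod_inn, prod_inn, pow_add, pow_mul, mul_comm]

lemma sc_e (e0 : Q1 ⊕ Q0) (c : K) (w : VV → K) : ∃ s : Q1 ⊕ Q0 → K, s e0 = c ∧ (∀ e, e ≠ e0 → s e = 1) ∧
    (∀ b, mL ta ha α (fun v => c ^ (uw (hh ha) (hh ta) α (some e0) v) * w v) b = s (Sum.inl b) • mL ta ha α w b) ∧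
    ∀ i, mR ta ha α (fun v => c ^ (uw (hh ha) (hh ta) α (some e0) v) * w v) i = s (Sum.inr i) • mR ta ha α w i :=
  ⟨fun e => @ite K (e = e0) (propDecidable _) c 1, if_pos rfl, fun e he => if_neg he, fun b => mt_scale_e (hh ha) (hh ta) α e0 c w _ (fun _ => rfl) (Sum.inl b),
    fun i => mt_scale_e (hh ha) (hh ta) α e0 c w _ (fun _ => rfl) (Sum.inr i)⟩

lemma fh_mem [IsAlgClosed K] {f : MvPolynomial (XX ta ha α) K} {δ : Q1 → ℕ} (hf : f ∈ SD ta ha α K δ) :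
    fh ta ha α K f ∈ WS (hh ha) (hh ta) α (inn ha δ) (kcc ta ha α δ) (dex ha α δ) K := by
  have hinf : Infinite K := IsAlgClosed.instInfinite
  have hd := ((mem_SD ta ha α δ f).1 hf).2
  refine ⟨?_, ?_, ?_⟩
  · rintro (_ | a | i)
    · refine wh_of_scale _ _ _ fun c hc w => ?_
      have := mt_scale_none (hh ha) (hh ta) α c w _ (fun _ => rfl)
      rw [eval_fh, eval_fh]
      erw [vp_id _ _ this]
      show _ = c ^ 0 * _
      rw [pow_zero, one_mul]
    · refine wh_of_scale _ _ _ fun c hc w => ?_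
      obtain ⟨s, hs1, hs2, hs3, hs4⟩ := sc_e (ta := ta) (ha := ha) (α := α) (Sum.inl a) c w
      rw [eval_fh, eval_fh]
      have e1 : vp ta ha α (fun v => c ^ (uw (hh ha) (hh ta) α (some (Sum.inl a)) v) * w v) =
          fun b => (if b = a then c else 1) • vp ta ha α w b := by
        funext b
        rw [vp, hs3, hs4, hs2 (Sum.inr _) (by simp), one_smul, Matrix.mul_smul, vp]
        by_cases hb : b = a
        · subst hb; rw [hs1, if_pos rfl]
        · rw [hs2 _ (by simpa using hb), if_neg hb]
      show eval (repCoords (vp ta ha α (fun v => c ^ (uw (hh ha) (hh ta) α (some (Sum.inl a)) v) * w v))) f = c ^ δ a * _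
      rw [e1, md_scale hd]
      congr 1
      rw [Finset.prod_eq_single a (fun b _ hb => by rw [if_neg hb, one_pow]) (by simp), if_pos rfl]
    · refine wh_of_scale _ _ _ fun c hc w => ?_
      obtain ⟨s, hs1, hs2, hs3, hs4⟩ := sc_e (ta := ta) (ha := ha) (α := α) (Sum.inr i) c w
      rw [eval_fh, eval_fh]
      have e1 : vp ta ha α (fun v => c ^ (uw (hh ha) (hh ta) α (some (Sum.inr i)) v) * w v) =
          fun b => (if ha b = i then c ^ (α i - 1) else 1) • vp ta ha α w b := by
        funext b
        rw [vp, hs3, hs4, hs2 (Sum.inl _) (by simp), one_smul, adjugate_smul, Matrix.smul_mul, Fintype.card_fin]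
        by_cases hj : ha b = i
        · subst hj; rw [hs1, if_pos rfl, vp]
        · rw [hs2 _ (by simpa using hj), if_neg hj, one_pow, vp]
      show eval (repCoords (vp ta ha α (fun v => c ^ (uw (hh ha) (hh ta) α (some (Sum.inr i)) v) * w v))) f =
        c ^ ((α i - 1) * inn ha δ i) * _
      rw [e1, md_scale hd, prod_inn, pow_mul]
  · rintro ⟨_ | _, i⟩ _ p hp1 hp2
    · obtain ⟨r, rfl⟩ := blk_fin α (i := i) ⟨hp1, hp2⟩
      have hn : 0 < α i := by have := r.2; omega
      have key : IsWeightedHomogeneous (fun v => α i * ct (Ch (NN α) false) (Fintype.card (Q1 ⊕ Q0) * NN α) (lo α i + r) v)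
          (fh ta ha α K f) (inn ta δ i + (α i - 1) * inn ha δ i) := by
        refine wh_of_scale _ _ _ fun c hc w => ?_
        refine col_law hf i (c⁻¹ • dg r (c ^ α i)) ?_ c w _ ?_
        · rw [det_smul, det_dg, Fintype.card_fin, ← mul_pow, inv_mul_cancel₀ hc, one_pow]
        · rw [smul_smul, mul_inv_cancel₀ hc, one_smul]
          exact mt_scale_col (hh ha) (hh ta) α i r (c ^ α i) w _ (fun v => by rw [pow_mul])
      intro μ hμ
      have h1 := key hμ
      have h2 : Finsupp.weight (fun v => α i * ct (Ch (NN α) false) (Fintype.card (Q1 ⊕ Q0) * NN α) (lo α i + r) v) μ =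
          α i * Finsupp.weight (ct (Ch (NN α) false) (Fintype.card (Q1 ⊕ Q0) * NN α) (lo α i + r)) μ := by
        rw [Finsupp.weight_apply, Finsupp.weight_apply, Finsupp.sum, Finsupp.sum, Finset.mul_sum]
        refine Finset.sum_congr rfl fun v _ => ?_
        simp only [smul_eq_mul]; ring
      show _ = kcc ta ha α δ i
      rw [h2] at h1
      rw [kcc, ← h1, Nat.mul_div_cancel_left _ hn]
      rfl
    · obtain ⟨r, rfl⟩ := blk_fin α (i := i) ⟨hp1, hp2⟩
      refine wh_of_scale _ _ _ fun c hc w => ?_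
      have := row_law hf i (dg r c) w _ (mt_scale_row (hh ha) (hh ta) α i r c w _ (fun _ => rfl))
      rw [det_dg] at this
      exact this
  · rintro ⟨_ | _, i⟩ _ p q hp1 hp2 hq1 hq2 hpq
    · obtain ⟨r0, rfl⟩ := blk_fin α (i := i) ⟨hp1, hp2⟩
      obtain ⟨r1, rfl⟩ := blk_fin α (i := i) ⟨hq1, hq2⟩
      have hne : r1 ≠ r0 := fun h => hpq (by rw [h])
      refine MvPolynomial.funext fun w => ?_
      obtain ⟨w2, h2, h3⟩ := eval_sg_col (NN α) (Fintype.card (Q1 ⊕ Q0)) (NN_pos α) (lo α i + r0) (lo α i + r1) w (fh ta ha α K f)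
      refine h2.trans ?_
      have := col_law hf i (transvection r1 r0 1) (det_transvection_of_ne _ _ hne _) 1 w w2
        (by rw [one_smul]; exact mt_sg_col (hh ha) (hh ta) α i r0 r1 w w2 h3)
      rw [this, one_pow, one_mul]
    · obtain ⟨r0, rfl⟩ := blk_fin α (i := i) ⟨hp1, hp2⟩
      obtain ⟨r1, rfl⟩ := blk_fin α (i := i) ⟨hq1, hq2⟩
      have hne : r0 ≠ r1 := fun h => hpq (by rw [h])
      refine MvPolynomial.funext fun w => ?_
      obtain ⟨w2, h2, h3⟩ := eval_sg_row (NN α) (Fintype.card (Q1 ⊕ Q0)) (NN_pos α) (lo α i + r0) (lo α i + r1) w (fh ta ha α K f)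
      refine h2.trans ?_
      have := row_law hf i (transvection r0 r1 1) w w2
        (mt_sg_row (hh ha) (hh ta) α i r0 r1 w w2 h3)
      rw [this, det_transvection_of_ne _ _ hne, one_pow, one_mul]

lemma fh_inj [Infinite K] : Function.Injective (fh ta ha α K) := by
  rw [injective_iff_map_eq_zero]
  intro f hf
  refine MvPolynomial.funext fun x => ?_
  have h1 := eval_fh ta ha α (p2 ta ha α (fun a => of fun r c => x ⟨a, r, c⟩) (fun _ => 1)) f
  rw [hf, map_zero] at h1
  rw [map_zero, h1]
  congr 2
  funext y
  have : vp ta ha α (p2 ta ha α (fun a => of fun r c => x ⟨a, r, c⟩) (fun _ => 1)) y.1 =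
      of fun r c => x ⟨y.1, r, c⟩ := by
    rw [vp, mL_p2, mR_p2, adjugate_one, Matrix.one_mul]
  rw [repCoords, this]
  rfl

end
end QH

set_option linter.unusedSectionVars false
set_option linter.unusedSimpArgs false
namespace QH
open Classical

section
variable {Q0 Q1 : Type} [Fintype Q0] [Fintype Q1] (ta ha : Q1 → Q0) (α : Q0 → ℕ)

/-- coordinates of the backward map -/
noncomputable def cL (K : Type) [Field K] : YY (hh ha) (hh ta) α → MvPolynomial (XX ta ha α) K
  | ⟨Sum.inl a, r, c⟩ => X ⟨a, r, c⟩
  | ⟨Sum.inr i, r, c⟩ => (1 : Matrix (Fin (α i)) (Fin (α i)) (MvPolynomial (XX ta ha α) K)) r c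

/-- the backward map -/
noncomputable def bh (K : Type) [Field K] : MvPolynomial VV K →ₐ[K] MvPolynomial (XX ta ha α) K :=
  aeval (Function.extend (emb (hh ha) (hh ta) α) (cL ta ha α K) 0)

variable {K : Type} [Field K]

lemma eval_bh (F : MvPolynomial VV K) (v : (a : Q1) → Matrix (Fin (α (ha a))) (Fin (α (ta a))) K) :
    ∃ w : VV → K, (∀ a, mL ta ha α w a = v a) ∧ (∀ i, mR ta ha α w i = 1) ∧
      eval (repCoords v) (bh ta ha α K F) = eval w F := by
  refine ⟨fun y => eval (repCoords v) (Function.extend (emb (hh ha) (hh ta) α) (cL ta ha α K) 0 y), ?_, ?_, ?_⟩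
  · intro a
    ext r c
    have := (emb_inj (hh ha) (hh ta) α).extend_apply (cL ta ha α K) 0 ⟨Sum.inl a, r, c⟩
    refine (congrArg (eval (repCoords v)) this).trans ?_
    exact eval_X _
  · intro i
    ext r c
    have := (emb_inj (hh ha) (hh ta) α).extend_apply (cL ta ha α K) 0 ⟨Sum.inr i, r, c⟩
    refine (congrArg (eval (repCoords v)) this).trans ?_
    show eval (repCoords v) ((1 : Matrix (Fin (α i)) (Fin (α i)) (MvPolynomial (XX ta ha α) K)) r c) = _
    rw [Matrix.one_apply, Matrix.one_apply]
    split_ifs <;> simp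
  · rw [bh, map_aeval]
    have e1 : ((eval (repCoords v)).comp (algebraMap K (MvPolynomial (XX ta ha α) K))) = RingHom.id K := by
      ext c; simp [algebraMap_eq]
    rw [e1]
    rfl

variable {ta ha α}

lemma law_congr2 {δ : Q1 → ℕ} {F : MvPolynomial VV K}
    (hF : F ∈ WS (hh ha) (hh ta) α (inn ha δ) (kcc ta ha α δ) (dex ha α δ) K) (w w' : VV → K)
    (h1 : ∀ a, mL ta ha α w a = mL ta ha α w' a) (h2 : ∀ i, mR ta ha α w i = mR ta ha α w' i) : eval w F = eval w' F :=
  law_congr hF w w' (fun e => match e with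
    | Sum.inl a => h1 a
    | Sum.inr i => h2 i)

lemma law_row2 {δ : Q1 → ℕ} {F : MvPolynomial VV K}
    (hF : F ∈ WS (hh ha) (hh ta) α (inn ha δ) (kcc ta ha α δ) (dex ha α δ) K)
    (L : (i : Q0) → Matrix (Fin (α i)) (Fin (α i)) K) (hL : ∀ i, (L i).det ≠ 0) (w w' : VV → K)
    (h1 : ∀ a, mL ta ha α w' a = L (ha a) * mL ta ha α w a) (h2 : ∀ i, mR ta ha α w' i = L i * mR ta ha α w i) :
    eval w' F = (∏ i, (L i).det ^ inn ha δ i) * eval w F :=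
  law_row hF L hL w w' (fun e => match e with
    | Sum.inl a => h1 a
    | Sum.inr i => h2 i)

lemma law_col2 {δ : Q1 → ℕ} {F : MvPolynomial VV K}
    (hF : F ∈ WS (hh ha) (hh ta) α (inn ha δ) (kcc ta ha α δ) (dex ha α δ) K)
    (L : (i : Q0) → Matrix (Fin (α i)) (Fin (α i)) K) (hL : ∀ i, (L i).det ≠ 0) (w w' : VV → K)
    (h1 : ∀ a, mL ta ha α w' a = mL ta ha α w a * L (ta a)) (h2 : ∀ i, mR ta ha α w' i = mR ta ha α w i * L i) :
    eval w' F = (∏ i, (L i).det ^ kcc ta ha α δ i) * eval w F :=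
  law_col hF L hL w w' (fun e => match e with
    | Sum.inl a => h1 a
    | Sum.inr i => h2 i)

lemma rep_surj (x : XX ta ha α → K) : repCoords (fun a => of fun r c => x ⟨a, r, c⟩) = x := rfl

lemma bh_mem [IsAlgClosed K] {δ : Q1 → ℕ} {F : MvPolynomial VV K}
    (hF : F ∈ WS (hh ha) (hh ta) α (inn ha δ) (kcc ta ha α δ) (dex ha α δ) K) : bh ta ha α K F ∈ SD ta ha α K δ := by
  rw [mem_SD, mem_SI]
  refine ⟨fun A v => ?_, fun a => wh_of_scale _ _ _ fun c hc x => ?_⟩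
  · obtain ⟨w', h1, h2, h3⟩ := eval_bh ta ha α F (fun a => (A (ha a)).val * v a * ((A (ta a))⁻¹).val)
    obtain ⟨w, h4, h5, h6⟩ := eval_bh ta ha α F v
    rw [h3, h6]
    have r1 := law_row2 hF (fun i => (A i).val) (fun i => by rw [(A i).2]; exact one_ne_zero) w
      (p2 ta ha α (fun a => (A (ha a)).val * v a) (fun i => (A i).val))
      (fun a => by rw [mL_p2, h4]) (fun i => by rw [mR_p2, h5, Matrix.mul_one])
    have r2 := law_col2 hF (fun i => ((A i)⁻¹).val) (fun i => by rw [((A i)⁻¹).2]; exact one_ne_zero)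
      (p2 ta ha α (fun a => (A (ha a)).val * v a) (fun i => (A i).val)) w'
      (fun a => by rw [mL_p2, h1]) (fun i => by
        rw [mR_p2, h2]
        exact (congrArg Subtype.val (mul_inv_cancel (A i))).symm)
    have q1 : ∏ i, (A i).val.det ^ inn ha δ i = 1 := Finset.prod_eq_one fun i _ => by rw [(A i).2, one_pow]
    have q2 : ∏ i, ((A i)⁻¹).val.det ^ kcc ta ha α δ i = 1 :=
      Finset.prod_eq_one fun i _ => by rw [((A i)⁻¹).2, one_pow]
    rw [r2, r1, q1, q2, one_mul, one_mul]
  · obtain ⟨w, h1, h2, h3⟩ := eval_bh ta ha α F (fun a => of fun r c => x ⟨a, r, c⟩)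
    obtain ⟨w', h4, h5, h6⟩ := eval_bh ta ha α F (fun b => of fun r s => c ^ (u0 ta ha α a ⟨b, r, s⟩) * x ⟨b, r, s⟩)
    obtain ⟨s, hs1, hs2, hs3, hs4⟩ := sc_e (ta := ta) (ha := ha) (α := α) (Sum.inl a) c w
    have h7 := aeval_scale (R := K) _ F _ (hF.1 (some (Sum.inl a))) c w
    rw [aeval_eq_eval, aeval_eq_eval] at h7
    refine h6.trans (Eq.trans ?_ (h7.trans (congrArg (fun y => c ^ δ a * y) h3.symm)))
    refine law_congr2 hF _ _ (fun b => ?_) (fun i => ?_)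
    · refine Eq.trans ?_ (hs3 b).symm
      rw [h4, h1]
      ext r q
      simp only [of_apply, Matrix.smul_apply, smul_eq_mul, u0]
      by_cases hb : b = a
      · subst hb; rw [hs1, if_pos rfl, pow_one]
      · rw [hs2 _ (by simpa using hb), if_neg hb, pow_zero]
    · refine Eq.trans ?_ (hs4 i).symm
      rw [h5, h2, hs2 _ (by simp), one_smul]

lemma bh_inj [Infinite K] {δ : Q1 → ℕ} {F : MvPolynomial VV K}
    (hF : F ∈ WS (hh ha) (hh ta) α (inn ha δ) (kcc ta ha α δ) (dex ha α δ) K) (h0 : bh ta ha α K F = 0) : F = 0 := by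
  have key : ∀ w : VV → K, (∀ i, (mR ta ha α w i).det ≠ 0) → eval w F = 0 := by
    intro w hw
    have hL : ∀ i, ((mR ta ha α w i)⁻¹).det ≠ 0 := fun i => by
      rw [det_nonsing_inv, Ring.inverse_eq_inv']; exact inv_ne_zero (hw i)
    obtain ⟨w', h1, h2, h3⟩ := eval_bh ta ha α F (fun a => (mR ta ha α w (ha a))⁻¹ * mL ta ha α w a)
    have := law_row2 hF _ hL w w' h1 (fun i => by
      rw [h2, nonsing_inv_mul _ (isUnit_iff_ne_zero.2 (hw i))])
    rw [← h3, h0, map_zero] at this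
    rcases mul_eq_zero.1 this.symm with h | h
    · exact absurd h (Finset.prod_ne_zero_iff.2 fun i _ => pow_ne_zero _ (hL i))
    · exact h
  have h1 : F * ∏ i, (gR ta ha α K i).det = 0 := by
    refine MvPolynomial.funext fun w => ?_
    rw [map_mul, map_prod, map_zero]
    have e : ∀ i, eval w (gR ta ha α K i).det = (mR ta ha α w i).det := fun i => by
      rw [RingHom.map_det, RingHom.mapMatrix_apply, gR_map]
    simp only [e]
    by_cases hw : ∀ i, (mR ta ha α w i).det ≠ 0
    · rw [key w hw, zero_mul]
    · push Not at hw
      obtain ⟨i, hi⟩ := hw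
      rw [Finset.prod_eq_zero (Finset.mem_univ i) hi, mul_zero]
  rcases mul_eq_zero.1 h1 with h | h
  · exact h
  · obtain ⟨i, _, hi⟩ := Finset.prod_eq_zero_iff.1 h
    have e : eval (p2 ta ha α (K := K) (fun _ => 0) (fun _ => 1)) (gR ta ha α K i).det = 1 := by
      rw [RingHom.map_det, RingHom.mapMatrix_apply, gR_map, mR_p2, det_one]
    rw [hi, map_zero] at e
    exact absurd e zero_ne_one

lemma SD_fin [IsAlgClosed K] (δ : Q1 → ℕ) : FiniteDimensional K (SD ta ha α K δ) ∧
    Module.finrank K (SD ta ha α K δ) =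
    (LS (bd (hh ha) (hh ta) α (inn ha δ) (kcc ta ha α δ) (dex ha α δ)) (fun _ => True) (fun _ => True)).card := by
  have hinf : Infinite K := IsAlgClosed.instInfinite
  have hfin := (VS_fin (K := K) (bd (hh ha) (hh ta) α (inn ha δ) (kcc ta ha α δ) (dex ha α δ)) (fun _ => True) (fun _ => True)
    (fun _ _ => trivial)).1
  let φ : SD ta ha α K δ →ₗ[K] WS (hh ha) (hh ta) α (inn ha δ) (kcc ta ha α δ) (dex ha α δ) K :=
    (fh ta ha α K).toLinearMap.restrict (fun f hf => fh_mem hf)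
  let ψ : WS (hh ha) (hh ta) α (inn ha δ) (kcc ta ha α δ) (dex ha α δ) K →ₗ[K] SD ta ha α K δ :=
    (bh ta ha α K).toLinearMap.restrict (fun f hf => bh_mem hf)
  have hφ : Function.Injective φ := fun f g hfg =>
    Subtype.ext (fh_inj (congrArg Subtype.val hfg))
  have hψ : Function.Injective ψ := by
    rw [injective_iff_map_eq_zero]
    intro F hF
    exact Subtype.ext (bh_inj F.2 (congrArg Subtype.val hF))
  have hfin2 : FiniteDimensional K (SD ta ha α K δ) := Module.Finite.of_injective φ hφ
  refine ⟨hfin2, ?_⟩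
  rw [← chain (K := K)]
  exact le_antisymm (LinearMap.finrank_le_finrank_of_injective hφ) (LinearMap.finrank_le_finrank_of_injective hψ)

end
end QH

set_option linter.unusedSectionVars false
set_option linter.unusedSimpArgs false
namespace QH
open Classical

section
lemma finrank_split {K : Type} [Field K] {σ Γ : Type} [AddCommMonoid Γ] (w : σ → Γ) (V : Submodule K (MvPolynomial σ K)) (D : Finset Γ)
    (U : Γ → Submodule K (MvPolynomial σ K)) (hU : ∀ δ ∈ D, U δ ≤ V)
    (hw : ∀ δ, ∀ f ∈ U δ, IsWeightedHomogeneous w f δ) (hfin : ∀ δ, FiniteDimensional K (U δ))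
    (hdec : ∀ f ∈ V, ∀ δ, weightedHomogeneousComponent w δ f ∈ U δ)
    (hsupp : ∀ f ∈ V, ∀ δ, δ ∉ D → weightedHomogeneousComponent w δ f = 0) :
    Module.finrank K V = ∑ δ ∈ D, Module.finrank K (U δ) := by
  let Φ : ((δ : D) → U δ) →ₗ[K] MvPolynomial σ K :=
    ∑ δ : D, (U (δ : Γ)).subtype.comp (LinearMap.proj δ)
  have hΦ : ∀ g, Φ g = ∑ δ : D, (g δ : MvPolynomial σ K) := fun g => by simp [Φ]
  have hinj : Function.Injective Φ := by
    rw [injective_iff_map_eq_zero]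
    intro g hg
    funext δ
    refine Subtype.ext ?_
    have h1 := congrArg (weightedHomogeneousComponent w (δ : Γ)) hg
    rw [hΦ, map_sum, map_zero, Finset.sum_eq_single δ] at h1
    · rwa [weightedHomogeneousComponent_of_mem (n := (δ : Γ)) (hw _ _ (g δ).2), if_pos rfl] at h1
    · intro b _ hb
      rw [weightedHomogeneousComponent_of_mem (n := (b : Γ)) (hw _ _ (g b).2), if_neg]
      exact fun h => hb (Subtype.ext h.symm)
    · intro h; exact absurd (Finset.mem_univ _) h
  have hr : LinearMap.range Φ = V := by
    ext f
    constructor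
    · rintro ⟨g, rfl⟩
      rw [hΦ]
      exact V.sum_mem fun δ _ => hU _ δ.2 (g δ).2
    · intro hf
      refine ⟨fun δ => ⟨weightedHomogeneousComponent w (δ : Γ) f, hdec f hf _⟩, ?_⟩
      rw [hΦ]
      have h1 := sum_weightedHomogeneousComponent w f
      rw [finsum_eq_sum_of_support_subset (s := D)] at h1
      · conv_rhs => rw [← h1]
        exact Finset.sum_coe_sort D (fun δ => weightedHomogeneousComponent w δ f)
      · intro δ hδ
        by_contra hn
        exact hδ (hsupp f hf δ hn)
  rw [← hr, LinearMap.finrank_range_of_inj hinj, Module.finrank_pi_fintype]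
  exact Finset.sum_coe_sort D (fun δ => Module.finrank K (U δ))

variable {Q0 Q1 : Type} [Fintype Q0] [Fintype Q1] (ta ha : Q1 → Q0) (α : Q0 → ℕ)
variable {K : Type} [Field K]

/-- multidegree -/
noncomputable def w0 (x : XX ta ha α) : Q1 → ℕ := fun a => u0 ta ha α a x

lemma weight_w0 (μ : XX ta ha α →₀ ℕ) (a : Q1) :
    Finsupp.weight (w0 ta ha α) μ a = Finsupp.weight (u0 ta ha α a) μ := by
  rw [Finsupp.weight_apply, Finsupp.weight_apply, Finsupp.sum, Finsupp.sum, Finset.sum_apply]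
  rfl

lemma sum_w0 (μ : XX ta ha α →₀ ℕ) : ∑ a, Finsupp.weight (w0 ta ha α) μ a = Finsupp.weight (1 : XX ta ha α → ℕ) μ := by
  rw [Finsupp.weight_apply, Finsupp.weight_apply, Finsupp.sum, Finsupp.sum]
  simp only [Finset.sum_apply]
  rw [Finset.sum_comm]
  refine Finset.sum_congr rfl fun x _ => ?_
  simp only [Pi.smul_apply, ← Finset.smul_sum, w0, u0, Pi.one_apply]
  simp

lemma wh_w0 (f : MvPolynomial (XX ta ha α) K) (δ : Q1 → ℕ) : IsWeightedHomogeneous (w0 ta ha α) f δ ↔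
    ∀ a, IsWeightedHomogeneous (u0 ta ha α a) f (δ a) := by
  constructor
  · intro h a μ hμ
    rw [← weight_w0, h hμ]
  · intro h μ hμ
    funext a
    rw [weight_w0, h a hμ]

/-- action polynomial map -/
noncomputable def act (L R : (i : Q0) → Matrix (Fin (α i)) (Fin (α i)) K) :
    MvPolynomial (XX ta ha α) K →ₐ[K] MvPolynomial (XX ta ha α) K :=
  aeval (fun x => ∑ c, ∑ r, C (L (ha x.1) x.2.1 r * R (ta x.1) c x.2.2) * X ⟨x.1, (r, c)⟩)

lemma eval_act (L R : (i : Q0) → Matrix (Fin (α i)) (Fin (α i)) K) (f : MvPolynomial (XX ta ha α) K)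
    (v : (a : Q1) → Matrix (Fin (α (ha a))) (Fin (α (ta a))) K) :
    eval (repCoords v) (act ta ha α L R f) = eval (repCoords fun a => L (ha a) * v a * R (ta a)) f := by
  rw [act, map_aeval]
  have e1 : ((eval (repCoords v)).comp (algebraMap K (MvPolynomial (XX ta ha α) K))) = RingHom.id K := by
    ext c; simp [algebraMap_eq]
  rw [e1]
  have e2 : (fun x : XX ta ha α => eval (repCoords v) (∑ c, ∑ r, C (L (ha x.1) x.2.1 r * R (ta x.1) c x.2.2) * X ⟨x.1, (r, c)⟩)) =
      repCoords fun a => L (ha a) * v a * R (ta a) := by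
    funext x
    simp only [map_sum, map_mul, eval_C, eval_X, repCoords, Matrix.mul_apply, Finset.sum_mul]
    refine Finset.sum_congr rfl fun c _ => Finset.sum_congr rfl fun r _ => by ring
  rw [e2]
  rfl

lemma act_whc (L R : (i : Q0) → Matrix (Fin (α i)) (Fin (α i)) K) (f : MvPolynomial (XX ta ha α) K) (δ : Q1 → ℕ) :
    weightedHomogeneousComponent (w0 ta ha α) δ (act ta ha α L R f) =
      act ta ha α L R (weightedHomogeneousComponent (w0 ta ha α) δ f) := by
  refine whc_comm _ _ (fun x => ?_) f δ
  rw [act, aeval_X]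
  refine IsWeightedHomogeneous.sum _ _ _ fun c _ => IsWeightedHomogeneous.sum _ _ _ fun r _ => ?_
  exact (isWeightedHomogeneous_X K (w0 ta ha α) (⟨x.1, (r, c)⟩ : XX ta ha α)).C_mul _

lemma act_inv [Infinite K] (L R : (i : Q0) → Matrix (Fin (α i)) (Fin (α i)) K) (f : MvPolynomial (XX ta ha α) K)
    (h : ∀ v, eval (repCoords fun a => L (ha a) * v a * R (ta a)) f = eval (repCoords v) f) (δ : Q1 → ℕ)
    (v : (a : Q1) → Matrix (Fin (α (ha a))) (Fin (α (ta a))) K) :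
    eval (repCoords fun a => L (ha a) * v a * R (ta a)) (weightedHomogeneousComponent (w0 ta ha α) δ f) =
      eval (repCoords v) (weightedHomogeneousComponent (w0 ta ha α) δ f) := by
  have h1 : act ta ha α L R f = f := by
    refine MvPolynomial.funext fun x => ?_
    rw [← rep_surj x, eval_act, h]
  rw [← eval_act, ← act_whc, h1]

lemma mem_GI (f : MvPolynomial (XX ta ha α) K) : f ∈ quiverInvariants K ta ha α ↔
    ∀ (A : (i : Q0) → GeneralLinearGroup (Fin (α i)) K)
    (v : (a : Q1) → Matrix (Fin (α (ha a))) (Fin (α (ta a))) K),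
      eval (repCoords fun a => (A (ha a)).val * v a * ((A (ta a))⁻¹).val) f = eval (repCoords v) f := by
  simp only [quiverInvariants, Algebra.mem_iInf, AlgHom.mem_equalizer, aeval_eq_eval]

variable {ta ha α}

lemma GI_le_SI {f : MvPolynomial (XX ta ha α) K} (hf : f ∈ quiverInvariants K ta ha α) :
    f ∈ quiverSemiInvariants K ta ha α := by
  rw [mem_SI]
  intro A v
  exact (mem_GI ta ha α f).1 hf (fun i => ⟨(A i).val, ((A i)⁻¹).val,
    congrArg Subtype.val (mul_inv_cancel (A i)), congrArg Subtype.val (inv_mul_cancel (A i))⟩) v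

lemma SI_comp [Infinite K] {f : MvPolynomial (XX ta ha α) K} (hf : f ∈ quiverSemiInvariants K ta ha α) (δ : Q1 → ℕ) :
    weightedHomogeneousComponent (w0 ta ha α) δ f ∈ quiverSemiInvariants K ta ha α := by
  rw [mem_SI] at hf ⊢
  intro A v
  exact act_inv ta ha α (fun i => (A i).val) (fun i => ((A i)⁻¹).val) f (hf A) δ v

lemma GI_comp [Infinite K] {f : MvPolynomial (XX ta ha α) K} (hf : f ∈ quiverInvariants K ta ha α) (δ : Q1 → ℕ) :
    weightedHomogeneousComponent (w0 ta ha α) δ f ∈ quiverInvariants K ta ha α := by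
  rw [mem_GI] at hf ⊢
  intro A v
  exact act_inv ta ha α (fun i => (A i).val) (fun i => ((A i)⁻¹).val) f (hf A) δ v

lemma comp_SD {f : MvPolynomial (XX ta ha α) K} (δ : Q1 → ℕ)
    (h : weightedHomogeneousComponent (w0 ta ha α) δ f ∈ quiverSemiInvariants K ta ha α) :
    weightedHomogeneousComponent (w0 ta ha α) δ f ∈ SD ta ha α K δ :=
  (mem_SD ta ha α δ _).2 ⟨h, (wh_w0 ta ha α _ δ).1 (weightedHomogeneousComponent_isWeightedHomogeneous _ _)⟩

lemma comp_zero {f : MvPolynomial (XX ta ha α) K} {d : ℕ} (hf : f ∈ homogeneousSubmodule (XX ta ha α) K d) (δ : Q1 → ℕ)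
    (hδ : ∑ a, δ a ≠ d) : weightedHomogeneousComponent (w0 ta ha α) δ f = 0 := by
  ext μ
  rw [coeff_weightedHomogeneousComponent, coeff_zero]
  split_ifs with h
  · by_contra hc
    have h1 : Finsupp.weight (1 : XX ta ha α → ℕ) μ = d := hf hc
    rw [← sum_w0, h] at h1
    exact hδ h1
  · rfl

lemma SD_hom (δ : Q1 → ℕ) {f : MvPolynomial (XX ta ha α) K} (hf : f ∈ SD ta ha α K δ) :
    f ∈ homogeneousSubmodule (XX ta ha α) K (∑ a, δ a) := by
  intro μ hμ
  show Finsupp.weight (1 : XX ta ha α → ℕ) μ = _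
  rw [← sum_w0, (wh_w0 ta ha α f δ).2 ((mem_SD ta ha α δ f).1 hf).2 hμ]

lemma prod_inn2 (g : Q1 → Q0) (δ : Q1 → ℕ) (c : Q0 → K) :
    ∏ a, c (g a) ^ δ a = ∏ i, c i ^ inn g δ i := by
  have : ∀ i, c i ^ inn g δ i = ∏ a, (if g a = i then c i else 1) ^ δ a := fun i => (prod_inn g δ i (c i)).symm
  simp only [this]
  rw [Finset.prod_comm]
  refine Finset.prod_congr rfl fun a _ => ?_
  rw [Finset.prod_eq_single (g a) (fun b _ hb => by rw [if_neg (Ne.symm hb), one_pow]) (by simp), if_pos rfl]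

lemma gl_scale {f : MvPolynomial (XX ta ha α) K} {δ : Q1 → ℕ} (hf : f ∈ SD ta ha α K δ)
    (A : (i : Q0) → GeneralLinearGroup (Fin (α i)) K) (c : Q0 → K) (hc : ∀ i, c i ≠ 0)
    (S : (i : Q0) → Matrix (Fin (α i)) (Fin (α i)) K) (hS : ∀ i, (S i).det = 1) (hA : ∀ i, (A i).val = c i • S i)
    (v : (a : Q1) → Matrix (Fin (α (ha a))) (Fin (α (ta a))) K) :
    eval (repCoords fun a => (A (ha a)).val * v a * ((A (ta a))⁻¹).val) f =
      (∏ i, c i ^ inn ha δ i) * (∏ i, c i ^ inn ta δ i)⁻¹ * eval (repCoords v) f := by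
  have hi : ∀ i, ((A i)⁻¹).val = (c i)⁻¹ • adjugate (S i) := by
    intro i
    rw [coe_units_inv, hA]
    refine inv_eq_right_inv ?_
    rw [Matrix.smul_mul, Matrix.mul_smul, mul_adjugate, hS, one_smul, smul_smul, mul_inv_cancel₀ (hc i), one_smul]
  have e1 : (fun a => (A (ha a)).val * v a * ((A (ta a))⁻¹).val) =
      fun a => (c (ha a) * (c (ta a))⁻¹) • (S (ha a) * v a * adjugate (S (ta a))) := by
    funext a
    rw [hi, hA, Matrix.smul_mul, Matrix.smul_mul, Matrix.mul_smul, smul_smul]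
  obtain ⟨h1, h2⟩ := (mem_SD ta ha α δ f).1 hf
  rw [e1, md_scale h2]
  have h3 := (mem_SI ta ha α f).1 h1 (fun i => ⟨S i, hS i⟩) v
  have h4 : eval (repCoords fun a => S (ha a) * v a * adjugate (S (ta a))) f = eval (repCoords v) f := h3
  rw [h4]
  congr 1
  simp only [mul_pow, inv_pow]
  rw [Finset.prod_mul_distrib, prod_inn2 ha δ c, Finset.prod_inv_distrib, prod_inn2 ta δ c]

lemma gl_dec [IsAlgClosed K] {n : ℕ} (A : GeneralLinearGroup (Fin n) K) : ∃ (c : K) (S : Matrix (Fin n) (Fin n) K),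
    c ≠ 0 ∧ S.det = 1 ∧ A.val = c • S ∧ (n = 0 → c = 1) := by
  rcases Nat.eq_zero_or_pos n with rfl | hn
  · exact ⟨1, A.val, one_ne_zero, det_isEmpty, (one_smul _ _).symm, fun _ => rfl⟩
  · obtain ⟨c, hc⟩ := IsAlgClosed.exists_pow_nat_eq A.val.det hn
    have hd : A.val.det ≠ 0 := ((isUnit_iff_isUnit_det A.val).1 A.isUnit).ne_zero
    have hc0 : c ≠ 0 := by
      rintro rfl
      rw [zero_pow (by omega)] at hc
      exact hd hc.symm
    refine ⟨c, c⁻¹ • A.val, hc0, ?_, ?_, fun h => by omega⟩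
    · rw [det_smul, Fintype.card_fin, ← hc, ← mul_pow, inv_mul_cancel₀ hc0, one_pow]
    · rw [smul_smul, mul_inv_cancel₀ hc0, one_smul]

lemma SD_GI [IsAlgClosed K] {δ : Q1 → ℕ} (hδ : ∀ i, α i ≠ 0 → inn ha δ i = inn ta δ i)
    {f : MvPolynomial (XX ta ha α) K} (hf : f ∈ SD ta ha α K δ) : f ∈ quiverInvariants K ta ha α := by
  rw [mem_GI]
  intro A v
  choose c S h1 h2 h3 h4 using fun i => gl_dec (A i)
  rw [gl_scale hf A c h1 S h2 h3]
  have e : ∏ i, c i ^ inn ha δ i = ∏ i, c i ^ inn ta δ i := by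
    refine Finset.prod_congr rfl fun i _ => ?_
    by_cases hi : α i = 0
    · rw [h4 i hi, one_pow, one_pow]
    · rw [hδ i hi]
  rw [e, mul_inv_cancel₀ (Finset.prod_ne_zero_iff.2 fun i _ => pow_ne_zero _ (h1 i)), one_mul]

lemma GI_zero [Infinite K] {δ : Q1 → ℕ} {f : MvPolynomial (XX ta ha α) K} (hf : f ∈ SD ta ha α K δ)
    (hg : f ∈ quiverInvariants K ta ha α) (hne : f ≠ 0) (i : Q0) : inn ha δ i = inn ta δ i := by
  obtain ⟨x, hx⟩ : ∃ x, eval x f ≠ 0 := by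
    by_contra h
    push Not at h
    exact hne (MvPolynomial.funext fun x => by rw [h x, map_zero])
  have key : ∀ c : K, c ≠ 0 → c ^ inn ha δ i = c ^ inn ta δ i := by
    intro c hc
    have hc' : ∀ j, Function.update (fun _ => (1 : K)) i c j ≠ 0 := fun j => by
      by_cases hj : j = i
      · subst hj; rwa [Function.update_self]
      · rw [Function.update_of_ne hj]; exact one_ne_zero
    have hp : ∀ g : Q0 → ℕ, ∏ j, Function.update (fun _ => (1 : K)) i c j ^ g j = c ^ g i := fun g => by
      rw [Finset.prod_eq_single i (fun b _ hb => by rw [Function.update_of_ne hb, one_pow]) (by simp), Function.update_self]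
    obtain ⟨A, hA⟩ : ∃ A : (j : Q0) → GeneralLinearGroup (Fin (α j)) K,
        ∀ j, (A j).val = Function.update (fun _ => (1 : K)) i c j • (1 : Matrix (Fin (α j)) (Fin (α j)) K) :=
      ⟨fun j => GeneralLinearGroup.mkOfDetNeZero
        (Function.update (fun _ => (1 : K)) i c j • (1 : Matrix (Fin (α j)) (Fin (α j)) K))
        (by rw [det_smul, det_one, mul_one]; exact pow_ne_zero _ (hc' j)), fun j => rfl⟩
    have h1 := gl_scale hf A _ hc' (fun _ => 1) (fun _ => det_one) hA (fun a => of fun r s => x ⟨a, r, s⟩)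
    rw [(mem_GI ta ha α f).1 hg A (fun a => of fun r s => x ⟨a, r, s⟩), hp, hp, rep_surj] at h1
    have h2 : c ^ inn ta δ i ≠ 0 := pow_ne_zero _ hc
    have h3 : (c ^ inn ha δ i * (c ^ inn ta δ i)⁻¹ - 1) * eval x f = 0 := by rw [sub_mul, ← h1, one_mul, sub_self]
    rcases mul_eq_zero.1 h3 with h | h
    · exact (mul_inv_eq_one₀ h2).1 (sub_eq_zero.1 h)
    · exact absurd h hx
  have hp : (Polynomial.X * Polynomial.X ^ (inn ha δ i) : Polynomial K) = Polynomial.X * Polynomial.X ^ (inn ta δ i) := by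
    apply Polynomial.funext
    intro c
    by_cases hc : c = 0
    · simp [hc]
    · simp [key c hc]
  have := congrArg Polynomial.natDegree hp
  rw [← pow_succ', ← pow_succ'] at this
  simpa using this

/-- the field independent dimension -/
noncomputable def NB (ta ha : Q1 → Q0) (α : Q0 → ℕ) (δ : Q1 → ℕ) : ℕ :=
  (LS (bd (hh ha) (hh ta) α (inn ha δ) (kcc ta ha α δ) (dex ha α δ)) (fun _ => True) (fun _ => True)).card

lemma main_SI [IsAlgClosed K] (d : ℕ) : Module.finrank K ↥(Subalgebra.toSubmodule (quiverSemiInvariants K ta ha α) ⊓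
    homogeneousSubmodule (XX ta ha α) K d) = ∑ δ ∈ Finset.piAntidiag Finset.univ d, NB ta ha α δ := by
  have hinf : Infinite K := IsAlgClosed.instInfinite
  rw [finrank_split (w0 ta ha α) _ (Finset.piAntidiag Finset.univ d) (fun δ => SD ta ha α K δ)]
  · exact Finset.sum_congr rfl fun δ _ => (SD_fin δ).2
  · intro δ hδ f hf
    rw [Finset.mem_piAntidiag] at hδ
    exact ⟨((mem_SD ta ha α δ f).1 hf).1, hδ.1 ▸ SD_hom δ hf⟩
  · intro δ f hf
    exact (wh_w0 ta ha α f δ).2 ((mem_SD ta ha α δ f).1 hf).2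
  · exact fun δ => (SD_fin δ).1
  · exact fun f hf δ => comp_SD δ (SI_comp hf.1 δ)
  · intro f hf δ hδ
    refine comp_zero hf.2 δ fun h => hδ ?_
    rw [Finset.mem_piAntidiag]
    exact ⟨h, fun i _ => Finset.mem_univ i⟩

lemma main_I [IsAlgClosed K] (d : ℕ) : Module.finrank K ↥(Subalgebra.toSubmodule (quiverInvariants K ta ha α) ⊓
    homogeneousSubmodule (XX ta ha α) K d) =
    ∑ δ ∈ (Finset.piAntidiag Finset.univ d).filter (fun δ => ∀ i, α i ≠ 0 → inn ha δ i = inn ta δ i), NB ta ha α δ := by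
  have hinf : Infinite K := IsAlgClosed.instInfinite
  rw [finrank_split (w0 ta ha α) _ ((Finset.piAntidiag Finset.univ d).filter (fun δ => ∀ i, α i ≠ 0 → inn ha δ i = inn ta δ i))
    (fun δ => SD ta ha α K δ)]
  · exact Finset.sum_congr rfl fun δ _ => (SD_fin δ).2
  · intro δ hδ f hf
    rw [Finset.mem_filter, Finset.mem_piAntidiag] at hδ
    exact ⟨SD_GI hδ.2 hf, hδ.1.1 ▸ SD_hom δ hf⟩
  · intro δ f hf
    exact (wh_w0 ta ha α f δ).2 ((mem_SD ta ha α δ f).1 hf).2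
  · exact fun δ => (SD_fin δ).1
  · exact fun f hf δ => comp_SD δ (GI_le_SI (GI_comp hf.1 δ))
  · intro f hf δ hδ
    by_contra hne
    refine hδ ?_
    rw [Finset.mem_filter, Finset.mem_piAntidiag]
    refine ⟨⟨by_contra fun h => hne (comp_zero hf.2 δ h), fun i _ => Finset.mem_univ i⟩, fun i _ => ?_⟩
    exact GI_zero (comp_SD δ (GI_le_SI (GI_comp hf.1 δ))) (GI_comp hf.1 δ) hne i

end
end QH

/-- The Hilbert series of `SI(Q,α)` and `I(Q,α)` are independent of the
underlying algebraically closed field: for every degree `d`, the dimensions of the degree-`d`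
homogeneous components over `K` and over `L` agree. -/
theorem stmt_14 (K L : Type) [Field K] [IsAlgClosed K] [Field L] [IsAlgClosed L]
    {Q0 Q1 : Type} [Fintype Q0] [Fintype Q1] (ta ha : Q1 → Q0) (α : Q0 → ℕ) (d : ℕ) :
    Module.finrank K ↥(Subalgebra.toSubmodule (quiverSemiInvariants K ta ha α) ⊓
          homogeneousSubmodule ((a : Q1) × (Fin (α (ha a)) × Fin (α (ta a)))) K d)
        = Module.finrank L ↥(Subalgebra.toSubmodule (quiverSemiInvariants L ta ha α) ⊓
          homogeneousSubmodule ((a : Q1) × (Fin (α (ha a)) × Fin (α (ta a)))) L d) ∧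
      Module.finrank K ↥(Subalgebra.toSubmodule (quiverInvariants K ta ha α) ⊓
          homogeneousSubmodule ((a : Q1) × (Fin (α (ha a)) × Fin (α (ta a)))) K d)
        = Module.finrank L ↥(Subalgebra.toSubmodule (quiverInvariants L ta ha α) ⊓
          homogeneousSubmodule ((a : Q1) × (Fin (α (ha a)) × Fin (α (ta a)))) L d) := by
  exact ⟨(QH.main_SI d).trans (QH.main_SI d).symm, (QH.main_I d).trans (QH.main_I d).symm⟩
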